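/- arXiv:math/0511401 — 5 statements merged into one kernel-verified Lean document; each statement's English description precedes it below -/
import Mathlib

section
/- Let c : ℝ → ℝ be measurable satisfying [H1] and [H2], and let k ∈ ℂ with Im k ≥ 0. Then there exists a unique function u₁ : ℝ → ℂ that is continuously differentiable with locally absolutely continuous derivative, satisfies u₁''(x) + (k²/c(x)²) u₁(x) = 0 for a.e. x ∈ ℝ, and satisfies e^{-ikx} u₁(x) → 1 as x → +∞. Similarly, there exists a unique function u₂ : ℝ → ℂ with the same regularity, satisfying the same equation a.e. and e^{ikx} u₂(x) → 1 as x → -∞. -/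
open MeasureTheory Filter Topology

noncomputable section

/-- Hypothesis [H1]: `c` is essentially bounded below away from `0` and bounded above. -/
def HypH1 (c : ℝ → ℝ) : Prop :=
  ∃ c₀ > (0 : ℝ), ∃ cM > (0 : ℝ), ∀ᵐ x : ℝ, c₀ < c x ∧ c x ≤ cM

/-- Hypothesis [H1] with explicit constants `c₀`, `cM`. -/
def HypH1c (c : ℝ → ℝ) (c₀ cM : ℝ) : Prop :=
  0 < c₀ ∧ 0 < cM ∧ ∀ᵐ x : ℝ, c₀ < c x ∧ c x ≤ cM

/-- Hypothesis [H2]: `|c(x) - 1| ≤ C ⟨x⟩^{-1-δ}` almost everywhere. -/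
def HypH2 (c : ℝ → ℝ) : Prop :=
  ∃ C > (0 : ℝ), ∃ δ > (0 : ℝ),
    ∀ᵐ x : ℝ, |c x - 1| ≤ C * (1 + x ^ 2) ^ (-(1 + δ) / 2)

/-- `u` is continuously differentiable, its derivative is locally absolutely continuous,
and `u'' + (k²/c²) u = 0` holds almost everywhere (equivalently, the integral formulation
of the second-order equation holds). -/
def SolvesHelmholtz (c : ℝ → ℝ) (k : ℂ) (u : ℝ → ℂ) : Prop :=
  ContDiff ℝ 1 u ∧
  ∀ a b : ℝ, deriv u b = deriv u a + ∫ x in a..b, -(k ^ 2 / ((c x : ℂ) ^ 2)) * u x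

/-- The Jost solution from `+∞` at `k` : `e^{-ikx} u(x) → 1` as `x → +∞`. -/
def IsJostPlus (c : ℝ → ℝ) (k : ℂ) (u : ℝ → ℂ) : Prop :=
  SolvesHelmholtz c k u ∧
  Tendsto (fun x : ℝ => Complex.exp (-(Complex.I * k * (x : ℂ))) * u x) atTop (𝓝 1)

/-- The Jost solution from `-∞` at `k` : `e^{ikx} u(x) → 1` as `x → -∞`. -/
def IsJostMinus (c : ℝ → ℝ) (k : ℂ) (u : ℝ → ℂ) : Prop :=
  SolvesHelmholtz c k u ∧
  Tendsto (fun x : ℝ => Complex.exp (Complex.I * k * (x : ℂ)) * u x) atBot (𝓝 1)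

/-- `q = 1 - 1/c²`. -/
def qfun (c : ℝ → ℝ) (x : ℝ) : ℝ := 1 - 1 / (c x) ^ 2

/-- `Q = 1 - 1/c`. -/
def Qfun (c : ℝ → ℝ) (x : ℝ) : ℝ := 1 - 1 / c x

/-- `G` is a primitive of the locally integrable function `g`. -/
def Prim (G g : ℝ → ℂ) : Prop :=
  (∀ a b : ℝ, IntervalIntegrable g volume a b) ∧ ∀ a b : ℝ, G b = G a + ∫ x in a..b, g x

namespace Prim

open Set

variable {F G f g : ℝ → ℂ}

lemma add (hF : Prim F f) (hG : Prim G g) : Prim (fun x => F x + G x) (fun x => f x + g x) := by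
  refine ⟨fun a b => (hF.1 a b).add (hG.1 a b), fun a b => ?_⟩
  rw [intervalIntegral.integral_add (hF.1 a b) (hG.1 a b)]
  beta_reduce
  rw [hF.2 a b, hG.2 a b]; ring

lemma sub (hF : Prim F f) (hG : Prim G g) : Prim (fun x => F x - G x) (fun x => f x - g x) := by
  refine ⟨fun a b => (hF.1 a b).sub (hG.1 a b), fun a b => ?_⟩
  rw [intervalIntegral.integral_sub (hF.1 a b) (hG.1 a b)]
  beta_reduce
  rw [hF.2 a b, hG.2 a b]; ring

lemma const_mul (c : ℂ) (hF : Prim F f) : Prim (fun x => c * F x) (fun x => c * f x) := by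
  refine ⟨fun a b => (hF.1 a b).const_mul c, fun a b => ?_⟩
  rw [intervalIntegral.integral_const_mul]
  beta_reduce
  rw [hF.2 a b]; ring

lemma congr (hF : Prim F f) (h1 : ∀ x, G x = F x) (h2 : ∀ x, g x = f x) : Prim G g := by
  obtain rfl : G = F := funext h1
  obtain rfl : g = f := funext h2
  exact hF

lemma continuous (hF : Prim F f) : Continuous F := by
  have : F = fun x => F 0 + ∫ t in (0:ℝ)..x, f t := funext fun x => hF.2 0 x
  rw [this]
  exact continuous_const.add (intervalIntegral.continuous_primitive hF.1 0)

lemma of_hasDerivAt (h : ∀ x, HasDerivAt F (f x) x) (hf : Continuous f) : Prim F f := by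
  refine ⟨fun a b => hf.intervalIntegrable a b, fun a b => ?_⟩
  rw [intervalIntegral.integral_eq_sub_of_hasDerivAt (fun x _ => h x) (hf.intervalIntegrable a b)]
  ring

lemma hasDerivAt (hF : Prim F f) (hf : Continuous f) (x : ℝ) : HasDerivAt F (f x) x := by
  have : F = fun x => F 0 + ∫ t in (0:ℝ)..x, f t := funext fun x => hF.2 0 x
  rw [this]
  exact (hf.integral_hasStrictDerivAt 0 x).hasDerivAt.const_add _

lemma ae_hasDerivAt (hF : Prim F f) : ∀ᵐ x, HasDerivAt F (f x) x := by
  have hl : LocallyIntegrable f volume := by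
    rw [locallyIntegrable_iff]
    intro K hK
    obtain ⟨a, ha⟩ := hK.bddBelow
    obtain ⟨b, hb⟩ := hK.bddAbove
    have h1 : IntegrableOn f (Icc a (max a b)) :=
      (intervalIntegrable_iff_integrableOn_Icc_of_le (le_max_left a b)).1 (hF.1 a (max a b))
    exact h1.mono_set fun x hx => ⟨ha hx, (hb hx).trans (le_max_right _ _)⟩
  filter_upwards [LocallyIntegrable.ae_hasDerivAt_integral hl] with x hx
  have : F = fun x => F 0 + ∫ t in (0:ℝ)..x, f t := funext fun x => hF.2 0 x
  rw [this]
  exact (hx 0).const_add _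

lemma ac (hF : Prim F f) (a b : ℝ) : AbsolutelyContinuousOnInterval F a b := by
  have hc : ∀ z : ℂ, AbsolutelyContinuousOnInterval (fun _ : ℝ => z) a b := fun z =>
    (contDiff_const.contDiffOn).absolutelyContinuousOnInterval
  have hre : IntervalIntegrable (fun x => (f x).re) volume a b :=
    ⟨(hF.1 a b).1.re, (hF.1 a b).2.re⟩
  have him : IntervalIntegrable (fun x => (f x).im) volume a b :=
    ⟨(hF.1 a b).1.im, (hF.1 a b).2.im⟩
  have h1 := hre.absolutelyContinuousOnInterval_intervalIntegral (c := a) (by simp)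
  have h2 := him.absolutelyContinuousOnInterval_intervalIntegral (c := a) (by simp)
  have h := ((h1.smul (hc 1)).add (h2.smul (hc Complex.I))).add (hc (F a))
  suffices e : F = (((fun x => ∫ v in a..x, (f v).re) • fun _ : ℝ => (1 : ℂ)) +
      (fun x => ∫ v in a..x, (f v).im) • fun _ : ℝ => Complex.I) + fun _ : ℝ => F a by
    rw [e]; exact h
  funext x
  simp only [Pi.add_apply, Pi.smul_apply', Complex.real_smul, mul_one]
  rw [hF.2 a x, add_comm]
  congr 1
  have hi := hF.1 a x
  apply Complex.ext
  · simp
    exact (Complex.reCLM.intervalIntegral_comp_comm hi).symm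
  · simp
    exact (Complex.imCLM.intervalIntegral_comp_comm hi).symm

lemma mul (hF : Prim F f) (hG : Prim G g) :
    Prim (fun x => F x * G x) (fun x => f x * G x + F x * g x) := by
  have hi : ∀ a b : ℝ, IntervalIntegrable (fun x => f x * G x + F x * g x) volume a b := fun a b =>
    ((hF.1 a b).mul_continuousOn hG.continuous.continuousOn).add
      ((hG.1 a b).continuousOn_mul hF.continuous.continuousOn)
  refine ⟨hi, fun a b => ?_⟩
  set P : ℝ → ℂ := fun x => ∫ t in a..x, (f t * G t + F t * g t) with hP
  have hPp : Prim P (fun x => f x * G x + F x * g x) :=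
    ⟨hi, fun c d => (intervalIntegral.integral_add_adjacent_intervals (hi a c) (hi c d)).symm⟩
  have hac : AbsolutelyContinuousOnInterval (fun x => F x * G x - P x) a b := by
    have := ((hF.ac a b).smul (hG.ac a b)).sub (hPp.ac a b)
    exact this
  obtain ⟨C, hC⟩ := hac.const_of_ae_hasDerivAt_zero (by
    filter_upwards [hF.ae_hasDerivAt, hG.ae_hasDerivAt, hPp.ae_hasDerivAt] with x h1 h2 h3 _
    have := (h1.mul h2).sub h3
    rw [sub_self] at this
    exact this)
  have ha := hC a left_mem_uIcc
  have hb := hC b right_mem_uIcc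
  have hPa : P a = 0 := by simp [hP]
  simp only [hPa] at ha hb
  show F b * G b = F a * G a + P b
  linear_combination hb - ha

end Prim

lemma solves_iff (c : ℝ → ℝ) (k : ℂ) (u : ℝ → ℂ)
    (hV : ∀ u : ℝ → ℂ, Continuous u → ∀ a b : ℝ,
      IntervalIntegrable (fun x => -(k ^ 2 / ((c x : ℂ) ^ 2)) * u x) volume a b) :
    SolvesHelmholtz c k u ↔ ∃ v : ℝ → ℂ, (∀ x, HasDerivAt u (v x) x) ∧
      Prim v (fun x => -(k ^ 2 / ((c x : ℂ) ^ 2)) * u x) := by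
  constructor
  · rintro ⟨h1, h2⟩
    exact ⟨deriv u, fun x => (h1.differentiable one_ne_zero x).hasDerivAt,
      hV u h1.continuous, h2⟩
  · rintro ⟨v, h1, h2⟩
    have hd : deriv u = v := funext fun x => (h1 x).deriv
    refine ⟨contDiff_one_iff_deriv.2 ⟨fun x => (h1 x).differentiableAt, ?_⟩, ?_⟩
    · rw [hd]; exact h2.continuous
    · rw [hd]; exact h2.2

/-- Solutions with zero Cauchy data vanish to the left. -/
lemma zero_of_data {V w v : ℝ → ℂ} {K : ℝ} (hK : 0 ≤ K) (hVb : ∀ᵐ x, ‖V x‖ ≤ K)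
    (hw : ∀ x, HasDerivAt w (v x) x) (hv : Prim v (fun x => V x * w x))
    {X : ℝ} (h0 : w X = 0) (h1 : v X = 0) {y : ℝ} (hy : y ≤ X) : w y = 0 := by
  have hwc : Continuous w := continuous_iff_continuousAt.2 fun x => (hw x).continuousAt
  have hnc : Continuous fun x => ‖w x‖ := hwc.norm
  set φ : ℝ → ℝ := fun s => ∫ t in (X - s)..X, ‖w t‖ with hφ
  have hii : ∀ a b : ℝ, IntervalIntegrable (fun x => ‖w x‖) volume a b :=
    fun a b => hnc.intervalIntegrable a b
  have hφd : ∀ s, HasDerivAt φ (‖w (X - s)‖) s := by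
    intro s
    have h := (hnc.integral_hasStrictDerivAt X (X - s)).hasDerivAt
    have h' := (h.comp_const_sub X s).neg
    rw [neg_neg] at h'
    refine h'.congr_of_eventuallyEq (Eventually.of_forall fun r => ?_)
    simp only [hφ]
    rw [intervalIntegral.integral_symm]
    rfl
  have hφm : Monotone φ := monotone_of_hasDerivAt_nonneg hφd fun s => norm_nonneg _
  have hφ0 : φ 0 = 0 := by simp [hφ]
  have hvb : ∀ t ≤ X, ‖v t‖ ≤ K * φ (X - t) := by
    intro t ht
    have h := hv.2 t X
    rw [h1] at h
    have : v t = -∫ x in t..X, V x * w x := by linear_combination -h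
    rw [this, norm_neg]
    have e : K * φ (X - t) = ∫ x in t..X, K * ‖w x‖ := by
      rw [intervalIntegral.integral_const_mul]; simp [hφ]
    rw [e]
    refine intervalIntegral.norm_integral_le_of_norm_le ht ?_ ((hii t X).const_mul K)
    filter_upwards [hVb] with x hx _
    rw [norm_mul]
    gcongr
  have hwb : ∀ s, 0 ≤ s → ‖w (X - s)‖ ≤ K * φ s * s := by
    intro s hs
    have hh := intervalIntegral.integral_eq_sub_of_hasDerivAt (a := X - s) (b := X)
      (fun x _ => hw x) (hv.continuous.intervalIntegrable _ _)
    rw [h0, zero_sub] at hh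
    rw [← norm_neg, ← hh]
    have := intervalIntegral.norm_integral_le_of_norm_le_const (a := X - s) (b := X)
      (f := v) (C := K * φ s) (by
        intro x hx
        rw [Set.uIoc_of_le (by linarith)] at hx
        refine (hvb x hx.2).trans ?_
        exact mul_le_mul_of_nonneg_left (hφm (by linarith [hx.1])) hK)
    simpa [abs_of_nonneg hs] using this
  set L := X - y with hL
  have hL0 : 0 ≤ L := by linarith
  have hz := eq_zero_of_abs_deriv_le_mul_abs_self_of_eq_zero_right (f := φ)
    (f' := fun s => ‖w (X - s)‖) (K := K * L) (a := 0) (b := L)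
    (fun s _ => (hφd s).continuousAt.continuousWithinAt)
    (fun s _ => (hφd s).hasDerivWithinAt) hφ0 (by
      intro s hs
      have hp : 0 ≤ φ s := hφ0 ▸ hφm hs.1
      rw [norm_norm, Real.norm_of_nonneg hp]
      refine (hwb s hs.1).trans ?_
      have := hs.2.le
      have h3 : 0 ≤ K * φ s := mul_nonneg hK hp
      nlinarith [mul_le_mul_of_nonneg_left this h3]) L ⟨hL0, le_rfl⟩
  have := hwb L hL0
  rw [hz] at this
  simpa [hL] using this

lemma pot_bound (c : ℝ → ℝ) (h1 : HypH1 c) (k : ℂ) :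
    ∃ K : ℝ, 0 ≤ K ∧ ∀ᵐ x : ℝ, ‖-(k ^ 2 / ((c x : ℂ) ^ 2))‖ ≤ K := by
  obtain ⟨c₀, hc₀, cM, hcM, h⟩ := h1
  refine ⟨‖k‖ ^ 2 / c₀ ^ 2, by positivity, ?_⟩
  filter_upwards [h] with x hx
  have hcx : 0 < c x := hc₀.trans hx.1
  rw [norm_neg, norm_div, norm_pow, norm_pow, Complex.norm_real, Real.norm_of_nonneg hcx.le]
  have := hx.1.le
  gcongr

lemma pot_int (c : ℝ → ℝ) (hmeas : Measurable c) (h1 : HypH1 c) (k : ℂ) (u : ℝ → ℂ)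
    (hu : Continuous u) (a b : ℝ) :
    IntervalIntegrable (fun x => -(k ^ 2 / ((c x : ℂ) ^ 2)) * u x) volume a b := by
  obtain ⟨K, hK, h⟩ := pot_bound c h1 k
  have hV : IntervalIntegrable (fun x => -(k ^ 2 / ((c x : ℂ) ^ 2))) volume a b := by
    refine (intervalIntegrable_const (c := K)).mono_fun' ?_ ?_
    · exact (by fun_prop : Measurable fun x => -(k ^ 2 / ((c x : ℂ) ^ 2))).aestronglyMeasurable
    · exact ae_restrict_of_ae h
  exact hV.mul_continuousOn hu.continuousOn

/-- If `f → 0` and `e^{2ikx} (df/dx) → W` at `+∞` then `W = 0`. -/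
lemma wronskian_zero {k W : ℂ} (hk : 0 ≤ k.im) {f f' : ℝ → ℂ} {X : ℝ}
    (hf : ∀ x > X, HasDerivAt f (f' x) x) (hfc : ContinuousOn f' (Set.Ioi X))
    (h0 : Tendsto f atTop (𝓝 0))
    (hW : Tendsto (fun x : ℝ => Complex.exp (2 * Complex.I * k * x) * f' x) atTop (𝓝 W)) :
    W = 0 := by
  set e : ℝ → ℂ := fun x => Complex.exp (2 * Complex.I * k * x) with he
  set d : ℝ → ℂ := fun x => Complex.exp (-(2 * Complex.I * k * x)) with hd
  have hdc : Continuous d := by fun_prop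
  have hebd : ∀ x ≥ 0, ‖e x‖ ≤ 1 := by
    intro x hx
    rw [he, Complex.norm_exp, Real.exp_le_one_iff]
    simp
    positivity
  have key : ∀ L ≥ 0, W * ∫ s in (0:ℝ)..L, d s = 0 := by
    intro L hL
    have l1 : Tendsto (fun x : ℝ => e x * (f (x + L) - f x)) atTop (𝓝 0) := by
      have h2 : Tendsto (fun x : ℝ => f (x + L) - f x) atTop (𝓝 0) := by
        have := (h0.comp (tendsto_atTop_add_const_right atTop L tendsto_id)).sub h0
        simpa using this
      refine squeeze_zero_norm' ?_ (by simpa using h2.norm)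
      filter_upwards [eventually_ge_atTop 0] with x hx
      rw [norm_mul]
      exact mul_le_of_le_one_left (norm_nonneg _) (hebd x hx)
    obtain ⟨Y, hY⟩ : ∃ Y, ∀ x ≥ Y, ‖e x * f' x‖ ≤ ‖W‖ + 1 := by
      have := hW.norm.eventually (ge_mem_nhds (lt_add_one ‖W‖))
      exact eventually_atTop.1 this
    have l2 : Tendsto (fun x : ℝ => ∫ s in (0:ℝ)..L, d s * (e (x + s) * f' (x + s))) atTop
        (𝓝 (∫ s in (0:ℝ)..L, d s * W)) := by
      refine intervalIntegral.tendsto_integral_filter_of_dominated_convergence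
        (fun s => ‖d s‖ * (‖W‖ + 1)) ?_ ?_ ?_ ?_
      · filter_upwards [eventually_gt_atTop X] with x hx
        refine ContinuousOn.aestronglyMeasurable ?_ measurableSet_uIoc
        rw [Set.uIoc_of_le hL]
        have h3 : ContinuousOn (fun s => f' (x + s)) (Set.Ioc 0 L) :=
          hfc.comp (by fun_prop) fun s hs => by
            simp only [Set.mem_Ioi]; linarith [hs.1]
        have h4 : Continuous fun s => e (x + s) := by simp only [he]; fun_prop
        exact hdc.continuousOn.mul (h4.continuousOn.mul h3)
      · filter_upwards [eventually_ge_atTop Y] with x hx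
        refine Eventually.of_forall fun s hs => ?_
        rw [Set.uIoc_of_le hL] at hs
        rw [norm_mul]
        gcongr
        exact hY _ (by linarith [hs.1])
      · exact (hdc.norm.mul continuous_const).intervalIntegrable _ _
      · refine Eventually.of_forall fun s _ => ?_
        exact (hW.comp (tendsto_atTop_add_const_right atTop s tendsto_id)).const_mul (d s)
    have e12 : (fun x : ℝ => ∫ s in (0:ℝ)..L, d s * (e (x + s) * f' (x + s))) =ᶠ[atTop]
        (fun x : ℝ => e x * (f (x + L) - f x)) := by
      filter_upwards [eventually_gt_atTop X] with x hx
      have h5 : ∫ s in (0:ℝ)..L, f' (x + s) = f (x + L) - f x := by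
        rw [intervalIntegral.integral_comp_add_left (fun t => f' t) x, add_zero]
        have hsub : Set.uIcc x (x + L) ⊆ Set.Ioi X := by
          rw [Set.uIcc_of_le (by linarith)]
          exact fun t ht => lt_of_lt_of_le hx ht.1
        exact intervalIntegral.integral_eq_sub_of_hasDerivAt (fun t ht => hf t (hsub ht))
          (hfc.mono hsub).intervalIntegrable
      rw [← h5, ← intervalIntegral.integral_const_mul]
      refine intervalIntegral.integral_congr fun s _ => ?_
      simp only [hd, he]
      rw [← mul_assoc, ← Complex.exp_add]
      congr 2
      push_cast
      ring
    have := tendsto_nhds_unique (l2.congr' e12) l1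
    rw [intervalIntegral.integral_mul_const] at this
    rw [mul_comm]; exact this
  by_contra hW0
  have hz : ∀ L ≥ 0, ∫ s in (0:ℝ)..L, d s = 0 := fun L hL =>
    (mul_eq_zero.1 (key L hL)).resolve_left hW0
  have hder := (hdc.integral_hasStrictDerivAt 1 1).hasDerivAt
  have hder0 : HasDerivAt (fun L => ∫ s in (0:ℝ)..L, d s) (d 1) 1 :=
    (hdc.integral_hasStrictDerivAt 0 1).hasDerivAt
  have hder1 : HasDerivAt (fun L => ∫ s in (0:ℝ)..L, d s) 0 1 := by
    refine (hasDerivAt_const (1:ℝ) (0:ℂ)).congr_of_eventuallyEq ?_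
    filter_upwards [eventually_ge_nhds (show (0:ℝ) < 1 by norm_num)] with L hL
    exact hz L hL
  exact Complex.exp_ne_zero _ (hder0.unique hder1)

lemma jost_plus_unique (c : ℝ → ℝ) (hmeas : Measurable c) (h1 : HypH1 c) (k : ℂ)
    (hk : 0 ≤ k.im) {u₁ u₂ : ℝ → ℂ} (hu₁ : IsJostPlus c k u₁) (hu₂ : IsJostPlus c k u₂) :
    u₂ = u₁ := by
  obtain ⟨K, hK, hVb⟩ := pot_bound c h1 k
  have hV := pot_int c hmeas h1 k
  obtain ⟨hs₁, ht₁⟩ := hu₁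
  obtain ⟨hs₂, ht₂⟩ := hu₂
  obtain ⟨v₁, hd₁, hp₁⟩ := (solves_iff c k u₁ hV).1 hs₁
  obtain ⟨v₂, hd₂, hp₂⟩ := (solves_iff c k u₂ hV).1 hs₂
  set V : ℝ → ℂ := fun x => -(k ^ 2 / ((c x : ℂ) ^ 2)) with hVdef
  set w : ℝ → ℂ := fun x => u₂ x - u₁ x with hw
  set v : ℝ → ℂ := fun x => v₂ x - v₁ x with hv
  have hwd : ∀ x, HasDerivAt w (v x) x := fun x => (hd₂ x).sub (hd₁ x)
  have hvp : Prim v (fun x => V x * w x) :=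
    (hp₂.sub hp₁).congr (fun x => rfl) (fun x => by simp only [hw, hVdef]; ring)
  have hwp : Prim w v := Prim.of_hasDerivAt hwd hvp.continuous
  have hup : Prim u₁ v₁ := Prim.of_hasDerivAt hd₁ hp₁.continuous
  have hWp : Prim (fun x => u₁ x * v x - v₁ x * w x) (fun _ => 0) :=
    ((hup.mul hvp).sub (hp₁.mul hwp)).congr (fun x => rfl) (fun x => by
      simp only [hVdef]; ring)
  set W : ℂ := u₁ 0 * v 0 - v₁ 0 * w 0 with hWdef
  have hWc : ∀ x, u₁ x * v x - v₁ x * w x = W := by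
    intro x
    have := hWp.2 0 x
    simpa using this
  set E : ℝ → ℂ := fun x => Complex.exp (-(Complex.I * k * (x : ℂ))) with hE
  have hE0 : ∀ x, E x ≠ 0 := fun x => Complex.exp_ne_zero _
  obtain ⟨X, hX⟩ : ∃ X, ∀ x ≥ X, u₁ x ≠ 0 := by
    obtain ⟨X, hX⟩ := eventually_atTop.1 (ht₁.eventually_ne one_ne_zero)
    exact ⟨X, fun x hx h => hX x hx (by simp [h])⟩
  set f : ℝ → ℂ := fun x => w x / u₁ x with hf
  have hfd : ∀ x ≥ X, HasDerivAt f (W / u₁ x ^ 2) x := by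
    intro x hx
    have := (hwd x).div (hd₁ x) (hX x hx)
    convert! this using 1
    rw [← hWc x]
    ring
  have hft : Tendsto f atTop (𝓝 0) := by
    have hn : Tendsto (fun x => E x * w x) atTop (𝓝 0) := by
      have := ht₂.sub ht₁
      rw [sub_self] at this
      refine this.congr fun x => ?_
      simp only [hE, hw]; ring
    have := hn.div ht₁ one_ne_zero
    rw [zero_div] at this
    refine this.congr fun x => ?_
    exact mul_div_mul_left _ _ (hE0 x)
  have hW0 : W = 0 := by
    refine wronskian_zero (X := X) hk (fun x hx => hfd x hx.le) ?_ hft ?_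
    · refine continuousOn_const.div (hup.continuous.pow 2).continuousOn ?_
      exact fun x hx => pow_ne_zero 2 (hX x (le_of_lt hx))
    · have h6 := (tendsto_const_nhds (x := W)).div (ht₁.pow 2) (by norm_num)
      simp only [one_pow, div_one] at h6
      refine h6.congr fun x => ?_
      simp only [Pi.div_apply]
      have : Complex.exp (2 * Complex.I * k * x) = (E x ^ 2)⁻¹ := by
        rw [hE, ← Complex.exp_nat_mul, ← Complex.exp_neg]
        congr 1; push_cast; ring
      show W / (E x * u₁ x) ^ 2 = _
      rw [this]
      ring
  have hfz : ∀ x ≥ X, f x = 0 := by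
    intro x hx
    have hc : ∀ y ≥ x, f y = f x := by
      intro y hy
      have := intervalIntegral.integral_eq_sub_of_hasDerivAt (a := x) (b := y) (f := f)
        (f' := fun _ => 0) (fun t ht => by
          rw [Set.uIcc_of_le hy] at ht
          simpa [hW0] using hfd t (hx.le.trans ht.1)) (by simp)
      simp at this
      exact (sub_eq_zero.1 this.symm)
    have h7 : Tendsto f atTop (𝓝 (f x)) :=
      tendsto_const_nhds.congr' (by
        filter_upwards [eventually_ge_atTop x] with y hy
        exact (hc y hy).symm)
    exact tendsto_nhds_unique h7 hft
  have hwz : ∀ x ≥ X, w x = 0 := fun x hx =>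
    (div_eq_zero_iff.1 (hfz x hx)).resolve_right (hX x hx)
  have hvz : ∀ x ≥ X, v x = 0 := by
    intro x hx
    have := hWc x
    rw [hW0, hwz x hx, mul_zero, sub_zero] at this
    exact (mul_eq_zero.1 this).resolve_left (hX x hx)
  funext y
  have := zero_of_data hK hVb hwd hvp (hwz (max X y) (le_max_left _ _))
    (hvz (max X y) (le_max_left _ _)) (le_max_right X y)
  exact sub_eq_zero.1 this

lemma prim_tail {φ : ℝ → ℂ} (hφ : ∀ a, IntegrableOn φ (Set.Ioi a)) :
    Prim (fun x => ∫ t in Set.Ioi x, φ t) (fun x => -φ x) := by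
  have hi : ∀ a b : ℝ, IntervalIntegrable φ volume a b := by
    intro a b
    rw [intervalIntegrable_iff]
    exact (hφ (min a b)).mono_set fun x hx => hx.1
  refine ⟨fun a b => (hi a b).neg, fun a b => ?_⟩
  have := intervalIntegral.integral_interval_add_Ioi (hφ a) (hφ b)
  rw [intervalIntegral.integral_neg]
  beta_reduce
  rw [← this]; ring

/-- The weight: a positive bounded continuous `p` with `∫_x^∞ h p ≤ p(x)/2`, `p ≥ 1`. -/
lemma exists_weight {h : ℝ → ℝ} (hc : Continuous h) (hn : ∀ x, 0 ≤ h x) (hi : Integrable h) :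
    ∃ p : ℝ → ℝ, ∃ M : ℝ, Continuous p ∧ (∀ x, 1 ≤ p x) ∧ (∀ x, p x ≤ M) ∧
      ∀ x, ∫ t in Set.Ioi x, h t * p t ≤ p x / 2 := by
  set H : ℝ → ℝ := fun x => ∫ t in Set.Ioi x, h t with hH
  have hHe : ∀ x, H x = H 0 - ∫ t in (0:ℝ)..x, h t := by
    intro x
    have := intervalIntegral.integral_interval_add_Ioi (μ := volume) (a := 0) (b := x) (f := h)
      hi.integrableOn hi.integrableOn
    simp only [hH]; linarith
  have hHd : ∀ x, HasDerivAt H (-h x) x := by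
    intro x
    have := ((hc.integral_hasStrictDerivAt 0 x).hasDerivAt).const_sub (H 0)
    exact this.congr_of_eventuallyEq (Eventually.of_forall hHe)
  have hH0 : ∀ x, 0 ≤ H x := fun x => setIntegral_nonneg measurableSet_Ioi fun t _ => hn t
  have hHM : ∀ x, H x ≤ ∫ t, h t := fun x =>
    setIntegral_le_integral hi (Eventually.of_forall hn)
  have hHt : Tendsto H atTop (𝓝 0) := tendsto_integral_Ioi_zero tendsto_id
  have hHc : Continuous H := continuous_iff_continuousAt.2 fun x => (hHd x).continuousAt
  have hpc : Continuous fun x => Real.exp (2 * H x) := by fun_prop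
  refine ⟨fun x => Real.exp (2 * H x), Real.exp (2 * ∫ t, h t), hpc, ?_, ?_, ?_⟩
  · intro x
    exact Real.one_le_exp (by linarith [hH0 x])
  · intro x
    exact Real.exp_le_exp.2 (by linarith [hHM x])
  · intro x
    have hint : Integrable fun t => h t * Real.exp (2 * H t) := by
      refine hi.mul_bdd (c := Real.exp (2 * ∫ t, h t)) hpc.aestronglyMeasurable
        (Eventually.of_forall fun t => ?_)
      rw [Real.norm_of_nonneg (Real.exp_pos _).le]
      exact Real.exp_le_exp.2 (by linarith [hHM t])
    have hder : ∀ t ∈ Set.Ici x, HasDerivAt (fun t => -(Real.exp (2 * H t) / 2))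
        (h t * Real.exp (2 * H t)) t := by
      intro t _
      have := ((((hHd t).const_mul 2).exp).div_const 2).neg
      convert! this using 1
      ring
    have hlim : Tendsto (fun t => -(Real.exp (2 * H t) / 2)) atTop (𝓝 (-(1/2))) := by
      have h3 : Tendsto (fun t => Real.exp (2 * H t)) atTop (𝓝 1) := by
        have := (hHt.const_mul 2).rexp
        simpa using this
      exact (h3.div_const 2).neg
    rw [integral_Ioi_of_hasDerivAt_of_tendsto' hder hint.integrableOn hlim]
    linarith

lemma jost_plus_aux {k : ℂ} (hk : 0 ≤ k.im) (hk0 : k ≠ 0) {q : ℝ → ℂ} (hq : Measurable q)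
    {h : ℝ → ℝ} (hc : Continuous h) (hn : ∀ x, 0 ≤ h x) (hi : Integrable h)
    (hqh : ∀ᵐ x, ‖q x‖ ≤ ‖k‖ * h x) :
    ∃ u v : ℝ → ℂ, (∀ x, HasDerivAt u (v x) x) ∧ Prim v (fun x => (q x - k ^ 2) * u x) ∧
      Tendsto (fun x : ℝ => Complex.exp (-(Complex.I * k * (x : ℂ))) * u x) atTop (𝓝 1) := by
  obtain ⟨p, M, hpc, hp1, hpM, hpi⟩ := exists_weight hc hn hi
  have hp0 : ∀ x, 0 < p x := fun x => zero_lt_one.trans_le (hp1 x)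
  have hkn : 0 < ‖k‖ := norm_pos_iff.2 hk0
  set α : ℂ := 2 * Complex.I * k with hα
  have hα0 : α ≠ 0 := by simp [hα, hk0]
  have hαn : ‖α‖ = 2 * ‖k‖ := by simp [hα]
  -- integrability of the integrands
  have hint1 : ∀ m : ℝ → ℂ, Continuous m → (∃ B, ∀ x, ‖m x‖ ≤ B) →
      Integrable (fun t => q t * m t) := by
    rintro m hm ⟨B, hB⟩
    have hqi : Integrable q := (hi.const_mul ‖k‖).mono' hq.aestronglyMeasurable hqh
    exact hqi.mul_bdd (c := B) hm.aestronglyMeasurable (Eventually.of_forall hB)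
  have hint2 : ∀ m : ℝ → ℂ, Continuous m → (∃ B, ∀ x, ‖m x‖ ≤ B) → ∀ a,
      IntegrableOn (fun t : ℝ => Complex.exp (α * t) * (q t * m t)) (Set.Ioi a) := by
    intro m hm hB a
    refine (hint1 m hm hB).integrableOn.bdd_mul (c := Real.exp (-(2 * k.im * a))) ?_ ?_
    · exact (by fun_prop : Continuous fun t : ℝ => Complex.exp (α * t)).aestronglyMeasurable
    · refine (ae_restrict_iff' measurableSet_Ioi).2 (Eventually.of_forall fun t ht => ?_)
      rw [Complex.norm_exp, Real.exp_le_exp]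
      have : (α * t).re = -(2 * k.im * t) := by simp [hα]
      rw [this]
      have := mul_le_mul_of_nonneg_left (le_of_lt ht) (show 0 ≤ 2 * k.im by linarith)
      linarith
  -- the integral operator
  set T : (ℝ → ℂ) → ℝ → ℂ := fun m x => α⁻¹ * (Complex.exp (-(α * x)) *
      (∫ t in Set.Ioi x, Complex.exp (α * t) * (q t * m t)) - ∫ t in Set.Ioi x, q t * m t) with hT
  have hTc : ∀ m : ℝ → ℂ, Continuous m → (∃ B, ∀ x, ‖m x‖ ≤ B) → Continuous (T m) := by
    intro m hm hB
    have h1 := (prim_tail (hint2 m hm hB)).continuous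
    have h2 := (prim_tail (fun a => (hint1 m hm hB).integrableOn (s := Set.Ioi a))).continuous
    have h3 : Continuous fun x : ℝ => Complex.exp (-(α * x)) := by fun_prop
    exact continuous_const.mul ((h3.mul h1).sub h2)
  have hTb : ∀ m : ℝ → ℂ, Continuous m → (∃ B, ∀ x, ‖m x‖ ≤ B) → ∀ b : ℝ → ℝ, Continuous b →
      (∀ x, ‖m x‖ ≤ b x) → (∃ B, ∀ x, ‖b x‖ ≤ B) → ∀ x,
      ‖T m x‖ ≤ ∫ t in Set.Ioi x, h t * b t := by
    rintro m hm hB b hbc hb ⟨B, hbB⟩ x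
    have hb0 : ∀ t, 0 ≤ b t := fun t => (norm_nonneg _).trans (hb t)
    have e1 : T m x = ∫ t in Set.Ioi x, α⁻¹ * ((Complex.exp (-(α * x)) * Complex.exp (α * t) - 1) *
        (q t * m t)) := by
      simp only [hT]
      rw [← integral_const_mul, ← integral_sub ((hint2 m hm hB x).const_mul _)
        (hint1 m hm hB).integrableOn, ← integral_const_mul]
      congr 1
      funext t
      ring
    rw [e1]
    refine norm_integral_le_of_norm_le ?_ ?_
    · exact (hi.mul_bdd (c := B) hbc.aestronglyMeasurable (Eventually.of_forall hbB)).integrableOn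
    · refine (ae_restrict_iff' measurableSet_Ioi).2 ?_
      filter_upwards [hqh] with t ht hxt
      have h1 : ‖Complex.exp (-(α * x)) * Complex.exp (α * t)‖ ≤ 1 := by
        rw [← Complex.exp_add, Complex.norm_exp, Real.exp_le_one_iff]
        have : (-(α * x) + α * t).re = -(2 * k.im * (t - x)) := by simp [hα]; ring
        rw [this]
        have := mul_nonneg (show 0 ≤ 2 * k.im by linarith) (sub_nonneg.2 (le_of_lt hxt))
        linarith
      have h2 : ‖Complex.exp (-(α * x)) * Complex.exp (α * t) - 1‖ ≤ 2 := by
        refine (norm_sub_le _ _).trans ?_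
        rw [norm_one]; linarith
      rw [norm_mul, norm_mul, norm_mul, norm_inv, hαn]
      calc (2 * ‖k‖)⁻¹ * (‖Complex.exp (-(α * x)) * Complex.exp (α * t) - 1‖ * (‖q t‖ * ‖m t‖))
          ≤ (2 * ‖k‖)⁻¹ * (2 * ((‖k‖ * h t) * b t)) := by
            gcongr
            · exact mul_nonneg hkn.le (hn t)
            · exact hb t
        _ = h t * b t := by field_simp
  have hTsub : ∀ m₁ m₂ : ℝ → ℂ, Continuous m₁ → (∃ B, ∀ x, ‖m₁ x‖ ≤ B) → Continuous m₂ →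
      (∃ B, ∀ x, ‖m₂ x‖ ≤ B) → ∀ x, T m₁ x - T m₂ x = T (fun t => m₁ t - m₂ t) x := by
    intro m₁ m₂ h1 b1 h2 b2 x
    simp only [hT]
    simp_rw [mul_sub (q _), mul_sub (Complex.exp (α * _))]
    rw [integral_sub (hint2 m₁ h1 b1 x) (hint2 m₂ h2 b2 x),
      integral_sub (hint1 m₁ h1 b1).integrableOn (hint1 m₂ h2 b2).integrableOn]
    ring
  -- the fixed point
  have hpcC : Continuous fun x => (p x : ℂ) := by fun_prop
  have hpgc : ∀ g : BoundedContinuousFunction ℝ ℂ, Continuous fun x => (p x : ℂ) * g x :=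
    fun g => hpcC.mul g.continuous
  have hpgn : ∀ (g : BoundedContinuousFunction ℝ ℂ) x, ‖(p x : ℂ) * g x‖ ≤ ‖g‖ * p x := by
    intro g x
    rw [norm_mul, Complex.norm_real, Real.norm_of_nonneg (hp0 x).le, mul_comm]
    exact mul_le_mul_of_nonneg_right (g.norm_coe_le_norm x) (hp0 x).le
  have hpgb : ∀ g : BoundedContinuousFunction ℝ ℂ, ∃ B, ∀ x, ‖(p x : ℂ) * g x‖ ≤ B :=
    fun g => ⟨‖g‖ * M, fun x => (hpgn g x).trans
      (mul_le_mul_of_nonneg_left (hpM x) (norm_nonneg _))⟩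
  have hTp : ∀ (g : BoundedContinuousFunction ℝ ℂ) x,
      ‖T (fun t => (p t : ℂ) * g t) x‖ ≤ ‖g‖ / 2 * p x := by
    intro g x
    refine (hTb _ (hpgc g) (hpgb g) (fun t => ‖g‖ * p t) (by fun_prop) (hpgn g)
      ⟨‖g‖ * M, fun t => ?_⟩ x).trans ?_
    · rw [Real.norm_of_nonneg (mul_nonneg (norm_nonneg _) (hp0 t).le)]
      exact mul_le_mul_of_nonneg_left (hpM t) (norm_nonneg _)
    · have : ∀ t, h t * (‖g‖ * p t) = ‖g‖ * (h t * p t) := fun t => by ring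
      simp_rw [this]
      rw [integral_const_mul]
      have := mul_le_mul_of_nonneg_left (hpi x) (norm_nonneg g)
      linarith
  set S : BoundedContinuousFunction ℝ ℂ → BoundedContinuousFunction ℝ ℂ := fun g =>
    BoundedContinuousFunction.ofNormedAddCommGroup
      (fun x => (p x : ℂ)⁻¹ * (1 + T (fun t => (p t : ℂ) * g t) x))
      ((hpcC.inv₀ fun x => by exact_mod_cast (hp0 x).ne').mul
        (continuous_const.add (hTc _ (hpgc g) (hpgb g))))
      (1 + ‖g‖ / 2) (by
        intro x
        rw [norm_mul, norm_inv, Complex.norm_real, Real.norm_of_nonneg (hp0 x).le,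
          inv_mul_le_iff₀ (hp0 x)]
        refine (norm_add_le _ _).trans ?_
        rw [norm_one]
        nlinarith [hTp g x, hp1 x]) with hS
  have hSc : ContractingWith (1/2) S := by
    refine ⟨by norm_num, LipschitzWith.of_dist_le_mul fun g₁ g₂ => ?_⟩
    rw [dist_eq_norm g₁ g₂]
    refine (BoundedContinuousFunction.dist_le (by positivity)).2 fun x => ?_
    have e2 : S g₁ x - S g₂ x = (p x : ℂ)⁻¹ * T (fun t => (p t : ℂ) * (g₁ - g₂) t) x := by
      have e3 := hTsub _ _ (hpgc g₁) (hpgb g₁) (hpgc g₂) (hpgb g₂) x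
      have e4 : (fun t => (p t : ℂ) * (g₁ - g₂) t) =
          fun t => (p t : ℂ) * g₁ t - (p t : ℂ) * g₂ t := by
        funext t; simp; ring
      rw [e4, ← e3]
      simp only [hS, BoundedContinuousFunction.coe_ofNormedAddCommGroup]
      ring
    rw [dist_eq_norm, e2, norm_mul, norm_inv, Complex.norm_real, Real.norm_of_nonneg (hp0 x).le,
      inv_mul_le_iff₀ (hp0 x)]
    refine (hTp (g₁ - g₂) x).trans (le_of_eq ?_)
    simp
    ring
  obtain ⟨g, hg⟩ : ∃ g, S g = g := ⟨hSc.fixedPoint, hSc.fixedPoint_isFixedPt⟩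
  set m : ℝ → ℂ := fun x => (p x : ℂ) * g x with hm
  have hmc : Continuous m := hpgc g
  obtain ⟨B, hB⟩ := hpgb g
  have hmT : ∀ x, m x = 1 + T m x := by
    intro x
    have : S g x = g x := by rw [hg]
    have e5 : (p x : ℂ)⁻¹ * (1 + T m x) = g x := this
    have hpx : (p x : ℂ) ≠ 0 := by exact_mod_cast (hp0 x).ne'
    simp only [hm] at e5 ⊢
    rw [← e5, mul_inv_cancel_left₀ hpx]
  have hFp := prim_tail (hint2 m hmc ⟨B, hB⟩)
  have hGp := prim_tail (fun a => (hint1 m hmc ⟨B, hB⟩).integrableOn (s := Set.Ioi a))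
  set F : ℝ → ℂ := fun x => ∫ t in Set.Ioi x, Complex.exp (α * t) * (q t * m t) with hF
  set G : ℝ → ℂ := fun x => ∫ t in Set.Ioi x, q t * m t with hG
  have hmFG : ∀ x : ℝ, m x = 1 + α⁻¹ * (Complex.exp (-(α * x)) * F x - G x) := hmT
  set β : ℂ := Complex.I * k with hβ
  have hαβ : α = 2 * β := by rw [hα, hβ]; ring
  have hβ0 : β ≠ 0 := by simp [hβ, hk0]
  have hβ2 : β ^ 2 = -k ^ 2 := by rw [hβ, mul_pow, Complex.I_sq]; ring
  set P : ℝ → ℂ := fun x => Complex.exp (β * x) with hP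
  set N : ℝ → ℂ := fun x => Complex.exp (-(β * x)) with hN
  have hPN : ∀ x, P x * N x = 1 := by
    intro x; simp only [hP, hN]; rw [← Complex.exp_add]; simp
  have hNa : ∀ x : ℝ, Complex.exp (-(α * x)) = N x ^ 2 := by
    intro x; simp only [hN]; rw [← Complex.exp_nat_mul, hαβ]; congr 1; push_cast; ring
  have hPa : ∀ x : ℝ, Complex.exp (α * x) = P x ^ 2 := by
    intro x; simp only [hP]; rw [← Complex.exp_nat_mul, hαβ]; congr 1; push_cast; ring
  have hPd : Prim P (fun x => β * P x) := by
    refine Prim.of_hasDerivAt (fun x => ?_) (by fun_prop)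
    have := ((((Complex.ofRealCLM.hasDerivAt (x := x)).const_mul β)).cexp)
    convert! this using 1
    simp [hP]; ring
  have hNd : Prim N (fun x => -β * N x) := by
    refine Prim.of_hasDerivAt (fun x => ?_) (by fun_prop)
    have := ((((Complex.ofRealCLM.hasDerivAt (x := x)).const_mul β)).neg.cexp)
    convert! this using 1
    simp [hN]; ring
  set u : ℝ → ℂ := fun x => P x + (2 * β)⁻¹ * (N x * F x - P x * G x) with hu
  set v : ℝ → ℂ := fun x => β * P x + (2:ℂ)⁻¹ * (- (1:ℂ) * (N x * F x) - P x * G x) with hv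
  have hum : ∀ x, u x = P x * m x := by
    intro x
    rw [hmFG, hNa, hαβ]
    simp only [hu]
    linear_combination (-(2 * β)⁻¹ * N x * F x) * hPN x
  have hup : Prim u v := by
    refine (hPd.add (((hNd.mul hFp).sub (hPd.mul hGp)).const_mul (2 * β)⁻¹)).congr
      (fun x => rfl) (fun x => ?_)
    simp only [hv, hPa]
    field_simp
    linear_combination (P x * q x * m x) * hPN x
  have hvp : Prim v (fun x => (q x - k ^ 2) * u x) := by
    refine ((hPd.const_mul β).add ((((hNd.mul hFp).const_mul (-1)).sub
      (hPd.mul hGp)).const_mul (2:ℂ)⁻¹)).congr (fun x => rfl) (fun x => ?_)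
    have e6 : (q x - k ^ 2) * u x = q x * (P x * m x) + β ^ 2 * u x := by
      rw [hβ2, ← hum]; ring
    rw [e6]
    simp only [hu, hPa]
    field_simp
    linear_combination (-P x * q x * m x) * hPN x
  refine ⟨u, v, hup.hasDerivAt hvp.continuous, hvp, ?_⟩
  have hm1 : Tendsto m atTop (𝓝 1) := by
    have hz : Tendsto (fun x => ∫ t in Set.Ioi x, h t * B) atTop (𝓝 0) :=
      tendsto_integral_Ioi_zero tendsto_id
    have hTz : Tendsto (T m) atTop (𝓝 0) := squeeze_zero_norm
      (hTb m hmc ⟨B, hB⟩ (fun _ => B) continuous_const hB ⟨‖B‖, fun _ => le_rfl⟩) hz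
    have := hTz.const_add 1
    rw [add_zero] at this
    exact this.congr fun x => (hmT x).symm
  refine hm1.congr fun x => ?_
  show m x = N x * u x
  rw [hum]
  linear_combination (- m x) * hPN x

lemma jost_plus_exists (c : ℝ → ℝ) (hmeas : Measurable c) (h1 : HypH1 c) (h2 : HypH2 c) (k : ℂ)
    (hk : 0 ≤ k.im) : ∃ u, IsJostPlus c k u := by
  by_cases hk0 : k = 0
  · subst hk0
    refine ⟨fun _ => 1, ⟨contDiff_const, fun a b => by simp⟩, by simp⟩
  have hV := pot_int c hmeas h1 k
  obtain ⟨c₀, hc₀, cM, hcM, h1⟩ := h1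
  obtain ⟨C, hC, δ, hδ, h2⟩ := h2
  set A : ℝ := ‖k‖ * (C * ((cM + 1) / c₀ ^ 2)) with hA
  have hA0 : 0 ≤ A := by positivity
  have hi : Integrable fun x : ℝ => A * (1 + x ^ 2) ^ (-(1 + δ) / 2) := by
    have := integrable_rpow_neg_one_add_norm_sq (E := ℝ) (μ := volume) (r := 1 + δ)
      (by simp; exact hδ)
    simp only [Real.norm_eq_abs, sq_abs] at this
    exact this.const_mul A
  have hpos : ∀ x : ℝ, 0 < 1 + x ^ 2 := fun x => by positivity
  have hcont : Continuous fun x : ℝ => A * (1 + x ^ 2) ^ (-(1 + δ) / 2) :=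
    continuous_const.mul ((by fun_prop : Continuous fun x : ℝ => 1 + x ^ 2).rpow_const
      fun x => Or.inl (hpos x).ne')
  obtain ⟨u, v, hd, hp, ht⟩ := jost_plus_aux hk hk0
    (q := fun x => k ^ 2 - k ^ 2 / ((c x : ℂ) ^ 2)) (by fun_prop) hcont
    (fun x => mul_nonneg hA0 (Real.rpow_nonneg (hpos x).le _)) hi (by
      filter_upwards [h1, h2] with x hx1 hx2
      have hcx : 0 < c x := hc₀.trans hx1.1
      have hcxC : (c x : ℂ) ≠ 0 := by exact_mod_cast hcx.ne'
      have e : k ^ 2 - k ^ 2 / ((c x : ℂ) ^ 2) =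
          k ^ 2 * (((c x - 1) * ((c x + 1) / c x ^ 2) : ℝ) : ℂ) := by
        push_cast
        field_simp
        ring
      rw [e, norm_mul, norm_pow, Complex.norm_real, norm_mul, Real.norm_eq_abs,
        Real.norm_of_nonneg (show 0 ≤ (c x + 1) / c x ^ 2 by positivity)]
      have h3 : (c x + 1) / c x ^ 2 ≤ (cM + 1) / c₀ ^ 2 := by
        have := hx1.1.le
        have := hx1.2
        gcongr
      calc ‖k‖ ^ 2 * (|c x - 1| * ((c x + 1) / c x ^ 2))
          ≤ ‖k‖ ^ 2 * ((C * (1 + x ^ 2) ^ (-(1 + δ) / 2)) * ((cM + 1) / c₀ ^ 2)) := by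
            gcongr
        _ = _ := by rw [hA]; ring)
  refine ⟨u, (solves_iff c k u hV).2 ⟨v, hd, hp.congr (fun x => rfl) fun x => by ring⟩, ht⟩

lemma reflect_plus {c : ℝ → ℝ} {k : ℂ} {u : ℝ → ℂ} (h : SolvesHelmholtz c k u) :
    SolvesHelmholtz (fun x => c (-x)) k (fun x => u (-x)) := by
  obtain ⟨h1, h2⟩ := h
  refine ⟨h1.comp contDiff_neg, fun a b => ?_⟩
  have hd : ∀ x, deriv (fun x => u (-x)) x = -deriv u (-x) := fun x => deriv_comp_neg u x
  rw [hd, hd]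
  have := intervalIntegral.integral_comp_neg (a := a) (b := b)
    (fun x => -(k ^ 2 / ((c x : ℂ) ^ 2)) * u x)
  rw [this, h2 (-a) (-b), intervalIntegral.integral_symm (-b) (-a)]
  ring

lemma minus_iff (c : ℝ → ℝ) (k : ℂ) (u : ℝ → ℂ) :
    IsJostMinus c k u ↔ IsJostPlus (fun x => c (-x)) k (fun x => u (-x)) := by
  constructor
  · rintro ⟨h1, h2⟩
    refine ⟨reflect_plus h1, ?_⟩
    refine (h2.comp tendsto_neg_atTop_atBot).congr fun x => ?_
    simp
  · rintro ⟨h1, h2⟩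
    refine ⟨by simpa using reflect_plus h1, ?_⟩
    refine (h2.comp tendsto_neg_atBot_atTop).congr fun x => ?_
    simp

/-- Existence and uniqueness of the Jost solutions from `+∞` and from `-∞`. -/
theorem jost_solutions_exist_unique (c : ℝ → ℝ) (hmeas : Measurable c)
    (h1 : HypH1 c) (h2 : HypH2 c) (k : ℂ) (hk : 0 ≤ k.im) :
    (∃! u : ℝ → ℂ, IsJostPlus c k u) ∧ (∃! u : ℝ → ℂ, IsJostMinus c k u) := by
  constructor
  · obtain ⟨u, hu⟩ := jost_plus_exists c hmeas h1 h2 k hk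
    exact ⟨u, hu, fun y hy => jost_plus_unique c hmeas h1 k hk hu hy⟩
  · have hqm := (Measure.measurePreserving_neg (volume : Measure ℝ)).quasiMeasurePreserving
    have hm' : Measurable fun x => c (-x) := hmeas.comp measurable_neg
    have h1' : HypH1 fun x => c (-x) := by
      obtain ⟨c₀, hc₀, cM, hcM, h⟩ := h1
      exact ⟨c₀, hc₀, cM, hcM, hqm.ae h⟩
    have h2' : HypH2 fun x => c (-x) := by
      obtain ⟨C, hC, δ, hδ, h⟩ := h2
      exact ⟨C, hC, δ, hδ, by simpa using hqm.ae h⟩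
    obtain ⟨u, hu⟩ := jost_plus_exists _ hm' h1' h2' k hk
    refine ⟨fun x => u (-x), (minus_iff c k _).2 (by simpa using hu), fun y hy => ?_⟩
    have := jost_plus_unique _ hm' h1' k hk hu ((minus_iff c k y).1 hy)
    funext x
    have := congrFun this (-x)
    simpa using this
end
end

section
/- Let c satisfy [H1] and [H2], let k ∈ ℂ with Im k ≥ 0, and let u₁ : ℝ → ℂ be the Jost solution from +∞ at k. Then for all x ∈ ℝ: |u₁(x) − e^{ikx}| ≤ |k| γ(x) e^{|k| γ(x) − x·Im k} and |u₁'(x) − i k u₁(x)| ≤ |k|² γ(x) (1 + |k| ‖q‖_{L¹} e^{|k| ‖q‖_{L¹}}) e^{−x·Im k}, where γ(x) = ∫ₓ^∞ |q(y)| dy and ‖q‖_{L¹} = ∫_ℝ |q(y)| dy (finite by [H2]). -/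
open MeasureTheory Filter Topology

noncomputable section

/-- `γ(x) = ∫ₓ^∞ |q(y)| dy`. -/
def jostGamma (c : ℝ → ℝ) (x : ℝ) : ℝ := ∫ y in Set.Ioi x, |qfun c y|

/-- `‖q‖_{L¹} = ∫_ℝ |q(y)| dy`. -/
def qL1 (c : ℝ → ℝ) : ℝ := ∫ y : ℝ, |qfun c y|


theorem li_ii {φ : ℝ → ℂ} (hφ : LocallyIntegrable φ) (a b : ℝ) :
    IntervalIntegrable φ volume a b :=
  intervalIntegrable_iff.mpr <|
    (hφ.integrableOn_isCompact isCompact_uIcc).mono_set Set.uIoc_subset_uIcc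

theorem ac_of_dist_le {E F : Type*} [PseudoMetricSpace E] [PseudoMetricSpace F]
    {f : ℝ → E} {g : ℝ → F} {a b : ℝ} (hg : AbsolutelyContinuousOnInterval g a b)
    (h : ∀ x ∈ Set.uIcc a b, ∀ y ∈ Set.uIcc a b, dist (f x) (f y) ≤ dist (g x) (g y)) :
    AbsolutelyContinuousOnInterval f a b := by
  unfold AbsolutelyContinuousOnInterval at *
  refine squeeze_zero' ?_ ?_ hg
  · exact Filter.Eventually.of_forall <| fun _ ↦ Finset.sum_nonneg (fun i hi ↦ dist_nonneg)
  rw [eventually_inf_principal]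
  filter_upwards with I hI
  refine Finset.sum_le_sum fun i hi => ?_
  have := hI.1 i hi
  exact h _ this.1 _ this.2

theorem ac_integral {φ : ℝ → ℂ} (hφ : LocallyIntegrable φ) (a b c : ℝ) (hc : c ∈ Set.uIcc a b) :
    AbsolutelyContinuousOnInterval (fun x => ∫ t in c..x, φ t) a b := by
  have hi : ∀ x y, IntervalIntegrable φ volume x y := fun x y => li_ii hφ x y
  refine ac_of_dist_le ((hi a b).norm.absolutelyContinuousOnInterval_intervalIntegral hc) ?_
  intro x _ y _
  rw [dist_eq_norm, dist_eq_norm, intervalIntegral.integral_interval_sub_left (hi _ _) (hi _ _),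
    intervalIntegral.integral_interval_sub_left (hi _ _).norm (hi _ _).norm]
  simpa using intervalIntegral.norm_integral_le_abs_integral_norm (f := φ) (a := y) (b := x)

theorem prod_ftc {φ n e e' : ℝ → ℂ} (hφ : LocallyIntegrable φ)
    (hn : ∀ a b, n b = n a + ∫ x in a..b, φ x)
    (he : ∀ x, HasDerivAt e (e' x) x) (he' : Continuous e') (a b : ℝ) :
    n b * e b - n a * e a = ∫ x in a..b, (φ x * e x + n x * e' x) := by
  have hec : Continuous e := continuous_iff_continuousAt.2 fun x => (he x).continuousAt
  have hnc : Continuous n := by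
    have : n = fun x => n a + ∫ t in a..x, φ t := by
      funext x; exact hn a x
    rw [this]
    exact continuous_const.add (intervalIntegral.continuous_primitive
      (li_ii hφ) a)
  have hli : LocallyIntegrable (fun x => φ x * e x + n x * e' x) := by
    refine LocallyIntegrable.add ?_ ?_
    · have := hφ.continuous_smul hec
      refine this.congr ?_
      filter_upwards with x
      simp [mul_comm]
    · exact (hnc.mul he').locallyIntegrable
  have e1 : AbsolutelyContinuousOnInterval e a b := by
    apply ContDiffOn.absolutelyContinuousOnInterval
    apply ContDiff.contDiffOn
    rw [contDiff_one_iff_deriv]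
    refine ⟨fun x => (he x).differentiableAt, ?_⟩
    have : deriv e = e' := by funext x; exact (he x).deriv
    rwa [this]
  have n1 : AbsolutelyContinuousOnInterval n a b := by
    refine ac_of_dist_le (ac_integral hφ a b a (by simp)) ?_
    intro x _ y _
    rw [hn a x, hn a y, dist_add_left]
  have ac := (n1.smul e1).sub (ac_integral hli a b a (by simp))
  have hz : ∀ᵐ x, x ∈ Set.uIcc a b →
      HasDerivAt ((n • e) - fun x => ∫ t in a..x, (φ t * e t + n t * e' t)) 0 x := by
    filter_upwards [_root_.LocallyIntegrable.ae_hasDerivAt_integral hφ,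
      _root_.LocallyIntegrable.ae_hasDerivAt_integral hli] with x h1 h2 _
    have h3 : HasDerivAt n (φ x) x := by
      have : n = fun x => n a + ∫ t in a..x, φ t := by
        funext x; exact hn a x
      rw [this]
      exact (h1 a).const_add _
    have := (h3.mul (he x)).sub (h2 a)
    rw [sub_self] at this
    exact this
  obtain ⟨C, hC⟩ := ac.const_of_ae_hasDerivAt_zero hz
  have ha := hC a (by simp)
  have hb := hC b (by simp)
  simp at ha hb
  rw [ha, ← hb]; ring

theorem gron {p f : ℝ → ℝ} (hp : ∀ x, 0 ≤ p x)
    (hpi : ∀ x, IntegrableOn p (Set.Ioi x)) (hpf : ∀ x, IntegrableOn (fun y => p y * f y) (Set.Ioi x))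
    {κ : ℝ} (hκ : 0 ≤ κ) (h : ∀ x, f x ≤ 1 + κ * ∫ y in Set.Ioi x, p y * f y) (x : ℝ) :
    1 + κ * ∫ y in Set.Ioi x, p y * f y ≤ Real.exp (κ * ∫ y in Set.Ioi x, p y) := by
  have hII : ∀ {r : ℝ → ℝ}, (∀ x, IntegrableOn r (Set.Ioi x)) → ∀ a b, IntervalIntegrable r volume a b := by
    intro r hr a b
    rw [intervalIntegrable_iff]
    exact (hr (min a b)).mono_set (fun y hy => hy.1)
  have hsplit : ∀ {r : ℝ → ℝ}, (∀ x, IntegrableOn r (Set.Ioi x)) → ∀ a b,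
      ∫ y in Set.Ioi b, r y = (∫ y in Set.Ioi a, r y) - ∫ y in a..b, r y := by
    intro r hr a b
    have := intervalIntegral.integral_interval_add_Ioi (hr a) (hr b)
    linarith
  have hlim : ∀ {r : ℝ → ℝ}, (∀ x, IntegrableOn r (Set.Ioi x)) →
      Tendsto (fun b => ∫ y in Set.Ioi b, r y) atTop (𝓝 0) := by
    intro r hr
    have h1 := intervalIntegral_tendsto_integral_Ioi x (hr x) tendsto_id
    have h2 := (tendsto_const_nhds (x := ∫ y in Set.Ioi x, r y)).sub h1
    rw [sub_self] at h2
    refine h2.congr fun b => ?_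
    rw [hsplit hr x b]; rfl
  have hac : ∀ {r : ℝ → ℝ}, (∀ x, IntegrableOn r (Set.Ioi x)) → ∀ b,
      AbsolutelyContinuousOnInterval (fun b => κ * ∫ y in Set.Ioi b, r y) x b := by
    intro r hr b
    have := ((hII hr x b).absolutelyContinuousOnInterval_intervalIntegral (c := x) (by simp)).const_mul κ
    refine ac_of_dist_le this ?_
    intro s _ t _
    rw [hsplit hr x s, hsplit hr x t]
    simp only [Real.dist_eq]
    rw [abs_sub_comm]
    apply le_of_eq; congr 1; simp [mul_sub]
  have hloc : ∀ {r : ℝ → ℝ}, (∀ x, IntegrableOn r (Set.Ioi x)) → ∀ b, ∀ᵐ y, y ∈ Set.uIcc x b →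
      HasDerivAt (fun b => κ * ∫ y in Set.Ioi b, r y) (-(κ * r y)) y := by
    intro r hr b
    filter_upwards [(hII hr x b).ae_hasDerivAt_integral] with y hy hy2
    have := ((hy hy2 x (by simp)).const_sub (∫ y in Set.Ioi x, r y)).const_mul κ
    rw [mul_neg] at this
    refine this.congr_of_eventuallyEq ?_
    filter_upwards with z
    rw [hsplit hr x z]
  set G := fun b => κ * ∫ y in Set.Ioi b, p y * f y with hG
  set g := fun b => κ * ∫ y in Set.Ioi b, p y with hg
  have hg0 : ∀ b, 0 ≤ g b := fun b => mul_nonneg hκ (setIntegral_nonneg measurableSet_Ioi fun y _ => hp y)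
  have key : ∀ b, x ≤ b → (1 + G x) * Real.exp (-g x) ≤ (1 + G b) * Real.exp (-g b) := by
    intro b hb
    have a1 : AbsolutelyContinuousOnInterval (fun b => 1 + G b) x b := by
      refine ac_of_dist_le (hac hpf b) ?_
      intro s _ t _
      simp [hG]
    have a2 : AbsolutelyContinuousOnInterval (fun b => Real.exp (-g b)) x b := by
      refine ac_of_dist_le (hac hpi b) ?_
      intro s _ t _
      rw [Real.dist_eq]
      have aux : ∀ u v : ℝ, 0 ≤ u → u ≤ v → |Real.exp (-u) - Real.exp (-v)| ≤ |u - v| := by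
        intro u v hu huv
        rw [abs_of_nonneg (by simpa using huv), abs_of_nonpos (by linarith)]
        have e1 : Real.exp (-v) = Real.exp (-u) * Real.exp (u - v) := by
          rw [← Real.exp_add]; ring_nf
        have e2 := Real.add_one_le_exp (u - v)
        have e3 : Real.exp (-u) ≤ 1 := by simpa using hu
        have e4 := Real.exp_pos (-u)
        rw [e1]
        nlinarith
      rcases le_total (g s) (g t) with hh | hh
      · exact aux _ _ (hg0 s) hh
      · rw [abs_sub_comm, dist_comm]; exact aux _ _ (hg0 t) hh
    have a3 := (a1.mul a2).integral_deriv_eq_sub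
    have a4 : 0 ≤ ∫ y in x..b, deriv ((fun b => 1 + G b) * (fun b => Real.exp (-g b))) y := by
      apply intervalIntegral.integral_nonneg_of_ae_restrict hb
      rw [EventuallyLE, ae_restrict_iff' measurableSet_Icc]
      filter_upwards [hloc hpf b, hloc hpi b] with y h1 h2 hy
      rw [← Set.uIcc_of_le hb] at hy
      have d := ((h1 hy).const_add 1).mul ((h2 hy).neg.exp)
      have d2 : deriv ((fun b => 1 + G b) * (fun b => Real.exp (-g b))) y = _ := d.deriv
      rw [d2]
      have := h y
      have e := Real.exp_pos (-g y)
      have : 0 ≤ κ * p y * Real.exp (-g y) * (1 + G y - f y) :=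
        mul_nonneg (mul_nonneg (mul_nonneg hκ (hp y)) e.le) (by simp only [hG]; linarith)
      simp only [Pi.zero_apply, hG, hg] at this ⊢
      simp only [Pi.neg_apply]
      linarith
    rw [a3] at a4
    simp at a4
    exact a4
  have l1 : Tendsto (fun b => (1 + G b) * Real.exp (-g b)) atTop (𝓝 1) := by
    have t1 := ((hlim hpf).const_mul κ).const_add 1
    have t2 := (((hlim hpi).const_mul κ).neg).rexp
    simpa using t1.mul t2
  have := ge_of_tendsto l1 (by filter_upwards [eventually_ge_atTop x] with b hb using key b hb)
  rw [Real.exp_neg, ← div_eq_mul_inv, div_le_one (Real.exp_pos _)] at this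
  exact this

theorem q_integrable (c : ℝ → ℝ) (hmeas : Measurable c)
    (h1 : HypH1 c) (h2 : HypH2 c) : Integrable (qfun c) := by
  obtain ⟨c₀, hc₀, cM, hcM, h1⟩ := h1
  obtain ⟨C, hC, δ, hδ, h2⟩ := h2
  have hJ : Integrable (fun x : ℝ => ((1 : ℝ) + ‖x‖ ^ 2) ^ (-(1 + δ) / 2)) :=
    integrable_rpow_neg_one_add_norm_sq (by simp; linarith)
  refine (hJ.const_mul (C * ((cM + 1) / c₀ ^ 2))).mono' ?_ ?_
  · apply Measurable.aestronglyMeasurable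
    unfold qfun
    fun_prop
  filter_upwards [h1, h2] with x ⟨hx1, hx2⟩ hx3
  have hcx : 0 < c x := hc₀.trans hx1
  have e : qfun c x = (c x - 1) * ((c x + 1) / (c x) ^ 2) := by
    unfold qfun; field_simp; ring
  have e2 : (c x + 1) / (c x) ^ 2 ≤ (cM + 1) / c₀ ^ 2 := by gcongr
  rw [e, norm_mul, Real.norm_eq_abs, Real.norm_eq_abs, abs_of_nonneg (a := (c x + 1) / (c x) ^ 2) (by positivity)]
  rw [Real.norm_eq_abs, sq_abs]
  calc _ ≤ (C * (1 + x ^ 2) ^ (-(1 + δ) / 2)) * ((cM + 1) / c₀ ^ 2) := by gcongr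
    _ = _ := by ring

theorem wronskian {c : ℝ → ℝ} {k : ℂ} {u : ℝ → ℂ} (hq : Integrable (qfun c))
    (hu : SolvesHelmholtz c k u) {E E' : ℝ → ℂ} (hE : ∀ x, HasDerivAt E (E' x) x)
    (hE' : ∀ x, HasDerivAt E' (-k ^ 2 * E x) x) (a b : ℝ) :
    (deriv u b * E b - u b * E' b) - (deriv u a * E a - u a * E' a)
      = ∫ x in a..b, k ^ 2 * (qfun c x : ℂ) * u x * E x := by
  obtain ⟨hu1, hu2⟩ := hu
  have hd := (contDiff_one_iff_deriv.1 hu1)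
  have hEc : Continuous E := continuous_iff_continuousAt.2 fun x => (hE x).continuousAt
  have hEc' : Continuous E' := continuous_iff_continuousAt.2 fun x => (hE' x).continuousAt
  have huc : Continuous u := hu1.continuous
  have hql : LocallyIntegrable (fun x => (qfun c x : ℂ)) := hq.ofReal.locallyIntegrable
  have hφ : LocallyIntegrable (fun x => -(k ^ 2 / ((c x : ℂ) ^ 2)) * u x) := by
    have h := (hql.sub (continuous_const (y := (1 : ℂ))).locallyIntegrable).continuous_smul
      ((continuous_const (y := k ^ 2)).mul huc)
    refine h.congr ?_
    filter_upwards with x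
    simp [qfun]; ring
  have p1 := prod_ftc hφ hu2 hE hEc' a b
  have p2 := prod_ftc (φ := deriv u) (n := u) hd.2.locallyIntegrable (by
    intro a b
    rw [intervalIntegral.integral_deriv_eq_sub (fun x _ => hd.1 x) (hd.2.intervalIntegrable _ _)]
    ring) hE' (by fun_prop) a b
  have i1 : IntervalIntegrable (fun x => -(k ^ 2 / ((c x : ℂ) ^ 2)) * u x * E x + deriv u x * E' x)
      volume a b :=
    ((li_ii hφ a b).mul_continuousOn hEc.continuousOn).add
      ((hd.2.mul hEc').intervalIntegrable _ _)
  have i2 : IntervalIntegrable (fun x => deriv u x * E' x + u x * (-k ^ 2 * E x)) volume a b :=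
    ((hd.2.mul hEc').add (huc.mul (by fun_prop))).intervalIntegrable _ _
  have : ∫ x in a..b, k ^ 2 * (qfun c x : ℂ) * u x * E x =
      ∫ x in a..b, ((-(k ^ 2 / ((c x : ℂ) ^ 2)) * u x * E x + deriv u x * E' x) -
        (deriv u x * E' x + u x * (-k ^ 2 * E x))) := by
    congr 1; funext x
    simp [qfun]; ring
  rw [this, intervalIntegral.integral_sub i1 i2, ← p1, ← p2]
  ring

theorem norm_e (k : ℂ) (y : ℝ) : ‖Complex.exp (Complex.I * k * y)‖ = Real.exp (-(y * k.im)) := by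
  rw [Complex.norm_exp]; simp [mul_comm]

theorem norm_e' (k : ℂ) (y : ℝ) : ‖Complex.exp (-(Complex.I * k * y))‖ = Real.exp (y * k.im) := by
  rw [Complex.norm_exp]; simp [mul_comm]

theorem hd_e (a : ℂ) (y : ℝ) : HasDerivAt (fun y : ℝ => Complex.exp (a * y)) (a * Complex.exp (a * y)) y := by
  have h : HasDerivAt (fun y : ℝ => a * (y : ℂ)) (a * 1) y := (Complex.ofRealCLM.hasDerivAt (x := y)).const_mul a
  simpa [mul_comm] using h.cexp

theorem bound2 {c : ℝ → ℝ} {k : ℂ} {u : ℝ → ℂ} (hk : 0 ≤ k.im) (hq : Integrable (qfun c))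
    (hu : SolvesHelmholtz c k u) {x b : ℝ} (hxb : x ≤ b) :
    ‖Complex.exp (Complex.I * k * b) * (deriv u b - Complex.I * k * u b)
      - Complex.exp (Complex.I * k * x) * (deriv u x - Complex.I * k * u x)‖ ≤
      ‖k‖ ^ 2 * Real.exp (-(2 * x * k.im)) *
       ∫ y in x..b, |qfun c y| * ‖Complex.exp (-(Complex.I * k * y)) * u y‖ := by
  have w := wronskian hq hu (E := fun y => Complex.exp (Complex.I * k * y))
    (E' := fun y => Complex.I * k * Complex.exp (Complex.I * k * y)) (hd_e _)
    (fun y => by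
      have := (hd_e (Complex.I * k) y).const_mul (Complex.I * k)
      refine this.congr_deriv ?_
      linear_combination (k ^ 2 * Complex.exp (Complex.I * k * y)) * Complex.I_sq) x b
  have huc : Continuous u := hu.1.continuous
  have e1 : Complex.exp (Complex.I * k * b) * (deriv u b - Complex.I * k * u b)
      - Complex.exp (Complex.I * k * x) * (deriv u x - Complex.I * k * u x) =
      ∫ x in x..b, k ^ 2 * (qfun c x : ℂ) * u x * Complex.exp (Complex.I * k * x) := by
    rw [← w]; ring
  rw [e1, ← intervalIntegral.integral_const_mul]
  apply intervalIntegral.norm_integral_le_of_norm_le hxb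
  · filter_upwards with y hy
    have hy' : x ≤ y := hy.1.le
    simp only [norm_mul, norm_e, norm_e', norm_pow, Complex.norm_real, Real.norm_eq_abs]
    have : Real.exp (-(y * k.im)) ≤ Real.exp (-(2 * x * k.im)) * Real.exp (y * k.im) := by
      rw [← Real.exp_add]
      apply Real.exp_le_exp.2
      nlinarith
    calc _ ≤ ‖k‖ ^ 2 * |qfun c y| * ‖u y‖ * (Real.exp (-(2 * x * k.im)) * Real.exp (y * k.im)) := by
          gcongr
      _ = _ := by ring
  · apply IntervalIntegrable.const_mul
    exact hq.abs.intervalIntegrable.mul_continuousOn (by fun_prop)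

theorem bound1 {c : ℝ → ℝ} {k : ℂ} {u : ℝ → ℂ} (hk : 0 ≤ k.im) (hk0 : k ≠ 0)
    (hq : Integrable (qfun c))
    (hu : SolvesHelmholtz c k u) {x b : ℝ} (hxb : x ≤ b) :
    ‖Complex.exp (-(Complex.I * k * b)) * u b + (Complex.exp (-(Complex.I * k * b)) *
        (deriv u b - Complex.I * k * u b)) *
        ((1 - Complex.exp (Complex.I * (2 * k) * ((b - x : ℝ) : ℂ))) / (2 * Complex.I * k))
      - Complex.exp (-(Complex.I * k * x)) * u x‖ ≤
      ‖k‖ * ∫ y in x..b, |qfun c y| * ‖Complex.exp (-(Complex.I * k * y)) * u y‖ := by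
  have hI := Complex.I_ne_zero
  have hEq : ∀ y : ℝ, Complex.exp (Complex.I * k * y) * Complex.exp (-(2 * Complex.I * k * x)) =
      Complex.exp (-(Complex.I * k * y)) * Complex.exp (Complex.I * (2 * k) * ((y - x : ℝ) : ℂ)) := by
    intro y
    rw [← Complex.exp_add, ← Complex.exp_add]; congr 1; push_cast; ring
  have hEd : ∀ y : ℝ, HasDerivAt (fun y : ℝ => (Complex.exp (-(Complex.I * k) * y) -
        Complex.exp (Complex.I * k * y) * Complex.exp (-(2 * Complex.I * k * x))) / (2 * Complex.I * k))
      (-(Complex.exp (-(Complex.I * k) * y) +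
        Complex.exp (Complex.I * k * y) * Complex.exp (-(2 * Complex.I * k * x))) / 2) y := by
    intro y
    have := (((hd_e (-(Complex.I * k)) y).sub ((hd_e (Complex.I * k) y).mul_const
      (Complex.exp (-(2 * Complex.I * k * x))))).div_const (2 * Complex.I * k))
    refine this.congr_deriv ?_
    field_simp
    ring
  have hEd' : ∀ y : ℝ, HasDerivAt (fun y : ℝ => (-(Complex.exp (-(Complex.I * k) * y) +
        Complex.exp (Complex.I * k * y) * Complex.exp (-(2 * Complex.I * k * x))) / 2))
      (-k ^ 2 * ((Complex.exp (-(Complex.I * k) * y) -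
        Complex.exp (Complex.I * k * y) * Complex.exp (-(2 * Complex.I * k * x))) / (2 * Complex.I * k))) y := by
    intro y
    have := (((hd_e (-(Complex.I * k)) y).add ((hd_e (Complex.I * k) y).mul_const
      (Complex.exp (-(2 * Complex.I * k * x))))).neg.div_const 2)
    refine this.congr_deriv ?_
    field_simp
    rw [Complex.I_sq]
    ring
  have w := wronskian hq hu hEd hEd' x b
  have huc : Continuous u := hu.1.continuous
  simp only [neg_mul] at w
  have hx0 := hEq x
  simp only [sub_self, Complex.ofReal_zero, mul_zero, Complex.exp_zero, mul_one] at hx0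
  rw [hEq b, hx0] at w
  have e1 : Complex.exp (-(Complex.I * k * b)) * u b + (Complex.exp (-(Complex.I * k * b)) *
        (deriv u b - Complex.I * k * u b)) *
        ((1 - Complex.exp (Complex.I * (2 * k) * ((b - x : ℝ) : ℂ))) / (2 * Complex.I * k))
      - Complex.exp (-(Complex.I * k * x)) * u x =
      ∫ y in x..b, k ^ 2 * (qfun c y : ℂ) * u y * ((Complex.exp (-(Complex.I * k * y)) -
        Complex.exp (Complex.I * k * y) * Complex.exp (-(2 * Complex.I * k * x))) / (2 * Complex.I * k)) := by
    rw [← w]; field_simp; ring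
  rw [e1, ← intervalIntegral.integral_const_mul]
  apply intervalIntegral.norm_integral_le_of_norm_le hxb
  · filter_upwards with y hy
    have hy' : x ≤ y := hy.1.le
    rw [hEq y]
    have e2 : Complex.exp (-(Complex.I * k * y)) - Complex.exp (-(Complex.I * k * y)) *
        Complex.exp (Complex.I * (2 * k) * ((y - x : ℝ) : ℂ)) = Complex.exp (-(Complex.I * k * y)) *
        (1 - Complex.exp (Complex.I * (2 * k) * ((y - x : ℝ) : ℂ))) := by ring
    have e3 : ‖1 - Complex.exp (Complex.I * (2 * k) * ((y - x : ℝ) : ℂ))‖ ≤ 2 := by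
      refine (norm_sub_le _ _).trans ?_
      rw [norm_e, norm_one]
      have : Real.exp (-((y - x) * (2 * k).im)) ≤ 1 := by
        rw [Real.exp_le_one_iff]
        have : (2 * k).im = 2 * k.im := by simp
        rw [this]; nlinarith
      linarith
    rw [e2]
    simp only [norm_mul, norm_div, norm_pow, Complex.norm_real, Real.norm_eq_abs, Complex.norm_I]
    have hkp : 0 < ‖k‖ := norm_pos_iff.2 hk0
    rw [Complex.norm_ofNat]
    calc _ ≤ ‖k‖ ^ 2 * |qfun c y| * ‖u y‖ * (‖Complex.exp (-(Complex.I * k * y))‖ * 2 / (2 * 1 * ‖k‖)) := by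
          gcongr
      _ = _ := by field_simp
  · apply IntervalIntegrable.const_mul
    exact hq.abs.intervalIntegrable.mul_continuousOn (by fun_prop)

theorem jost_zero {c : ℝ → ℝ} {u : ℝ → ℂ} (hu : IsJostPlus c 0 u) : u = fun _ => 1 := by
  obtain ⟨⟨h1, h2⟩, h3⟩ := hu
  have hd := contDiff_one_iff_deriv.1 h1
  simp at h2 h3
  have hdc : ∀ b, deriv u b = deriv u 0 := fun b => h2 0 b
  have hform : ∀ a b : ℝ, u b - u a = (b - a) * deriv u 0 := by
    intro a b
    rw [← intervalIntegral.integral_deriv_eq_sub (fun x _ => hd.1 x) (hd.2.intervalIntegrable a b)]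
    simp [hdc]
  have hz : deriv u 0 = 0 := by
    have t : Tendsto (fun b => u (b + 1) - u b) atTop (𝓝 (1 - 1)) :=
      (h3.comp (tendsto_atTop_add_const_right _ 1 tendsto_id)).sub h3
    have t2 : Tendsto (fun b => u (b + 1) - u b) atTop (𝓝 (deriv u 0)) := by
      refine tendsto_const_nhds.congr fun b => ?_
      rw [hform]; simp
    simpa using tendsto_nhds_unique t2 t
  funext a
  have t2 : Tendsto u atTop (𝓝 (u a)) := by
    refine tendsto_const_nhds.congr fun b => ?_
    have := hform a b
    rw [hz, mul_zero, sub_eq_zero] at this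
    exact this.symm
  exact tendsto_nhds_unique t2 h3

theorem exp_ne_one_aux {k : ℂ} (hk0 : k ≠ 0) :
    1 - Complex.exp (Complex.I * (2 * k) * ((1 / ‖k‖ : ℝ) : ℂ)) ≠ 0 := by
  have hkp : 0 < ‖k‖ := norm_pos_iff.2 hk0
  intro h
  have h' : Complex.exp (Complex.I * (2 * k) * ((1 / ‖k‖ : ℝ) : ℂ)) = 1 := (sub_eq_zero.1 h).symm
  obtain ⟨n, hn⟩ := Complex.exp_eq_one_iff.1 h'
  have hnn := congrArg norm hn
  have l : ‖Complex.I * (2 * k) * ((1 / ‖k‖ : ℝ) : ℂ)‖ = 2 := by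
    rw [norm_mul, norm_mul, norm_mul, Complex.norm_real, Complex.norm_I, Complex.norm_ofNat,
      Real.norm_of_nonneg (by positivity)]
    field_simp
  have r : ‖(n : ℂ) * (2 * Real.pi * Complex.I)‖ = |(n : ℝ)| * (2 * Real.pi) := by
    simp [abs_of_pos Real.pi_pos]
  rw [l, r] at hnn
  have hpi := Real.pi_gt_three
  rcases eq_or_ne n 0 with h0 | h0
  · simp [h0] at hnn
  · have : (1 : ℝ) ≤ |(n : ℝ)| := by
      exact_mod_cast Int.one_le_abs h0
    nlinarith

theorem jost_integral {c : ℝ → ℝ} {k : ℂ} {u : ℝ → ℂ} (hq : Integrable (qfun c))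
    (hu : IsJostPlus c k u) (x : ℝ) :
    IntegrableOn (fun y : ℝ => |qfun c y| * ‖Complex.exp (-(Complex.I * k * y)) * u y‖) (Set.Ioi x) := by
  have huc : Continuous u := hu.1.1.continuous
  have hmc : Continuous (fun y : ℝ => Complex.exp (-(Complex.I * k * y)) * u y) := by fun_prop
  have hlim := hu.2.norm
  rw [norm_one] at hlim
  obtain ⟨Y, hY⟩ := eventually_atTop.1 (hlim.eventually_le_const (show (1 : ℝ) < 2 by norm_num))
  obtain ⟨C, hC⟩ := (isCompact_Icc (a := x) (b := Y)).exists_bound_of_continuousOn hmc.continuousOn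
  refine ((hq.abs.integrableOn (s := Set.Ioi x)).const_mul (max C 2)).mono'
    (hq.abs.aestronglyMeasurable.restrict.mul hmc.norm.aestronglyMeasurable) ?_
  rw [ae_restrict_iff' measurableSet_Ioi]
  filter_upwards with y hy
  have : ‖Complex.exp (-(Complex.I * k * y)) * u y‖ ≤ max C 2 := by
    rcases le_total y Y with h | h
    · exact (hC y ⟨le_of_lt hy, h⟩).trans (le_max_left _ _)
    · exact (hY y h).trans (le_max_right _ _)
  rw [Real.norm_of_nonneg (by positivity), mul_comm]
  gcongr

theorem jost_main {c : ℝ → ℝ} {k : ℂ} {u : ℝ → ℂ} (hk : 0 ≤ k.im) (hk0 : k ≠ 0)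
    (hq : Integrable (qfun c)) (hu : IsJostPlus c k u) (x : ℝ) :
    ‖1 - Complex.exp (-(Complex.I * k * x)) * u x‖ ≤
      ‖k‖ * ∫ y in Set.Ioi x, |qfun c y| * ‖Complex.exp (-(Complex.I * k * y)) * u y‖ ∧
    ‖deriv u x - Complex.I * k * u x‖ ≤ Real.exp (-(x * k.im)) * (‖k‖ ^ 2 *
      ∫ y in Set.Ioi x, |qfun c y| * ‖Complex.exp (-(Complex.I * k * y)) * u y‖) := by
  have hint := jost_integral hq hu
  have hlim := hu.2
  set m : ℝ → ℂ := fun y => Complex.exp (-(Complex.I * k * y)) * u y with hm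
  set g : ℝ → ℂ := fun y => Complex.exp (-(Complex.I * k * y)) * (deriv u y - Complex.I * k * u y) with hg
  set G : ℝ → ℝ := fun x => ∫ y in Set.Ioi x, |qfun c y| * ‖m y‖ with hG
  have hle : ∀ x b, x ≤ b → ∫ y in x..b, |qfun c y| * ‖m y‖ ≤ G x := by
    intro x b hxb
    rw [intervalIntegral.integral_of_le hxb]
    apply setIntegral_mono_set (hint x)
    · filter_upwards with y; positivity
    · exact Filter.Eventually.of_forall fun y hy => hy.1
  have hGlim : Tendsto G atTop (𝓝 0) := by
    have h1 := intervalIntegral_tendsto_integral_Ioi x (hint x) tendsto_id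
    have h2 := (tendsto_const_nhds (x := G x)).sub h1
    rw [sub_self] at h2
    refine h2.congr fun b => ?_
    have := intervalIntegral.integral_interval_add_Ioi (hint x) (hint b)
    simp only [hG, id] at this ⊢
    linarith
  have b1 : ∀ x b : ℝ, x ≤ b → ‖m b + g b *
        ((1 - Complex.exp (Complex.I * (2 * k) * ((b - x : ℝ) : ℂ))) / (2 * Complex.I * k))
      - m x‖ ≤ ‖k‖ * G x := fun x b hxb =>
    (bound1 hk hk0 hq hu.1 hxb).trans (mul_le_mul_of_nonneg_left (hle x b hxb) (norm_nonneg _))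
  have hglim : Tendsto g atTop (𝓝 0) := by
    set h : ℝ := 1 / ‖k‖
    set K : ℂ := (1 - Complex.exp (Complex.I * (2 * k) * (h : ℂ))) / (2 * Complex.I * k) with hK
    have hK0 : K ≠ 0 := div_ne_zero (exp_ne_one_aux hk0) (by simp [hk0])
    have hh : 0 ≤ h := by positivity
    have t0 : Tendsto (fun x => m (x + h) + g (x + h) * K - m x) atTop (𝓝 0) := by
      apply squeeze_zero_norm (a := fun x => ‖k‖ * G x)
      · intro x
        have := b1 x (x + h) (by linarith)
        rwa [add_sub_cancel_left] at this
      · simpa using hGlim.const_mul ‖k‖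
    have t1 : Tendsto (fun x => m (x + h)) atTop (𝓝 1) :=
      hlim.comp (tendsto_atTop_add_const_right _ h tendsto_id)
    have t2 := ((t0.sub t1).add hlim).mul_const K⁻¹
    have t3 : Tendsto (fun x => g (x + h)) atTop (𝓝 0) := by
      have e : (0 - 1 + 1) * K⁻¹ = 0 := by ring
      rw [e] at t2
      refine t2.congr fun x => ?_
      field_simp
      simp only [hm]
      ring
    have t4 := t3.comp (tendsto_atTop_add_const_right _ (-h) tendsto_id)
    refine t4.congr fun x => ?_
    simp
  have hgx : ∀ y : ℝ, Complex.exp (Complex.I * k * y) * g y = deriv u y - Complex.I * k * u y := by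
    intro y
    simp only [hg]
    rw [← mul_assoc, ← Complex.exp_add]; simp
  constructor
  · have t : Tendsto (fun b => m b + g b *
        ((1 - Complex.exp (Complex.I * (2 * k) * ((b - x : ℝ) : ℂ))) / (2 * Complex.I * k))
      - m x) atTop (𝓝 (1 + 0 - m x)) := by
      refine (hlim.add ?_).sub_const _
      apply squeeze_zero_norm' (a := fun b => ‖g b‖ * (2 / ‖2 * Complex.I * k‖))
      · filter_upwards [eventually_ge_atTop x] with b hb
        rw [norm_mul, norm_div]
        gcongr
        refine (norm_sub_le _ _).trans ?_
        rw [norm_e, norm_one]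
        have : Real.exp (-((b - x) * (2 * k).im)) ≤ 1 := by
          rw [Real.exp_le_one_iff]
          have : (2 * k).im = 2 * k.im := by simp
          rw [this]; nlinarith
        linarith
      · simpa using hglim.norm.mul_const (2 / ‖2 * Complex.I * k‖)
    rw [add_zero] at t
    refine le_of_tendsto t.norm ?_
    filter_upwards [eventually_ge_atTop x] with b hb using b1 x b hb
  · have t : Tendsto (fun b : ℝ => Complex.exp (Complex.I * k * b) * (deriv u b - Complex.I * k * u b)
      - Complex.exp (Complex.I * k * x) * (deriv u x - Complex.I * k * u x)) atTop
      (𝓝 (0 - Complex.exp (Complex.I * k * x) * (deriv u x - Complex.I * k * u x))) := by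
      refine Tendsto.sub_const ?_ _
      apply squeeze_zero_norm' (a := fun b => ‖g b‖)
      · filter_upwards [eventually_ge_atTop 0] with b hb
        rw [← hgx, norm_mul, norm_mul, norm_e]
        have : Real.exp (-(b * k.im)) ≤ 1 := by
          rw [Real.exp_le_one_iff]; nlinarith
        have h0 := Real.exp_pos (-(b * k.im))
        have h1 := norm_nonneg (g b)
        calc _ ≤ 1 * (1 * ‖g b‖) := by gcongr
          _ = _ := by ring
      · simpa using hglim.norm
    have t' : ‖0 - Complex.exp (Complex.I * k * x) * (deriv u x - Complex.I * k * u x)‖ ≤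
        ‖k‖ ^ 2 * Real.exp (-(2 * x * k.im)) * G x := by
      refine le_of_tendsto t.norm ?_
      filter_upwards [eventually_ge_atTop x] with b hb
      exact (bound2 hk hq hu.1 hb).trans (mul_le_mul_of_nonneg_left (hle x b hb) (by positivity))
    rw [zero_sub, norm_neg, norm_mul, norm_e] at t'
    have e : Real.exp (-(2 * x * k.im)) = Real.exp (-(x * k.im)) * Real.exp (-(x * k.im)) := by
      rw [← Real.exp_add]; ring_nf
    rw [e] at t'
    refine le_of_mul_le_mul_left ?_ (Real.exp_pos (-(x * k.im)))
    refine t'.trans (le_of_eq ?_)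
    ring

/-- The standard estimates for the Jost solution from `+∞`. -/
theorem jost_plus_estimates (c : ℝ → ℝ) (hmeas : Measurable c)
    (h1 : HypH1 c) (h2 : HypH2 c) (k : ℂ) (hk : 0 ≤ k.im)
    (u₁ : ℝ → ℂ) (hu : IsJostPlus c k u₁) :
    ∀ x : ℝ,
      ‖u₁ x - Complex.exp (Complex.I * k * (x : ℂ))‖ ≤
        ‖k‖ * jostGamma c x * Real.exp (‖k‖ * jostGamma c x - x * k.im) ∧
      ‖deriv u₁ x - Complex.I * k * u₁ x‖ ≤
        ‖k‖ ^ 2 * jostGamma c x * (1 + ‖k‖ * qL1 c * Real.exp (‖k‖ * qL1 c)) *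
          Real.exp (-(x * k.im)) := by
  intro x
  have hq := q_integrable c hmeas h1 h2
  have hγ0 : ∀ y, 0 ≤ jostGamma c y := fun y =>
    setIntegral_nonneg measurableSet_Ioi fun _ _ => abs_nonneg _
  have hq0 : 0 ≤ qL1 c := integral_nonneg fun _ => abs_nonneg _
  rcases eq_or_ne k 0 with rfl | hk0
  · have hu1 := jost_zero hu
    subst hu1
    simp
  have hm := jost_main hk hk0 hq hu
  have hint := jost_integral hq hu
  have hκ := norm_nonneg k
  have gr := gron (p := fun y => |qfun c y|)
    (f := fun y => ‖Complex.exp (-(Complex.I * k * y)) * u₁ y‖) (fun _ => abs_nonneg _)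
    (fun _ => hq.abs.integrableOn) hint hκ (fun y => by
      have h := (hm y).1
      have h3 := norm_sub_norm_le (Complex.exp (-(Complex.I * k * y)) * u₁ y) 1
      rw [norm_sub_rev, norm_one] at h3
      linarith)
  have hmle : ∀ y : ℝ, ‖Complex.exp (-(Complex.I * k * y)) * u₁ y‖ ≤ Real.exp (‖k‖ * jostGamma c y) := by
    intro y
    have h := (hm y).1
    have h3 := norm_sub_norm_le (Complex.exp (-(Complex.I * k * y)) * u₁ y) 1
    rw [norm_sub_rev, norm_one] at h3
    have := gr y
    unfold jostGamma
    linarith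
  have hγq : ∀ y, jostGamma c y ≤ qL1 c := fun y =>
    setIntegral_le_integral hq.abs (Filter.Eventually.of_forall fun _ => abs_nonneg _)
  have hGle : ∀ M : ℝ, (∀ y, x ≤ y → ‖Complex.exp (-(Complex.I * k * y)) * u₁ y‖ ≤ M) →
      ∫ y in Set.Ioi x, |qfun c y| * ‖Complex.exp (-(Complex.I * k * y)) * u₁ y‖ ≤
        jostGamma c x * M := by
    intro M hM
    unfold jostGamma
    rw [← integral_mul_const]
    refine setIntegral_mono_on (hint x) (hq.abs.integrableOn.mul_const M) measurableSet_Ioi ?_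
    intro y hy
    exact mul_le_mul_of_nonneg_left (hM y (le_of_lt hy)) (abs_nonneg _)
  have first : ∀ z : ℝ, ‖1 - Complex.exp (-(Complex.I * k * z)) * u₁ z‖ ≤
      ‖k‖ * (jostGamma c z * Real.exp (‖k‖ * jostGamma c z)) := by
    intro z
    refine (hm z).1.trans (mul_le_mul_of_nonneg_left ?_ hκ)
    unfold jostGamma
    rw [← integral_mul_const]
    refine setIntegral_mono_on (hint z) (hq.abs.integrableOn.mul_const _) measurableSet_Ioi ?_
    intro y hy
    refine mul_le_mul_of_nonneg_left ((hmle y).trans ?_) (abs_nonneg _)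
    apply Real.exp_le_exp.2
    refine mul_le_mul_of_nonneg_left ?_ hκ
    apply setIntegral_mono_set hq.abs.integrableOn
    · filter_upwards with y; positivity
    · exact Filter.Eventually.of_forall fun w hw => lt_trans hy hw
  constructor
  · have e : u₁ x - Complex.exp (Complex.I * k * x) =
        -(Complex.exp (Complex.I * k * x) * (1 - Complex.exp (-(Complex.I * k * x)) * u₁ x)) := by
      rw [mul_sub, ← mul_assoc, ← Complex.exp_add]; simp
    rw [e, norm_neg, norm_mul, norm_e, sub_eq_add_neg (‖k‖ * jostGamma c x), Real.exp_add]
    calc _ ≤ Real.exp (-(x * k.im)) * (‖k‖ * (jostGamma c x * Real.exp (‖k‖ * jostGamma c x))) :=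
          mul_le_mul_of_nonneg_left (first x) (Real.exp_pos _).le
      _ = _ := by ring
  · refine (hm x).2.trans ?_
    have hM := hGle (1 + ‖k‖ * qL1 c * Real.exp (‖k‖ * qL1 c)) (fun y _ => by
      have h3 := norm_sub_norm_le (Complex.exp (-(Complex.I * k * y)) * u₁ y) 1
      rw [norm_sub_rev, norm_one] at h3
      have h4 : ‖k‖ * (jostGamma c y * Real.exp (‖k‖ * jostGamma c y)) ≤
          ‖k‖ * (qL1 c * Real.exp (‖k‖ * qL1 c)) := by
        have := hγq y
        gcongr
      have := first y
      linarith)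
    calc _ ≤ Real.exp (-(x * k.im)) * (‖k‖ ^ 2 *
          (jostGamma c x * (1 + ‖k‖ * qL1 c * Real.exp (‖k‖ * qL1 c)))) := by gcongr
      _ = _ := by ring
end
end

section
/- Let c satisfy [H1] and [H2]. For each real k ≠ 0 let u₁(·,k), u₂(·,k) be the Jost solutions at k and let T(k), R₁(k), R₂(k) be the scattering coefficients, i.e., the unique complex numbers with T(k) ≠ 0 such that u₂(·,k) = (R₁(k)/T(k)) u₁(·,k) + (1/T(k)) conj(u₁(·,k)) and u₁(·,k) = (R₂(k)/T(k)) u₂(·,k) + (1/T(k)) conj(u₂(·,k)). Then there exists a constant C' > 0, independent of k, such that |R₂(k)| ≤ C'|k| for all real k ≠ 0, and lim_{k→0, k∈ℝ\{0}} R₂(k)/k = (1/(2i)) ∫_ℝ q(t) dt, where q = 1 − 1/c². -/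
open MeasureTheory Filter Topology

noncomputable section

lemma rk_ac_ofReal {g : ℝ → ℝ} {a b : ℝ} (hg : AbsolutelyContinuousOnInterval g a b) :
    AbsolutelyContinuousOnInterval (fun x => (g x : ℂ)) a b := by
  unfold AbsolutelyContinuousOnInterval at hg ⊢
  simpa [Complex.dist_eq, Real.dist_eq, ← Complex.ofReal_sub, Complex.norm_real] using hg

lemma rk_ac_integral {f : ℝ → ℂ} (hf : ∀ a b : ℝ, IntervalIntegrable f volume a b) (a b : ℝ) :
    AbsolutelyContinuousOnInterval (fun x => ∫ t in a..x, f t) a b := by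
  have hre : ∀ a b : ℝ, IntervalIntegrable (fun x => (f x).re) volume a b := fun a b =>
    ⟨(hf a b).1.re, (hf a b).2.re⟩
  have him : ∀ a b : ℝ, IntervalIntegrable (fun x => (f x).im) volume a b := fun a b =>
    ⟨(hf a b).1.im, (hf a b).2.im⟩
  have h1 := rk_ac_ofReal ((hre a b).absolutelyContinuousOnInterval_intervalIntegral
    (c := a) (by simp))
  have h2 := rk_ac_ofReal ((him a b).absolutelyContinuousOnInterval_intervalIntegral
    (c := a) (by simp))
  have h3 := h1.add (h2.const_smul Complex.I)
  suffices e : (fun x => ∫ t in a..x, f t) = ((fun x => ((∫ v in a..x, (f v).re : ℝ) : ℂ)) +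
      fun x => Complex.I • ((∫ v in a..x, (f v).im : ℝ) : ℂ)) by
    rw [e]; exact h3
  funext x
  simp only [Pi.add_apply, smul_eq_mul]
  rw [← intervalIntegral.integral_ofReal, ← intervalIntegral.integral_ofReal,
    ← intervalIntegral.integral_const_mul, ← intervalIntegral.integral_add]
  · congr 1
    funext t
    rw [mul_comm]
    exact (Complex.re_add_im (f t)).symm
  · exact ⟨(hre a x).1.ofReal, (hre a x).2.ofReal⟩
  · exact IntervalIntegrable.const_mul ⟨(him a x).1.ofReal, (him a x).2.ofReal⟩ _

lemma rk_inv_sq_le {c : ℝ → ℝ} (h1 : HypH1 c) :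
    ∃ K : ℝ, 0 ≤ K ∧ ∀ᵐ x : ℝ, ‖(1 / ((c x : ℂ) ^ 2))‖ ≤ K := by
  obtain ⟨c₀, hc₀, cM, hcM, h⟩ := h1
  refine ⟨1 / c₀ ^ 2, by positivity, ?_⟩
  filter_upwards [h] with x hx
  simp only [norm_div, norm_one, norm_pow, Complex.norm_real, Real.norm_eq_abs, sq_abs]
  have := hx.1
  gcongr

lemma rk_intble {c : ℝ → ℝ} (hm : Measurable c) (h1 : HypH1 c) {w : ℝ → ℂ} (hw : Continuous w)
    (a b : ℝ) : IntervalIntegrable (fun x => (1 / ((c x : ℂ) ^ 2)) * w x) volume a b := by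
  obtain ⟨K, hK, h⟩ := rk_inv_sq_le h1
  have hmc : Measurable fun x => (1 / ((c x : ℂ) ^ 2)) := by fun_prop
  have hb : IntervalIntegrable (fun x => (1 / ((c x : ℂ) ^ 2))) volume a b := by
    have : IntervalIntegrable (fun _ : ℝ => K) volume a b := intervalIntegrable_const
    refine this.mono_fun hmc.aestronglyMeasurable ?_
    refine ae_restrict_of_ae ?_
    filter_upwards [h] with x hx
    simpa [abs_of_nonneg hK] using hx
  exact hb.mul_continuousOn hw.continuousOn

lemma rk_q_eq (c : ℝ → ℝ) (x : ℝ) : ((qfun c x : ℝ) : ℂ) = 1 - 1 / ((c x : ℂ) ^ 2) := by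
  simp [qfun]

lemma rk_q_intble {c : ℝ → ℝ} (hm : Measurable c) (h1 : HypH1 c) (h2 : HypH2 c) :
    Integrable (fun x => ((qfun c x : ℝ) : ℂ)) := by
  have hmq : Measurable (qfun c) := by unfold qfun; fun_prop
  suffices hq : Integrable (qfun c) from hq.ofReal
  obtain ⟨c₀, hc₀, cM, hcM, h⟩ := h1
  obtain ⟨C, hC, δ, hδ, h'⟩ := h2
  have hj : Integrable (fun x : ℝ => ((1 : ℝ) + ‖x‖ ^ 2) ^ (-(1 + δ) / 2)) :=
    integrable_rpow_neg_one_add_norm_sq (by simp [hδ])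
  refine (hj.const_mul ((cM + 1) / c₀ ^ 2 * C)).mono' hmq.aestronglyMeasurable ?_
  filter_upwards [h, h'] with x hx hx'
  have hpos : 0 < c x := hc₀.trans hx.1
  have e : qfun c x = (c x + 1) / (c x) ^ 2 * (c x - 1) := by
    unfold qfun; field_simp; ring
  rw [e, norm_mul, Real.norm_eq_abs, Real.norm_eq_abs, abs_of_pos (by positivity), mul_assoc,
    Real.norm_eq_abs, sq_abs]
  have := hx.1; have := hx.2
  gcongr

lemma rk_key {c : ℝ → ℝ} (hm : Measurable c) (h1 : HypH1 c) {k : ℂ} {u : ℝ → ℂ}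
    (hu : SolvesHelmholtz c k u) {σ : ℂ} (hσ : σ ^ 2 = - k ^ 2) (a b : ℝ) :
    Complex.exp (-(σ * b)) * (deriv u b + σ * u b)
      - Complex.exp (-(σ * a)) * (deriv u a + σ * u a) =
    ∫ x in a..b, Complex.exp (-(σ * x)) * (k ^ 2 * (qfun c x : ℂ) * u x) := by
  obtain ⟨hC, hD⟩ := hu
  set f : ℝ → ℂ := fun x => -(k ^ 2 / ((c x : ℂ) ^ 2)) * u x with hf
  set h : ℝ → ℂ := fun x => Complex.exp (-(σ * x)) * (k ^ 2 * (qfun c x : ℂ) * u x) with hh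
  have hcu : Continuous u := hC.continuous
  have hfi : ∀ a b : ℝ, IntervalIntegrable f volume a b := by
    intro a b
    have := rk_intble hm h1 (w := fun x => -k ^ 2 * u x) (by fun_prop) a b
    convert this using 2
    simp only [hf]; ring
  have hhi : ∀ a b : ℝ, IntervalIntegrable h volume a b := by
    intro a b
    have e1 : Continuous fun x : ℝ => Complex.exp (-(σ * x)) * (k ^ 2 * u x) := by fun_prop
    have := (e1.intervalIntegrable (μ := volume) a b).sub (rk_intble hm h1 e1 a b)
    convert this using 2
    simp only [hh, rk_q_eq]; ring
  have hdu : AbsolutelyContinuousOnInterval (deriv u) a b := by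
    have e : deriv u = fun x => deriv u a + ∫ t in a..x, f t := by
      funext x; exact hD a x
    rw [e]
    have hc : AbsolutelyContinuousOnInterval (fun _ : ℝ => deriv u a) a b :=
      (contDiff_const.contDiffOn (𝕜 := ℝ)).absolutelyContinuousOnInterval
    exact hc.add (rk_ac_integral hfi a b)
  have hua : AbsolutelyContinuousOnInterval u a b := hC.contDiffOn.absolutelyContinuousOnInterval
  have hE : ∀ x : ℝ, HasDerivAt (fun x : ℝ => Complex.exp (-(σ * x)))
      (-σ * Complex.exp (-(σ * x))) x := by
    intro x
    have h0 : HasDerivAt (fun x : ℝ => -(σ * (x : ℂ))) (-(σ * 1)) x :=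
      ((Complex.ofRealCLM.hasDerivAt (x := x)).const_mul σ).neg
    convert h0.cexp using 1
    ring
  have hEc : ContDiff ℝ 1 (fun x : ℝ => Complex.exp (-(σ * x))) := by
    have : ContDiff ℝ 1 (fun x : ℝ => (x : ℂ)) := Complex.ofRealCLM.contDiff
    fun_prop
  have hEa : AbsolutelyContinuousOnInterval (fun x : ℝ => Complex.exp (-(σ * x))) a b :=
    hEc.contDiffOn.absolutelyContinuousOnInterval
  have hPa : AbsolutelyContinuousOnInterval
      (fun x : ℝ => Complex.exp (-(σ * x)) * (deriv u x + σ * u x)) a b :=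
    hEa.smul (hdu.add (hua.const_smul σ))
  have hga := hPa.sub (rk_ac_integral hhi a b)
  obtain ⟨K, hK⟩ := hga.const_of_ae_hasDerivAt_zero (by
    filter_upwards [(hfi a b).ae_hasDerivAt_integral, (hhi a b).ae_hasDerivAt_integral]
      with x hx1 hx2 hx
    have d1 : HasDerivAt (deriv u) (f x) x := by
      have e : deriv u = fun x => deriv u a + ∫ t in a..x, f t := by
        funext x; exact hD a x
      rw [e]
      exact (hx1 hx a (by simp)).const_add _
    have d2 := hx2 hx a (by simp)
    have d3 : HasDerivAt u (deriv u x) x :=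
      (hC.differentiable (by norm_num) x).hasDerivAt
    have d4 := ((hE x).mul (d1.add (d3.const_mul σ))).sub d2
    refine d4.congr_deriv ?_
    simp only [hf, hh, rk_q_eq, Pi.add_apply]
    linear_combination (-Complex.exp (-(σ * x)) * u x) * hσ)
  have ka := hK a (by simp)
  have kb := hK b (by simp)
  simp only [Pi.sub_apply, intervalIntegral.integral_same, sub_zero] at ka kb
  rw [ka, ← kb]; ring

lemma rk_norm_exp (k x : ℝ) : ‖Complex.exp (Complex.I * k * x)‖ = 1 := by
  have : Complex.I * k * x = ((k * x : ℝ) : ℂ) * Complex.I := by push_cast; ring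
  rw [this, Complex.norm_exp_ofReal_mul_I]

lemma rk_norm_exp_neg (k x : ℝ) : ‖Complex.exp (-(Complex.I * k * x))‖ = 1 := by
  have : -(Complex.I * k * x) = ((-(k * x) : ℝ) : ℂ) * Complex.I := by push_cast; ring
  rw [this, Complex.norm_exp_ofReal_mul_I]

lemma rk_exp_mul (k x : ℝ) :
    Complex.exp (Complex.I * k * x) * Complex.exp (-(Complex.I * k * x)) = 1 := by
  rw [← Complex.exp_add]; simp

lemma rk_indep {k : ℝ} (hk : k ≠ 0) {l : Filter ℝ} [l.NeBot]
    (hl : ∀ s : ℝ, Tendsto (fun x => x + s) l l) {a b : ℂ}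
    (h : Tendsto (fun x : ℝ => a * Complex.exp (Complex.I * k * x)
      + b * Complex.exp (-(Complex.I * k * x))) l (𝓝 0)) : a = 0 ∧ b = 0 := by
  have hkc : (k : ℂ) ≠ 0 := by exact_mod_cast hk
  have h' := h.comp (hl (Real.pi / 2 / k))
  have e1 : ∀ x : ℝ, Complex.exp (Complex.I * k * ((x + Real.pi / 2 / k : ℝ) : ℂ))
      = Complex.I * Complex.exp (Complex.I * k * x) := by
    intro x
    have : Complex.I * k * ((x + Real.pi / 2 / k : ℝ) : ℂ)
        = Real.pi / 2 * Complex.I + Complex.I * k * x := by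
      push_cast; field_simp; ring
    rw [this, Complex.exp_add, Complex.exp_pi_div_two_mul_I]
  have e2 : ∀ x : ℝ, Complex.exp (-(Complex.I * k * ((x + Real.pi / 2 / k : ℝ) : ℂ)))
      = -Complex.I * Complex.exp (-(Complex.I * k * x)) := by
    intro x
    rw [Complex.exp_neg, e1, mul_inv, Complex.inv_I, ← Complex.exp_neg]
  have h1 := h.sub (h'.const_mul Complex.I)
  have h2 := h.add (h'.const_mul Complex.I)
  have key : ∀ (z : ℂ) (E : ℝ → ℂ), (∀ x, ‖E x‖ = 1) →
      Tendsto (fun x => 2 * z * E x) l (𝓝 0) → z = 0 := by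
    intro z E hE ht
    have := ht.norm
    simp only [norm_mul, hE, mul_one, norm_zero] at this
    have := tendsto_nhds_unique this tendsto_const_nhds
    simpa using this.symm
  constructor
  · refine key a _ (rk_norm_exp k) ?_
    simp only [mul_zero, sub_zero] at h1
    refine h1.congr fun x => ?_
    simp only [Function.comp, e1, e2]
    linear_combination (a * Complex.exp (Complex.I * k * x)
      - b * Complex.exp (-(Complex.I * k * x))) * (-Complex.I_mul_I)
  · refine key b _ (rk_norm_exp_neg k) ?_
    simp only [mul_zero, add_zero] at h2
    refine h2.congr fun x => ?_
    simp only [Function.comp, e1, e2]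
    linear_combination (a * Complex.exp (Complex.I * k * x)
      - b * Complex.exp (-(Complex.I * k * x))) * (Complex.I_mul_I)

/-- Identification of the limits of the two first-order amplitudes. -/
lemma rk_lim {k : ℝ} (hk : k ≠ 0) {l : Filter ℝ} [l.NeBot]
    (hl : ∀ s : ℝ, Tendsto (fun x => x + s) l l) {u v : ℝ → ℂ} {p m α β : ℂ}
    (hp : Tendsto (fun x : ℝ => Complex.exp (-(Complex.I * k * x)) *
      (v x + Complex.I * k * u x)) l (𝓝 p))
    (hm : Tendsto (fun x : ℝ => Complex.exp (Complex.I * k * x) *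
      (v x - Complex.I * k * u x)) l (𝓝 m))
    (hu : Tendsto (fun x : ℝ => u x - (α * Complex.exp (Complex.I * k * x)
      + β * Complex.exp (-(Complex.I * k * x)))) l (𝓝 0)) :
    p = 2 * Complex.I * k * α ∧ m = -(2 * Complex.I * k * β) := by
  have hz : ∀ (E g : ℝ → ℂ), (∀ x, ‖E x‖ = 1) → Tendsto g l (𝓝 0) →
      Tendsto (fun x => E x * g x) l (𝓝 0) := by
    intro E g hE hg
    rw [tendsto_zero_iff_norm_tendsto_zero] at hg ⊢
    simpa [hE] using hg
  have h1 := hz _ _ (rk_norm_exp k) (by simpa using hp.sub_const p)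
  have h2 := hz _ _ (rk_norm_exp_neg k) (by simpa using hm.sub_const m)
  have h3 := (hu.const_mul (2 * Complex.I * k)).sub (h1.sub h2)
  simp only [mul_zero, sub_zero] at h3
  have h4 := rk_indep hk hl (a := p - 2 * Complex.I * k * α)
    (b := -(m + 2 * Complex.I * k * β)) (h3.congr fun x => by
      linear_combination (-2 * Complex.I * k * u x) * rk_exp_mul k x)
  constructor
  · linear_combination h4.1
  · linear_combination -h4.2

lemma rk_bdd {u : ℝ → ℂ} (hu : Continuous u) {M₁ M₂ : ℝ}
    (h1 : ∀ᶠ x in atTop, ‖u x‖ ≤ M₁) (h2 : ∀ᶠ x in atBot, ‖u x‖ ≤ M₂) :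
    ∃ M, ∀ x, ‖u x‖ ≤ M := by
  obtain ⟨b, hb⟩ := eventually_atTop.1 h1
  obtain ⟨a, ha⟩ := eventually_atBot.1 h2
  obtain ⟨M, hM⟩ := (isCompact_Icc (a := a) (b := b)).exists_bound_of_continuousOn
    hu.continuousOn
  refine ⟨max M (max M₁ M₂), fun x => ?_⟩
  rcases le_total b x with h | h
  · exact (hb x h).trans (by simp)
  rcases le_total x a with h' | h'
  · exact (ha x h').trans (by simp)
  · exact (hM x ⟨h', h⟩).trans (by simp)

/-- If `P b - P a = ∫ h` with `h` integrable, `P` has limits at both ends. -/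
lemma rk_limits {P h : ℝ → ℂ} (hh : Integrable h)
    (hP : ∀ a b : ℝ, P b - P a = ∫ x in a..b, h x) :
    ∃ p m : ℂ, Tendsto P atTop (𝓝 p) ∧ Tendsto P atBot (𝓝 m) ∧ p - m = ∫ x, h x ∧
      ∀ x, ‖P x - p‖ ≤ ∫ x, ‖h x‖ := by
  have t1 : ∀ a, Tendsto P atTop (𝓝 (P a + ∫ x in Set.Ioi a, h x)) := fun a => by
    refine ((intervalIntegral_tendsto_integral_Ioi a hh.integrableOn tendsto_id).const_add
      (P a)).congr fun b => ?_
    rw [id, ← hP a b]; ring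
  have t2 : Tendsto P atBot (𝓝 (P 0 - ∫ x in Set.Iic (0 : ℝ), h x)) := by
    refine ((intervalIntegral_tendsto_integral_Iic 0 hh.integrableOn tendsto_id).const_sub
      (P 0)).congr fun b => ?_
    rw [id, ← hP b 0]; ring
  refine ⟨_, _, t1 0, t2, ?_, fun x => ?_⟩
  · rw [← intervalIntegral.integral_Iic_add_Ioi (b := 0) hh.integrableOn hh.integrableOn]; ring
  · rw [tendsto_nhds_unique (t1 0) (t1 x), sub_add_cancel_left, norm_neg]
    refine (norm_integral_le_integral_norm _).trans ?_
    exact setIntegral_le_integral hh.norm (Eventually.of_forall fun _ => norm_nonneg _)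

/-- Integral representation of the scattering data. -/
lemma rk_data {c : ℝ → ℝ} (hm : Measurable c) (h1 : HypH1 c) (h2 : HypH2 c) {k : ℝ} (hk : k ≠ 0)
    {u : ℝ → ℂ} (hu : SolvesHelmholtz c k u) {t r : ℂ}
    (hT : Tendsto (fun x : ℝ => u x - Complex.exp (Complex.I * k * x)) atTop (𝓝 0))
    (hB : Tendsto (fun x : ℝ => u x - (t * Complex.exp (Complex.I * k * x)
      + r * Complex.exp (-(Complex.I * k * x)))) atBot (𝓝 0)) :
    (∃ M, ∀ x, ‖u x‖ ≤ M) ∧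
    (∀ M, (∀ x, ‖u x‖ ≤ M) → ∀ x : ℝ, ‖u x - Complex.exp (Complex.I * k * x)‖
      ≤ |k| * (∫ x, ‖((qfun c x : ℝ) : ℂ)‖) * M) ∧
    2 * Complex.I * k * (1 - t) =
      ∫ x : ℝ, Complex.exp (-(Complex.I * k * x)) * (k ^ 2 * (qfun c x : ℂ) * u x) ∧
    2 * Complex.I * k * r =
      ∫ x : ℝ, Complex.exp (Complex.I * k * x) * (k ^ 2 * (qfun c x : ℂ) * u x) := by
  have hkc : (k : ℂ) ≠ 0 := by exact_mod_cast hk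
  have hcu : Continuous u := hu.1.continuous
  have hbd : ∃ M, ∀ x, ‖u x‖ ≤ M := by
    refine rk_bdd hcu (M₁ := 1 + 1) (M₂ := 1 + (‖t‖ + ‖r‖)) ?_ ?_
    · filter_upwards [hT.norm.eventually_lt_const (u := 1) (by simp)] with x hx
      have := norm_add_le (u x - Complex.exp (Complex.I * k * x)) (Complex.exp (Complex.I * k * x))
      rw [sub_add_cancel, rk_norm_exp] at this
      linarith
    · filter_upwards [hB.norm.eventually_lt_const (u := 1) (by simp)] with x hx
      have := norm_add_le (u x - (t * Complex.exp (Complex.I * k * x)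
        + r * Complex.exp (-(Complex.I * k * x)))) (t * Complex.exp (Complex.I * k * x)
        + r * Complex.exp (-(Complex.I * k * x)))
      rw [sub_add_cancel] at this
      have h3 := norm_add_le (t * Complex.exp (Complex.I * k * x))
        (r * Complex.exp (-(Complex.I * k * x)))
      rw [norm_mul, norm_mul, rk_norm_exp, rk_norm_exp_neg] at h3
      linarith
  have hq := rk_q_intble hm h1 h2
  have hint : ∀ E : ℝ → ℂ, Continuous E → (∀ x, ‖E x‖ = 1) →
      Integrable (fun x : ℝ => E x * ((k : ℂ) ^ 2 * (qfun c x : ℂ) * u x)) ∧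
      ∀ M, (∀ x, ‖u x‖ ≤ M) → ∫ x, ‖E x * ((k : ℂ) ^ 2 * (qfun c x : ℂ) * u x)‖ ≤
        k ^ 2 * (∫ x, ‖((qfun c x : ℝ) : ℂ)‖) * M := by
    intro E hE hE1
    have hi : Integrable (fun x : ℝ => E x * ((k : ℂ) ^ 2 * (qfun c x : ℂ) * u x)) := by
      obtain ⟨M, hM⟩ := hbd
      have : Integrable (fun x : ℝ => (E x * (k : ℂ) ^ 2 * u x) * (qfun c x : ℂ)) := by
        refine hq.bdd_mul (c := k ^ 2 * M)
          (Continuous.aestronglyMeasurable (by fun_prop)) (Eventually.of_forall fun x => ?_)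
        rw [norm_mul, norm_mul, hE1]
        simp only [norm_pow, Complex.norm_real, Real.norm_eq_abs, sq_abs, one_mul]
        gcongr
        exact hM x
      refine this.congr (Eventually.of_forall fun x => ?_)
      ring
    refine ⟨hi, fun M hM => ?_⟩
    rw [mul_right_comm, ← integral_const_mul]
    refine integral_mono hi.norm (hq.norm.const_mul _) fun x => ?_
    simp only [norm_mul, hE1, norm_pow, Complex.norm_real, Real.norm_eq_abs, sq_abs, one_mul]
    rw [mul_right_comm]
    gcongr
    exact hM x
  have i1 := hint (fun x : ℝ => Complex.exp (-(Complex.I * k * x))) (by fun_prop)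
    (rk_norm_exp_neg k)
  have i2 := hint (fun x : ℝ => Complex.exp (Complex.I * k * x)) (by fun_prop)
    (rk_norm_exp k)
  obtain ⟨p, p', hp, hp', hpp, hpb⟩ := rk_limits (P := fun x : ℝ =>
    Complex.exp (-(Complex.I * k * x)) * (deriv u x + Complex.I * k * u x)) i1.1
    (fun a b => rk_key hm h1 hu (σ := Complex.I * k) (by rw [mul_pow, Complex.I_sq]; ring) a b)
  obtain ⟨m, m', hm, hm', hmm, hmb⟩ := rk_limits (P := fun x : ℝ =>
    Complex.exp (Complex.I * k * x) * (deriv u x - Complex.I * k * u x)) i2.1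
    (fun a b => by
      have := rk_key hm h1 hu (σ := -(Complex.I * k))
        (by rw [neg_sq, mul_pow, Complex.I_sq]; ring) a b
      simp only [neg_mul, neg_neg, ← sub_eq_add_neg] at this
      exact this)
  have ltop : ∀ s : ℝ, Tendsto (fun x => x + s) atTop atTop :=
    fun s => tendsto_atTop_add_const_right _ s tendsto_id
  have lbot : ∀ s : ℝ, Tendsto (fun x => x + s) atBot atBot :=
    fun s => tendsto_atBot_add_const_right _ s tendsto_id
  obtain ⟨a1, a2⟩ := rk_lim hk ltop hp hm (α := 1) (β := 0) (by simpa using hT)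
  obtain ⟨b1, b2⟩ := rk_lim hk lbot hp' hm' hB
  refine ⟨hbd, fun M hM x => ?_, ?_, ?_⟩
  · have hx1 := (hpb x).trans (i1.2 M hM)
    have hx2 := (hmb x).trans (i2.2 M hM)
    set A := Complex.exp (-(Complex.I * k * x)) * (deriv u x + Complex.I * k * u x) - p with hA
    set B := Complex.exp (Complex.I * k * x) * (deriv u x - Complex.I * k * u x) - m with hB'
    have e : (2 * Complex.I * k) * (u x - Complex.exp (Complex.I * k * x)) =
        Complex.exp (Complex.I * k * x) * A - Complex.exp (-(Complex.I * k * x)) * B := by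
      rw [hA, hB', a1, a2]
      linear_combination (-2 * Complex.I * k * u x) * rk_exp_mul k x
    have e2 := congrArg norm e
    have e3 := norm_sub_le (Complex.exp (Complex.I * k * x) * A)
      (Complex.exp (-(Complex.I * k * x)) * B)
    rw [← e2] at e3
    simp only [norm_mul, rk_norm_exp, rk_norm_exp_neg, one_mul, Complex.norm_I, mul_one,
      Complex.norm_real k, Real.norm_eq_abs, Complex.norm_ofNat] at e3
    have hk0 : 0 < |k| := abs_pos.2 hk
    rw [← sq_abs k] at hx1 hx2
    refine le_of_mul_le_mul_left ?_ (show 0 < 2 * |k| by positivity)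
    linarith
  · rw [← hpp, a1, b1]; ring
  · rw [← hmm, a2, b2]; ring

lemma rk_jost_plus {c : ℝ → ℝ} {k : ℝ} {u : ℝ → ℂ} (h : IsJostPlus c k u) :
    Tendsto (fun x : ℝ => u x - Complex.exp (Complex.I * k * x)) atTop (𝓝 0) := by
  have h1 := (h.2.sub_const 1).norm
  rw [tendsto_zero_iff_norm_tendsto_zero]
  simp only [sub_self, norm_zero] at h1
  refine h1.congr fun x => ?_
  rw [show u x - Complex.exp (Complex.I * k * x) = Complex.exp (Complex.I * k * x) *
    (Complex.exp (-(Complex.I * k * x)) * u x - 1) by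
      linear_combination (-u x) * rk_exp_mul k x, norm_mul, rk_norm_exp, one_mul]

lemma rk_jost_minus {c : ℝ → ℝ} {k : ℝ} {u : ℝ → ℂ} (h : IsJostMinus c k u) :
    Tendsto (fun x : ℝ => u x - Complex.exp (-(Complex.I * k * x))) atBot (𝓝 0) := by
  have h1 := (h.2.sub_const 1).norm
  rw [tendsto_zero_iff_norm_tendsto_zero]
  simp only [sub_self, norm_zero] at h1
  refine h1.congr fun x => ?_
  rw [show u x - Complex.exp (-(Complex.I * k * x)) = Complex.exp (-(Complex.I * k * x)) *
    (Complex.exp (Complex.I * k * x) * u x - 1) by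
      linear_combination (-u x) * rk_exp_mul k x, norm_mul, rk_norm_exp_neg, one_mul]

lemma rk_conj_exp (k x : ℝ) : (starRingEnd ℂ) (Complex.exp (Complex.I * k * x))
    = Complex.exp (-(Complex.I * k * x)) := by
  rw [← Complex.exp_conj]; simp

lemma rk_conj_exp_neg (k x : ℝ) : (starRingEnd ℂ) (Complex.exp (-(Complex.I * k * x)))
    = Complex.exp (Complex.I * k * x) := by
  rw [← Complex.exp_conj]; simp

lemma rk_conj_tendsto {g : ℝ → ℂ} {l : Filter ℝ} (h : Tendsto g l (𝓝 0)) :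
    Tendsto (fun x => (starRingEnd ℂ) (g x)) l (𝓝 0) := by
  rw [tendsto_zero_iff_norm_tendsto_zero] at h ⊢
  simpa using h

/-- Energy conservation, giving `|R₂| ≤ 1`. -/
lemma rk_R_le {k : ℝ} (hk : k ≠ 0) {u v : ℝ → ℂ} {T R₁ R₂ : ℂ} (hT : T ≠ 0)
    (hu : Tendsto (fun x : ℝ => u x - Complex.exp (Complex.I * k * x)) atTop (𝓝 0))
    (hr1 : ∀ x : ℝ, v x = (R₁ / T) * u x + (1 / T) * (starRingEnd ℂ) (u x))
    (hr2 : ∀ x : ℝ, u x = (R₂ / T) * v x + (1 / T) * (starRingEnd ℂ) (v x)) :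
    ‖R₂‖ ≤ 1 := by
  have ltop : ∀ s : ℝ, Tendsto (fun x => x + s) atTop atTop :=
    fun s => tendsto_atTop_add_const_right _ s tendsto_id
  have hc := rk_conj_tendsto hu
  set r₁ := R₁ / T with hr₁
  set r₂ := R₂ / T with hr₂
  set t := 1 / T with ht
  have h0 := ((hu.const_mul (r₂ * r₁ + t * (starRingEnd ℂ) t - 1)).add
    (hc.const_mul (r₂ * t + t * (starRingEnd ℂ) r₁))).neg
  simp only [mul_zero, add_zero, neg_zero] at h0
  obtain ⟨ha, hb⟩ := rk_indep hk ltop (a := r₂ * r₁ + t * (starRingEnd ℂ) t - 1)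
    (b := r₂ * t + t * (starRingEnd ℂ) r₁) (h0.congr fun x => by
    have e : u x = r₂ * (r₁ * u x + t * (starRingEnd ℂ) (u x)) +
        t * (starRingEnd ℂ) (r₁ * u x + t * (starRingEnd ℂ) (u x)) := by
      rw [← hr1 x]; exact hr2 x
    simp only [map_add, map_mul, Complex.conj_conj] at e
    simp only [map_sub, rk_conj_exp]
    linear_combination e)
  have ht0 : t ≠ 0 := one_div_ne_zero hT
  have hb' : r₁ = -(starRingEnd ℂ) r₂ := by
    have : (starRingEnd ℂ) r₁ = -r₂ := by
      refine mul_left_cancel₀ ht0 ?_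
      linear_combination hb
    rw [← Complex.conj_conj r₁, this, map_neg]
  rw [hb', mul_neg, Complex.mul_conj, Complex.mul_conj] at ha
  have hn : Complex.normSq t - Complex.normSq r₂ = 1 := by
    have : ((Complex.normSq t - Complex.normSq r₂ : ℝ) : ℂ) = 1 := by
      push_cast; linear_combination ha
    exact_mod_cast this
  rw [Complex.normSq_eq_norm_sq, Complex.normSq_eq_norm_sq] at hn
  have e : R₂ = r₂ / t := by rw [hr₂, ht]; field_simp
  rw [e, norm_div, div_le_one (norm_pos_iff.2 ht0)]
  refine le_of_sq_le_sq ?_ (norm_nonneg _)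
  linarith

/-- Small-`k` behaviour of the reflection coefficient: `|R₂(k)| ≤ C'|k|` and
`R₂(k)/k → (1/2i) ∫ q` as `k → 0`. -/
theorem reflection_small_k (c : ℝ → ℝ) (hmeas : Measurable c)
    (h1 : HypH1 c) (h2 : HypH2 c)
    (U₁ U₂ : ℝ → ℝ → ℂ) (T R₁ R₂ : ℝ → ℂ)
    (hU₁ : ∀ k : ℝ, k ≠ 0 → IsJostPlus c (k : ℂ) (U₁ k))
    (hU₂ : ∀ k : ℝ, k ≠ 0 → IsJostMinus c (k : ℂ) (U₂ k))
    (hT : ∀ k : ℝ, k ≠ 0 → T k ≠ 0)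
    (hrel₁ : ∀ k : ℝ, k ≠ 0 → ∀ x : ℝ,
      U₂ k x = (R₁ k / T k) * U₁ k x + (1 / T k) * (starRingEnd ℂ) (U₁ k x))
    (hrel₂ : ∀ k : ℝ, k ≠ 0 → ∀ x : ℝ,
      U₁ k x = (R₂ k / T k) * U₂ k x + (1 / T k) * (starRingEnd ℂ) (U₂ k x)) :
    (∃ C' > (0 : ℝ), ∀ k : ℝ, k ≠ 0 → ‖R₂ k‖ ≤ C' * |k|) ∧
    Tendsto (fun k : ℝ => R₂ k / (k : ℂ)) (𝓝[≠] (0 : ℝ))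
      (𝓝 ((1 / (2 * Complex.I)) * ∫ t : ℝ, ((qfun c t : ℝ) : ℂ))) := by
  set N : ℝ := ∫ x, ‖((qfun c x : ℝ) : ℂ)‖ with hN
  have hN0 : 0 ≤ N := integral_nonneg fun _ => norm_nonneg _
  have hq := rk_q_intble hmeas h1 h2
  have hR1 : ∀ k : ℝ, k ≠ 0 → ‖R₂ k‖ ≤ 1 := fun k hk =>
    rk_R_le hk (hT k hk) (rk_jost_plus (hU₁ k hk)) (hrel₁ k hk) (hrel₂ k hk)
  have hdata : ∀ k : ℝ, ∀ hk : k ≠ 0, _ := fun k hk =>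
    rk_data hmeas h1 h2 hk (hU₁ k hk).1 (t := 1 / T k) (r := R₂ k / T k)
      (rk_jost_plus (hU₁ k hk)) (by
        have hm := rk_jost_minus (hU₂ k hk)
        have h0 := (hm.const_mul (R₂ k / T k)).add ((rk_conj_tendsto hm).const_mul (1 / T k))
        simp only [mul_zero, add_zero] at h0
        refine h0.congr fun x => ?_
        rw [hrel₂ k hk x, map_sub, rk_conj_exp_neg]
        ring)
  have hsmall : ∀ k : ℝ, k ≠ 0 → |k| * N ≤ 1 / 2 → ∀ x, ‖U₁ k x‖ ≤ 2 := by
    intro k hk hkN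
    obtain ⟨⟨M, hM⟩, hest, -, -⟩ := hdata k hk
    have hbd : BddAbove (Set.range fun x => ‖U₁ k x‖) := ⟨M, by rintro _ ⟨x, rfl⟩; exact hM x⟩
    set S := ⨆ x, ‖U₁ k x‖ with hS
    have hle : ∀ x, ‖U₁ k x‖ ≤ S := fun x => le_ciSup hbd x
    have hS0 : 0 ≤ S := (norm_nonneg _).trans (hle 0)
    have hS1 : S ≤ 1 + |k| * N * S := by
      refine ciSup_le fun x => ?_
      have e1 := hest S hle x
      have e2 := norm_add_le (U₁ k x - Complex.exp (Complex.I * k * x))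
        (Complex.exp (Complex.I * k * x))
      rw [sub_add_cancel, rk_norm_exp] at e2
      linarith
    have hS2 : S ≤ 2 := by nlinarith
    exact fun x => (hle x).trans hS2
  have hev : ∀ᶠ k : ℝ in 𝓝[≠] (0 : ℝ), k ≠ 0 ∧ |k| * N ≤ 1 / 2 := by
    have t : Tendsto (fun k : ℝ => |k| * N) (𝓝[≠] 0) (𝓝 0) := by
      have : Continuous fun k : ℝ => |k| * N := by fun_prop
      simpa using (this.tendsto 0).mono_left nhdsWithin_le_nhds
    filter_upwards [t.eventually_le_const (u := 1 / 2) (by norm_num), self_mem_nhdsWithin]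
      with k hk hk0
    exact ⟨hk0, hk⟩
  have hklim : Tendsto (fun k : ℝ => |k| * N * 2) (𝓝[≠] (0 : ℝ)) (𝓝 0) := by
    have : Continuous fun k : ℝ => |k| * N * 2 := by fun_prop
    simpa using (this.tendsto 0).mono_left nhdsWithin_le_nhds
  have hexp : ∀ x : ℝ, Tendsto (fun k : ℝ => Complex.exp (Complex.I * k * x))
      (𝓝[≠] (0 : ℝ)) (𝓝 1) := fun x => by
    have : Continuous fun k : ℝ => Complex.exp (Complex.I * k * x) := by fun_prop
    simpa using (this.tendsto 0).mono_left nhdsWithin_le_nhds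
  have hU : ∀ x : ℝ, Tendsto (fun k : ℝ => U₁ k x) (𝓝[≠] (0 : ℝ)) (𝓝 1) := fun x => by
    have : Tendsto (fun k : ℝ => U₁ k x - Complex.exp (Complex.I * k * x)) (𝓝[≠] (0 : ℝ))
        (𝓝 0) := by
      refine squeeze_zero_norm' ?_ hklim
      filter_upwards [hev] with k hk
      exact (hdata k hk.1).2.1 2 (hsmall k hk.1 hk.2) x
    simpa using this.add (hexp x)
  -- dominated convergence for the two integrals
  have hmU : ∀ k : ℝ, k ≠ 0 → Continuous (U₁ k) := fun k hk => (hU₁ k hk).1.1.continuous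
  have hI : Tendsto (fun k : ℝ => ∫ x : ℝ, Complex.exp (Complex.I * k * x) *
      ((qfun c x : ℂ) * U₁ k x)) (𝓝[≠] (0 : ℝ)) (𝓝 (∫ x : ℝ, (qfun c x : ℂ))) := by
    refine tendsto_integral_filter_of_dominated_convergence
      (fun x => ‖((qfun c x : ℝ) : ℂ)‖ * 2) ?_ ?_ (hq.norm.mul_const 2) ?_
    · filter_upwards [hev] with k hk
      exact (Continuous.aestronglyMeasurable (by fun_prop)).mul
        (hq.aestronglyMeasurable.mul (hmU k hk.1).aestronglyMeasurable)
    · filter_upwards [hev] with k hk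
      refine Eventually.of_forall fun x => ?_
      rw [norm_mul, norm_mul, rk_norm_exp, one_mul]
      gcongr
      exact hsmall k hk.1 hk.2 x
    · refine Eventually.of_forall fun x => ?_
      simpa using (hexp x).mul ((hU x).const_mul (qfun c x : ℂ))
  have hr : Tendsto (fun k : ℝ => R₂ k / T k / k) (𝓝[≠] (0 : ℝ))
      (𝓝 ((1 / (2 * Complex.I)) * ∫ t : ℝ, ((qfun c t : ℝ) : ℂ))) := by
    refine (hI.const_mul (1 / (2 * Complex.I))).congr' ?_
    filter_upwards [hev] with k hk
    have hkc : (k : ℂ) ≠ 0 := by exact_mod_cast hk.1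
    have e := (hdata k hk.1).2.2.2
    have e2 : ∫ x : ℝ, Complex.exp (Complex.I * k * x) * (k ^ 2 * (qfun c x : ℂ) * U₁ k x)
        = k ^ 2 * ∫ x : ℝ, Complex.exp (Complex.I * k * x) * ((qfun c x : ℂ) * U₁ k x) := by
      rw [← integral_const_mul]
      congr 1; funext x; ring
    rw [e2] at e
    have hI0 := Complex.I_ne_zero
    rw [eq_div_iff hkc, one_div, inv_mul_eq_div, div_mul_eq_mul_div, div_eq_iff (by simp)]
    refine mul_left_cancel₀ hkc ?_
    linear_combination -e
  have ht : Tendsto (fun k : ℝ => 1 / T k) (𝓝[≠] (0 : ℝ)) (𝓝 1) := by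
    suffices h : Tendsto (fun k : ℝ => 1 - 1 / T k) (𝓝[≠] (0 : ℝ)) (𝓝 0) by
      simpa using h.const_sub 1
    refine squeeze_zero_norm' ?_ hklim
    filter_upwards [hev] with k hk
    have e := congrArg norm (hdata k hk.1).2.2.1
    have e2 : ‖∫ x : ℝ, Complex.exp (-(Complex.I * k * x)) * (k ^ 2 * (qfun c x : ℂ) * U₁ k x)‖
        ≤ ∫ x : ℝ, |k| ^ 2 * 2 * ‖((qfun c x : ℝ) : ℂ)‖ := by
      refine norm_integral_le_of_norm_le (hq.norm.const_mul _) (Eventually.of_forall fun x => ?_)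
      rw [norm_mul, norm_mul, norm_mul, rk_norm_exp_neg, one_mul, norm_pow,
        Complex.norm_real k, Real.norm_eq_abs, mul_right_comm]
      gcongr
      exact hsmall k hk.1 hk.2 x
    rw [← e, integral_const_mul, ← hN] at e2
    simp only [norm_mul, Complex.norm_I, mul_one, Complex.norm_real, Real.norm_eq_abs,
      Complex.norm_ofNat] at e2
    have hk0 : 0 < |k| := abs_pos.2 hk.1
    have e3 : ‖1 - 1 / T k‖ ≤ |k| * N := by
      refine le_of_mul_le_mul_left ?_ (show 0 < 2 * |k| by positivity)
      linarith
    have : 0 ≤ |k| * N := by positivity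
    linarith
  have hlim : Tendsto (fun k : ℝ => R₂ k / (k : ℂ)) (𝓝[≠] (0 : ℝ))
      (𝓝 ((1 / (2 * Complex.I)) * ∫ t : ℝ, ((qfun c t : ℝ) : ℂ))) := by
    have := hr.div ht one_ne_zero
    rw [div_one] at this
    refine this.congr' ?_
    filter_upwards [hev] with k hk
    have := hT k hk.1
    have hkc : (k : ℂ) ≠ 0 := by exact_mod_cast hk.1
    simp only [Pi.div_apply]
    field_simp
  refine ⟨?_, hlim⟩
  set L := (1 / (2 * Complex.I)) * ∫ t : ℝ, ((qfun c t : ℝ) : ℂ) with hL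
  have hb := hlim.norm.eventually_le_const (u := ‖L‖ + 1) (by linarith)
  rw [eventually_nhdsWithin_iff, Metric.eventually_nhds_iff] at hb
  obtain ⟨ε, hε, hb⟩ := hb
  refine ⟨(‖L‖ + 1) + 1 / ε, by positivity, fun k hk => ?_⟩
  have hk0 : 0 < |k| := abs_pos.2 hk
  by_cases hkε : |k| < ε
  · have := hb (y := k) (by simpa using hkε) hk
    rw [norm_div, Complex.norm_real, Real.norm_eq_abs, div_le_iff₀ hk0] at this
    have : 0 ≤ 1 / ε * |k| := by positivity
    linarith
  · have h3 := hR1 k hk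
    have h4 : 1 ≤ 1 / ε * |k| := by
      rw [one_div, inv_mul_eq_div, one_le_div hε]; linarith
    have : 0 ≤ (‖L‖ + 1) * |k| := by positivity
    linarith
end
end

section
/- Let c satisfy [H1] and [H2], let k ∈ ℝ, k ≠ 0, and let u₁ be the Jost solution from +∞ at k (which is nowhere vanishing). Then for every x ∈ ℝ, Re( u₁'(x) / (i k u₁(x)) ) = 1/|u₁(x)|². -/
open MeasureTheory Filter Topology

noncomputable section

lemma exists_bdd_coeff (c : ℝ → ℝ) (hmeas : Measurable c) (h1 : HypH1 c) (k : ℝ)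
    (u : ℝ → ℂ) (hu : SolvesHelmholtz c (k : ℂ) u) :
    ∃ (P : ℝ → ℝ) (K : ℝ), Measurable P ∧ 0 ≤ K ∧ (∀ x, |P x| ≤ K) ∧
      ∀ a b : ℝ, deriv u b = deriv u a + ∫ x in a..b, (P x : ℂ) * u x := by
  obtain ⟨c₀, hc₀, cM, -, hae⟩ := h1
  refine ⟨fun x => if c₀ < c x then -(k ^ 2 / c x ^ 2) else 0, k ^ 2 / c₀ ^ 2, ?_, by positivity,
    ?_, ?_⟩
  · exact Measurable.ite (measurableSet_lt measurable_const hmeas) (by fun_prop) measurable_const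
  · intro x
    dsimp only
    split_ifs with h
    · rw [abs_neg, abs_of_nonneg (by positivity)]
      gcongr
    · rw [abs_zero]; positivity
  · intro a b
    rw [hu.2 a b]
    congr 1
    apply intervalIntegral.integral_congr_ae
    filter_upwards [hae] with x hx _
    simp [hx.1]

lemma wronskian_hasDerivAt (P : ℝ → ℝ) (K : ℝ) (hP : Measurable P) (hK : ∀ x, |P x| ≤ K)
    (u : ℝ → ℂ) (hu : ContDiff ℝ 1 u)
    (he : ∀ a b : ℝ, deriv u b = deriv u a + ∫ x in a..b, (P x : ℂ) * u x) (t : ℝ) :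
    HasDerivAt (fun s => ((starRingEnd ℂ) (u s) * deriv u s).im) 0 t := by
  have hcu : Continuous u := hu.continuous
  have hcd : Continuous (deriv u) := hu.continuous_deriv le_rfl
  have hd : ∀ x, HasDerivAt u (deriv u x) x := fun x =>
    (hu.differentiable one_ne_zero x).hasDerivAt
  have hPi : ∀ a b : ℝ, IntervalIntegrable (fun x => (P x : ℂ)) volume a b := by
    intro a b
    rw [intervalIntegrable_iff]
    refine Measure.integrableOn_of_bounded (M := K) (by simp) (by fun_prop) ?_
    refine Eventually.of_forall fun x => ?_
    simpa using hK x
  have hGi : ∀ a b : ℝ, IntervalIntegrable (fun x => (P x : ℂ) * (u x - u t)) volume a b :=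
    fun a b => (hPi a b).mul_continuousOn (by fun_prop)
  have hE : HasDerivAt (fun s => ∫ x in t..s, (P x : ℂ) * (u x - u t)) 0 t := by
    have hca : ContinuousAt (fun x => (P x : ℂ) * (u x - u t)) t := by
      have h0 : Tendsto (fun x => K * ‖u x - u t‖) (𝓝 t) (𝓝 0) := by
        have : Continuous (fun x => K * ‖u x - u t‖) := by fun_prop
        simpa using this.tendsto t
      rw [ContinuousAt, sub_self, mul_zero]
      refine squeeze_zero_norm (fun x => ?_) h0
      rw [norm_mul, Complex.norm_real, Real.norm_eq_abs]
      gcongr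
      exact hK x
    have := intervalIntegral.integral_hasDerivAt_right (hGi t t)
      (Measurable.stronglyMeasurable (by fun_prop)).stronglyMeasurableAtFilter hca
    simpa using this
  have hF : HasDerivAt (fun s => (starRingEnd ℂ) (u s - u t) * deriv u s)
      ((starRingEnd ℂ) (deriv u t) * deriv u t) t := by
    rw [hasDerivAt_iff_tendsto_slope]
    have h1 := (hasDerivAt_iff_tendsto_slope.1 (hd t))
    have h2 : Tendsto (fun s => (starRingEnd ℂ) (slope u t s) * deriv u s) (𝓝[≠] t)
        (𝓝 ((starRingEnd ℂ) (deriv u t) * deriv u t)) :=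
      ((Complex.continuous_conj.tendsto _).comp h1).mul
        ((hcd.tendsto t).mono_left nhdsWithin_le_nhds)
    refine h2.congr fun s => ?_
    simp [slope_def_module, Complex.conj_ofReal, mul_assoc]
  have hsum : HasDerivAt (fun s => (starRingEnd ℂ) (u t) * (∫ x in t..s, (P x : ℂ) * (u x - u t))
      + (starRingEnd ℂ) (u s - u t) * deriv u s)
      ((starRingEnd ℂ) (u t) * 0 + (starRingEnd ℂ) (deriv u t) * deriv u t) t :=
    (hE.const_mul _).add hF
  have him := (Complex.imCLM.hasFDerivAt.comp_hasDerivAt t hsum).add_const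
    ((starRingEnd ℂ) (u t) * deriv u t).im
  have hfun : ∀ s, ((starRingEnd ℂ) (u s) * deriv u s).im =
      ((starRingEnd ℂ) (u t) * (∫ x in t..s, (P x : ℂ) * (u x - u t))
      + (starRingEnd ℂ) (u s - u t) * deriv u s).im + ((starRingEnd ℂ) (u t) * deriv u t).im := by
    intro s
    have e1 : (∫ x in t..s, (P x : ℂ) * u x) =
        (∫ x in t..s, (P x : ℂ) * (u x - u t)) + ((∫ x in t..s, P x : ℝ) : ℂ) * u t := by
      rw [← intervalIntegral.integral_ofReal, ← intervalIntegral.integral_mul_const,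
        ← intervalIntegral.integral_add (hGi t s) ((hPi t s).mul_const _)]
      congr 1; funext x; ring
    have e2 : deriv u s = deriv u t + ((∫ x in t..s, (P x : ℂ) * (u x - u t))
        + ((∫ x in t..s, P x : ℝ) : ℂ) * u t) := by rw [he t s, e1]
    generalize (∫ x in t..s, (P x : ℂ) * (u x - u t)) = E at *
    generalize (∫ x in t..s, P x : ℝ) = r at *
    rw [e2]
    simp
    ring
  have hval : Complex.imCLM ((starRingEnd ℂ) (u t) * 0 + (starRingEnd ℂ) (deriv u t) * deriv u t)
      = 0 := by
    simp
    ring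
  rw [hval] at him
  rw [funext hfun]
  exact him

lemma taylor_bound (P : ℝ → ℝ) (K : ℝ) (hK0 : 0 ≤ K) (hK : ∀ x, |P x| ≤ K)
    (u : ℝ → ℂ) (hu : ContDiff ℝ 1 u)
    (he : ∀ a b : ℝ, deriv u b = deriv u a + ∫ x in a..b, (P x : ℂ) * u x)
    (x h : ℝ) (hh : 0 ≤ h) (hb : ∀ y, x ≤ y → ‖u y‖ ≤ 2) :
    ‖u (x + h) - u x - h * deriv u x‖ ≤ K * 2 * h * h := by
  have hd : ∀ x, HasDerivAt u (deriv u x) x := fun x =>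
    (hu.differentiable one_ne_zero x).hasDerivAt
  have hb' : ∀ y ∈ Set.Ico x (x + h), ‖deriv u y - deriv u x‖ ≤ K * 2 * h := by
    intro y hy
    rw [he x y, add_sub_cancel_left]
    have := intervalIntegral.norm_integral_le_of_norm_le_const (a := x) (b := y) (C := K * 2)
      (f := fun z => (P z : ℂ) * u z) (fun z hz => by
        rw [Set.uIoc_of_le hy.1] at hz
        rw [norm_mul, Complex.norm_real, Real.norm_eq_abs]
        exact mul_le_mul (hK z) (hb z hz.1.le) (norm_nonneg _) hK0)
    refine this.trans ?_
    rw [abs_of_nonneg (by linarith [hy.1])]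
    gcongr
    linarith [hy.2]
  have hg : ∀ y, HasDerivAt (fun y => u y - (y : ℂ) * deriv u x) (deriv u y - deriv u x) y := by
    intro y
    have h2 : HasDerivAt (fun y : ℝ => (y : ℂ) * deriv u x) (1 * deriv u x) y :=
      (Complex.ofRealCLM.hasDerivAt (x := y)).mul_const (deriv u x)
    rw [one_mul] at h2
    exact (hd y).sub h2
  have := norm_image_sub_le_of_norm_deriv_le_segment' (fun y _ => (hg y).hasDerivWithinAt) hb'
    (x + h) ⟨by linarith, le_rfl⟩
  have e1 : u (x + h) - u x - h * deriv u x =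
      u (x + h) - ((x + h : ℝ) : ℂ) * deriv u x - (u x - (x : ℂ) * deriv u x) := by
    push_cast; ring
  rw [e1]
  refine this.trans (le_of_eq ?_)
  ring

lemma wronskian_eq (P : ℝ → ℝ) (K : ℝ) (hP : Measurable P) (hK0 : 0 ≤ K) (hK : ∀ x, |P x| ≤ K)
    (u : ℝ → ℂ) (hu : ContDiff ℝ 1 u) (k : ℝ)
    (he : ∀ a b : ℝ, deriv u b = deriv u a + ∫ x in a..b, (P x : ℂ) * u x)
    (hlim : Tendsto (fun x : ℝ => Complex.exp (-(Complex.I * k * (x : ℂ))) * u x) atTop (𝓝 1))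
    (x : ℝ) : ((starRingEnd ℂ) (u x) * deriv u x).im = k := by
  have hconst : ∀ y, ((starRingEnd ℂ) (u y) * deriv u y).im
      = ((starRingEnd ℂ) (u x) * deriv u x).im := fun y =>
    is_const_of_deriv_eq_zero
      (fun t => (wronskian_hasDerivAt P K hP hK u hu he t).differentiableAt)
      (fun t => (wronskian_hasDerivAt P K hP hK u hu he t).deriv) y x
  set W := ((starRingEnd ℂ) (u x) * deriv u x).im with hW
  have hnexp : ∀ y : ℝ, ‖Complex.exp (-(Complex.I * k * (y : ℂ)))‖ = 1 := by
    intro y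
    rw [Complex.norm_exp]
    simp
  have hev : ∀ᶠ y in atTop, ‖u y‖ ≤ 2 := by
    have h2 : Tendsto (fun y => ‖u y‖) atTop (𝓝 1) := by
      have := hlim.norm
      simpa only [norm_mul, hnexp, one_mul, norm_one] using this
    exact (h2.eventually_lt_const one_lt_two).mono fun y hy => hy.le
  obtain ⟨R, hR⟩ := eventually_atTop.1 hev
  have key : ∀ h : ℝ, 0 ≤ h → |Real.sin (k * h) - h * W| ≤ 2 * (K * 2 * h * h) := by
    intro h hh
    have l1 : Tendsto (fun y : ℝ => (starRingEnd ℂ) (u y) * u (y + h)) atTop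
        (𝓝 (Complex.exp (Complex.I * k * h))) := by
      have a1 := (Complex.continuous_conj.tendsto _).comp hlim
      have a2 := hlim.comp (tendsto_atTop_add_const_right atTop h tendsto_id)
      have a3 := (a1.mul a2).const_mul (Complex.exp (Complex.I * k * h))
      simp only [map_one, mul_one] at a3
      refine a3.congr fun y => ?_
      simp only [Function.comp, map_mul, ← Complex.exp_conj, id]
      have : Complex.exp (Complex.I * k * h) *
          (Complex.exp ((starRingEnd ℂ) (-(Complex.I * k * (y : ℂ)))) *
            Complex.exp (-(Complex.I * k * ((y + h : ℝ) : ℂ)))) = 1 := by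
        rw [← Complex.exp_add, ← Complex.exp_add, Complex.exp_eq_one_iff]
        refine ⟨0, ?_⟩
        simp
        ring
      linear_combination ((starRingEnd ℂ) (u y) * u (y + h)) * this
    have l2 : Tendsto (fun y : ℝ => |((starRingEnd ℂ) (u y) * u (y + h)).im - h * W|) atTop
        (𝓝 |Real.sin (k * h) - h * W|) := by
      have b := (Complex.continuous_im.tendsto _).comp l1
      have e : (Complex.exp (Complex.I * k * h)).im = Real.sin (k * h) := by
        rw [Complex.exp_im]; simp
      rw [e] at b
      exact (b.sub_const _).abs
    refine le_of_tendsto l2 ?_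
    filter_upwards [eventually_ge_atTop R] with y hy
    have ht := taylor_bound P K hK0 hK u hu he y h hh (fun z hz => hR z (hy.trans hz))
    have e : ((starRingEnd ℂ) (u y) * u (y + h)).im - h * W =
        ((starRingEnd ℂ) (u y) * (u (y + h) - u y - h * deriv u y)).im := by
      rw [← hconst y]
      simp
      ring
    rw [e]
    refine (Complex.abs_im_le_norm _).trans ?_
    rw [norm_mul, RCLike.norm_conj]
    exact mul_le_mul (hR y hy) ht (norm_nonneg _) (by norm_num)
  have hs : HasDerivAt (fun h : ℝ => Real.sin (k * h) - h * W) (k - W) 0 := by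
    have h1 : HasDerivAt (fun h : ℝ => Real.sin (k * h)) k 0 := by
      simpa using ((hasDerivAt_id (0 : ℝ)).const_mul k).sin
    have h2 : HasDerivAt (fun h : ℝ => h * W) W 0 := by
      simpa using (hasDerivAt_id (0 : ℝ)).mul_const W
    exact h1.sub h2
  have hsl := (hasDerivAt_iff_tendsto_slope.1 hs).mono_left
    (nhdsWithin_mono (0 : ℝ) (fun y (hy : 0 < y) => hy.ne') : 𝓝[>] (0 : ℝ) ≤ _)
  have hz : Tendsto (fun h : ℝ => K * 4 * h) (𝓝[>] 0) (𝓝 0) := by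
    have : Continuous (fun h : ℝ => K * 4 * h) := by fun_prop
    simpa using (this.tendsto 0).mono_left nhdsWithin_le_nhds
  have h0 := squeeze_zero_norm' (f := slope (fun h : ℝ => Real.sin (k * h) - h * W) 0) (by
    filter_upwards [self_mem_nhdsWithin] with h (hh : 0 < h)
    rw [slope_def_field]
    simp only [mul_zero, Real.sin_zero, zero_mul, sub_zero, norm_div, Real.norm_eq_abs]
    rw [abs_of_pos hh, div_le_iff₀ hh]
    linarith [key h hh.le]) hz
  linarith [tendsto_nhds_unique hsl h0]

/-- For real `k ≠ 0`, `Re(u₁'/(ik u₁)) = 1/|u₁|²`. -/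
theorem re_w_eq_inv_norm_sq (c : ℝ → ℝ) (hmeas : Measurable c)
    (h1 : HypH1 c) (h2 : HypH2 c) (k : ℝ) (hk : k ≠ 0)
    (u₁ : ℝ → ℂ) (hu : IsJostPlus c (k : ℂ) u₁) (hne : ∀ x : ℝ, u₁ x ≠ 0) :
    ∀ x : ℝ, (deriv u₁ x / (Complex.I * (k : ℂ) * u₁ x)).re = 1 / ‖u₁ x‖ ^ 2 := by
  intro x
  obtain ⟨P, K, hP, hK0, hK, he⟩ := exists_bdd_coeff c hmeas h1 k u₁ hu.1
  have hW := wronskian_eq P K hP hK0 hK u₁ hu.1.1 k he hu.2 x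
  have hx := hne x
  have hn : ‖u₁ x‖ ^ 2 ≠ 0 := by positivity
  have hcc : (starRingEnd ℂ) (u₁ x) * u₁ x = ((‖u₁ x‖ ^ 2 : ℝ) : ℂ) := by
    rw [mul_comm, Complex.mul_conj, Complex.normSq_eq_norm_sq]
  have hc0 : (starRingEnd ℂ) (u₁ x) ≠ 0 := by simpa using hx
  have hkc : (k : ℂ) ≠ 0 := by exact_mod_cast hk
  have e : deriv u₁ x / (Complex.I * (k : ℂ) * u₁ x) =
      (-Complex.I * ((starRingEnd ℂ) (u₁ x) * deriv u₁ x)) / ((k * ‖u₁ x‖ ^ 2 : ℝ) : ℂ) := by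
    rw [Complex.ofReal_mul, ← hcc]
    field_simp
    simp
  rw [e, Complex.div_ofReal_re]
  have : (-Complex.I * ((starRingEnd ℂ) (u₁ x) * deriv u₁ x)).re = k := by
    rw [← hW, neg_mul, Complex.neg_re, Complex.I_mul_re, neg_neg]
  rw [this]
  field_simp
end
end

section
/- Let c satisfy [H1] and [H2] and fix x ∈ ℝ. Suppose U₁, U₂ : ℝ × {k ∈ ℂ : Im k ≥ 0} → ℂ are such that for each k with Im k ≥ 0, U₁(·,k) is the Jost solution from +∞ at k and U₂(·,k) is the Jost solution from −∞ at k (both nowhere vanishing), and for each fixed x the maps k ↦ U₁(x,k), ∂ₓU₁(x,k), U₂(x,k), ∂ₓU₂(x,k) are holomorphic on {Im k > 0} and continuous on {Im k ≥ 0}. For k ≠ 0 with Im k ≥ 0 set w(x,k) = ∂ₓU₁(x,k)/(i k U₁(x,k)) and w₋(x,k) = −∂ₓU₂(x,k)/(i k U₂(x,k)). Then the function ℝ ∋ k ↦ (1/(1+k²)) · Re( 1/(w(x,k) + w₋(x,k)) ) is Lebesgue integrable on ℝ. -/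
open MeasureTheory Filter Topology

noncomputable section

/-- Regularity in `k` of a family of solutions: holomorphy on the open upper half-plane
and continuity up to the real axis, for the solution and its `x`-derivative. -/
def JostFamilyRegular (U : ℂ → ℝ → ℂ) : Prop :=
  ∀ y : ℝ,
    DifferentiableOn ℂ (fun k => U k y) {k : ℂ | 0 < k.im} ∧
    ContinuousOn (fun k => U k y) {k : ℂ | 0 ≤ k.im} ∧
    DifferentiableOn ℂ (fun k => deriv (U k) y) {k : ℂ | 0 < k.im} ∧
    ContinuousOn (fun k => deriv (U k) y) {k : ℂ | 0 ≤ k.im}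


lemma helm_deriv_lip {c : ℝ → ℝ} {c₀ : ℝ} (hc₀ : 0 < c₀) (hc : ∀ᵐ x : ℝ, c₀ < c x)
    {k : ℂ} {u : ℝ → ℂ} (hu : SolvesHelmholtz c k u) {a b B : ℝ}
    (hB : ∀ x ∈ Set.uIcc a b, ‖u x‖ ≤ B) :
    ‖deriv u b - deriv u a‖ ≤ ‖k‖ ^ 2 / c₀ ^ 2 * B * |b - a| := by
  rw [hu.2 a b, add_sub_cancel_left]
  refine intervalIntegral.norm_integral_le_of_norm_le_const_ae ?_
  filter_upwards [hc] with x hx hxm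
  have h1 := hB x (Set.uIoc_subset_uIcc hxm)
  have h0 : 0 ≤ ‖u x‖ := norm_nonneg _
  rw [norm_mul, norm_neg, norm_div, norm_pow, norm_pow, Complex.norm_real, Real.norm_eq_abs,
    sq_abs]
  gcongr

lemma helm_locInt {c : ℝ → ℝ} (hm : Measurable c) {c₀ : ℝ} (hc₀ : 0 < c₀)
    (hc : ∀ᵐ x : ℝ, c₀ < c x) {k : ℂ} {u : ℝ → ℂ} (hu : Continuous u) :
    LocallyIntegrable (fun x => -(k ^ 2 / ((c x : ℂ) ^ 2)) * u x) volume := by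
  have h1 : LocallyIntegrable (fun x => ((‖k‖ ^ 2 / c₀ ^ 2 : ℝ) : ℂ) * u x) volume :=
    (continuous_const.mul hu).locallyIntegrable
  refine h1.mono ?_ ?_
  · apply Measurable.aestronglyMeasurable
    have := hu.measurable
    fun_prop
  · filter_upwards [hc] with x hx
    rw [norm_mul, norm_mul, norm_neg, norm_div, norm_pow, norm_pow, Complex.norm_real,
      Complex.norm_real, Real.norm_eq_abs, Real.norm_eq_abs, sq_abs]
    have : |‖k‖ ^ 2 / c₀ ^ 2| = ‖k‖ ^ 2 / c₀ ^ 2 := abs_of_nonneg (by positivity)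
    rw [this]
    gcongr

/-- Fundamental theorem for `Re (α * conj u * u')`. -/
lemma helm_energy {c : ℝ → ℝ} (hm : Measurable c) {c₀ : ℝ} (hc₀ : 0 < c₀)
    (hc : ∀ᵐ x : ℝ, c₀ < c x) {k : ℂ} {u : ℝ → ℂ} (hu : SolvesHelmholtz c k u) (α : ℂ)
    (a b : ℝ) :
    ∃ g : ℝ → ℝ, IntervalIntegrable g volume a b ∧
      (∀ᵐ x, x ∈ Set.uIcc a b → g x = ‖deriv u x‖ ^ 2 * α.re
        - ‖u x‖ ^ 2 / (c x) ^ 2 * (α * k ^ 2).re) ∧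
      ∫ x in a..b, g x = (α * ((starRingEnd ℂ) (u b) * deriv u b)).re
        - (α * ((starRingEnd ℂ) (u a) * deriv u a)).re := by
  have hcont : Continuous u := hu.1.continuous
  have hd : ∀ x, HasDerivAt u (deriv u x) x := fun x =>
    (hu.1.differentiable one_ne_zero x).hasDerivAt
  obtain ⟨B, hB⟩ := (isCompact_uIcc (a := a) (b := b)).exists_bound_of_continuousOn
    hcont.continuousOn
  have hB0 : 0 ≤ B := (norm_nonneg _).trans (hB a Set.left_mem_uIcc)
  have hK : 0 ≤ ‖k‖ ^ 2 / c₀ ^ 2 * B := by positivity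
  have hlip : LipschitzOnWith ⟨_, hK⟩ (deriv u) (Set.uIcc a b) := by
    refine LipschitzOnWith.of_dist_le_mul fun x hx y hy => ?_
    rw [dist_eq_norm, dist_eq_norm, Real.norm_eq_abs]
    exact helm_deriv_lip hc₀ hc hu fun z hz => hB z (Set.uIcc_subset_uIcc hy hx hz)
  have hac1 := hlip.absolutelyContinuousOnInterval
  have hconj : LipschitzWith 1 (starRingEnd ℂ) := by
    refine LipschitzWith.of_dist_le_mul fun x y => ?_
    simp [dist_eq_norm, ← map_sub]
  have hac2 : AbsolutelyContinuousOnInterval (fun x => (starRingEnd ℂ) (u x)) a b := by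
    obtain ⟨K, hK⟩ := hu.1.contDiffOn.exists_lipschitzOnWith (s := Set.uIcc a b) (by decide)
      (convex_Icc _ _) isCompact_uIcc
    exact (hconj.comp_lipschitzOnWith hK).absolutelyContinuousOnInterval
  have hac3 : AbsolutelyContinuousOnInterval
      (fun x => α * ((starRingEnd ℂ) (u x) * deriv u x)) a b :=
    (hac2.fun_smul hac1).const_smul α
  have hac : AbsolutelyContinuousOnInterval
      (fun x => (α * ((starRingEnd ℂ) (u x) * deriv u x)).re) a b := by
    unfold AbsolutelyContinuousOnInterval at hac3 ⊢
    refine squeeze_zero (fun t ↦ Finset.sum_nonneg (fun i hi ↦ dist_nonneg)) (fun t ↦ ?_) hac3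
    refine Finset.sum_le_sum fun i hi => ?_
    rw [dist_eq_norm, dist_eq_norm, ← Complex.sub_re]
    exact Complex.abs_re_le_norm _
  refine ⟨_, hac.intervalIntegrable_deriv, ?_, hac.integral_deriv_eq_sub⟩
  filter_upwards [LocallyIntegrable.ae_hasDerivAt_integral (helm_locInt hm hc₀ hc (k := k) hcont)] with x hx _
  have h2 : HasDerivAt (deriv u) (-(k ^ 2 / ((c x : ℂ) ^ 2)) * u x) x := by
    have := (hx a).const_add (deriv u a)
    exact this.congr_of_eventuallyEq (Eventually.of_forall fun y => hu.2 a y)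
  have h3 : HasDerivAt (fun x => (starRingEnd ℂ) (u x)) ((starRingEnd ℂ) (deriv u x)) x :=
    (hd x).star
  have h4 := ((h3.mul h2).const_mul α)
  have h5 := (Complex.reCLM.hasFDerivAt.comp_hasDerivAt x h4).deriv
  refine h5.trans ?_
  have e1 : (starRingEnd ℂ) (deriv u x) * deriv u x = ((‖deriv u x‖ ^ 2 : ℝ) : ℂ) := by
    rw [mul_comm, Complex.mul_conj, Complex.normSq_eq_norm_sq]
  have e2 : (starRingEnd ℂ) (u x) * (-(k ^ 2 / ((c x : ℂ) ^ 2)) * u x)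
      = -(k ^ 2 * ((‖u x‖ ^ 2 / (c x) ^ 2 : ℝ) : ℂ)) := by
    have : (starRingEnd ℂ) (u x) * u x = ((‖u x‖ ^ 2 : ℝ) : ℂ) := by
      rw [mul_comm, Complex.mul_conj, Complex.normSq_eq_norm_sq]
    push_cast at this ⊢
    linear_combination (-(k ^ 2 / ((c x : ℂ) ^ 2))) * this
  rw [e1, e2]
  simp only [Complex.reCLM_apply, mul_add, Complex.add_re, mul_neg, Complex.neg_re, ← mul_assoc,
    Complex.re_mul_ofReal]
  ring

/-- Derivative of a solution tends to zero if the solution does. -/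
lemma helm_deriv_tendsto {c : ℝ → ℝ} {c₀ : ℝ} (hc₀ : 0 < c₀)
    (hc : ∀ᵐ x : ℝ, c₀ < c x) {k : ℂ} {u : ℝ → ℂ} (hu : SolvesHelmholtz c k u)
    (h0 : Tendsto u atTop (𝓝 0)) : ∃ D X : ℝ, ∀ x ≥ X, ‖deriv u x‖ ≤ D := by
  obtain ⟨X, hX⟩ := eventually_atTop.1 (Metric.tendsto_nhds.1 h0 1 one_pos)
  have hb : ∀ x ≥ X, ‖u x‖ ≤ 1 := fun x hx => by simpa using (hX x hx).le
  set M := ‖k‖ ^ 2 / c₀ ^ 2 with hM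
  have hM0 : 0 ≤ M := by positivity
  refine ⟨2 + M, X, fun x hx => ?_⟩
  have hd : ∀ x, HasDerivAt u (deriv u x) x := fun x =>
    (hu.1.differentiable one_ne_zero x).hasDerivAt
  have key := (convex_Icc x (x + 1)).norm_image_sub_le_of_norm_hasDerivWithin_le
    (f := fun y => u y - (y : ℝ) • deriv u x) (f' := fun y => deriv u y - (1 : ℝ) • deriv u x)
    (C := M) (x := x) (y := x + 1)
    (fun y hy => ((hd y).sub ((hasDerivAt_id y).smul_const _)).hasDerivWithinAt) ?_
    (by simp) (by simp)
  · have h2 := hb x hx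
    have h3 := hb (x + 1) (by linarith)
    have e : deriv u x = u (x + 1) - u x
        - ((u (x + 1) - (x + 1) • deriv u x) - (u x - x • deriv u x)) := by
      rw [add_smul, one_smul]; abel
    rw [e]
    simp at key
    calc _ ≤ _ := norm_sub_le _ _
      _ ≤ (1 + 1) + M := by
        gcongr
        · exact (norm_sub_le _ _).trans (by gcongr)
        · simpa using key
      _ = _ := by ring
  · intro y hy
    rw [one_smul]
    have := helm_deriv_lip hc₀ hc hu (a := x) (b := y) (B := 1) (fun z hz => hb z (by
      rw [Set.uIcc_of_le hy.1] at hz; linarith [hz.1]))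
    refine this.trans ?_
    have : |y - x| ≤ 1 := by rw [abs_le]; constructor <;> linarith [hy.1, hy.2]
    rw [mul_one]
    exact mul_le_of_le_one_right hM0 this

lemma jost_ne_zero {c : ℝ → ℝ} {k : ℂ} {u : ℝ → ℂ} (hu : IsJostPlus c k u) :
    ∃ X : ℝ, ∀ x ≥ X, u x ≠ 0 := by
  obtain ⟨X, hX⟩ := eventually_atTop.1 (hu.2.eventually_ne one_ne_zero)
  exact ⟨X, fun x hx h => hX x hx (by simp [h])⟩

lemma jost_tendsto_zero {c : ℝ → ℝ} {k : ℂ} (hk : 0 < k.im) {u : ℝ → ℂ}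
    (hu : IsJostPlus c k u) : Tendsto u atTop (𝓝 0) := by
  have h1 : Tendsto (fun x : ℝ => Complex.exp (Complex.I * k * (x : ℂ))) atTop (𝓝 0) := by
    rw [tendsto_zero_iff_norm_tendsto_zero]
    simp only [Complex.norm_exp]
    refine Real.tendsto_exp_atBot.comp ?_
    have : (fun x : ℝ => (Complex.I * k * (x : ℂ)).re) = fun x => -(k.im * x) := by
      ext x; simp
    rw [this]
    exact tendsto_neg_atTop_atBot.comp (tendsto_id.const_mul_atTop hk)
  have h2 := h1.mul hu.2
  rw [zero_mul] at h2
  refine h2.congr fun x => ?_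
  rw [← mul_assoc, ← Complex.exp_add]
  simp

lemma jost_pos {c : ℝ → ℝ} (hm : Measurable c) {c₀ cM : ℝ} (hc₀ : 0 < c₀) (hcM : 0 < cM)
    (hc : ∀ᵐ x : ℝ, c₀ < c x ∧ c x ≤ cM) {k : ℂ} (hk : 0 < k.im) {u : ℝ → ℂ}
    (hu : IsJostPlus c k u) (x : ℝ) :
    0 < ((Complex.I * k)⁻¹ * ((starRingEnd ℂ) (u x) * deriv u x)).re := by
  have hc' : ∀ᵐ x : ℝ, c₀ < c x := hc.mono fun _ h => h.1
  set G : ℝ → ℝ := fun x => ((Complex.I * k)⁻¹ * ((starRingEnd ℂ) (u x) * deriv u x)).re with hG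
  have hk0 : k ≠ 0 := by rintro rfl; simp at hk
  have hcont : Continuous u := hu.1.1.continuous
  have a1 : ((Complex.I * k)⁻¹).re ≤ 0 := by
    rw [Complex.inv_re]
    apply div_nonpos_of_nonpos_of_nonneg
    · simp [hk.le]
    · exact Complex.normSq_nonneg _
  have a2 : ((Complex.I * k)⁻¹ * k ^ 2).re = k.im := by
    have : (Complex.I * k)⁻¹ * k ^ 2 = - Complex.I * k := by
      rw [mul_inv, Complex.inv_I]; field_simp
    rw [this]; simp
  have dec : ∀ a b, a ≤ b → G b - G a ≤ ∫ x in a..b, -(k.im / cM ^ 2 * ‖u x‖ ^ 2) := by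
    intro a b hab
    obtain ⟨g, hgi, hg, hgI⟩ := helm_energy hm hc₀ hc' hu.1 (Complex.I * k)⁻¹ a b
    rw [← hgI]
    refine intervalIntegral.integral_mono_ae_restrict hab hgi ?_ ?_
    · apply Continuous.intervalIntegrable; fun_prop
    · rw [EventuallyLE, ae_restrict_iff' measurableSet_Icc]
      filter_upwards [hg, hc] with y hy hcy hym
      rw [hy (by rwa [Set.uIcc_of_le hab]), a2]
      have p1 : ‖deriv u y‖ ^ 2 * (Complex.I * k)⁻¹.re ≤ 0 :=
        mul_nonpos_of_nonneg_of_nonpos (by positivity) a1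
      have p0 : 0 < c y := hc₀.trans hcy.1
      have p2 : ‖u y‖ ^ 2 / cM ^ 2 ≤ ‖u y‖ ^ 2 / c y ^ 2 := by
        gcongr; exact hcy.2
      have p3 := mul_le_mul_of_nonneg_right p2 hk.le
      have p4 : k.im / cM ^ 2 * ‖u y‖ ^ 2 = ‖u y‖ ^ 2 / cM ^ 2 * k.im := by ring
      linarith
  have anti : ∀ a b, a ≤ b → G b ≤ G a := by
    intro a b hab
    have := dec a b hab
    have h2 : ∫ x in a..b, -(k.im / cM ^ 2 * ‖u x‖ ^ 2) ≤ 0 := by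
      rw [intervalIntegral.integral_neg]
      have : 0 ≤ ∫ x in a..b, (k.im / cM ^ 2 * ‖u x‖ ^ 2) :=
        intervalIntegral.integral_nonneg hab fun y _ => by positivity
      linarith
    linarith
  have hu0 := jost_tendsto_zero hk hu
  obtain ⟨D, X, hD⟩ := helm_deriv_tendsto hc₀ hc' hu.1 hu0
  have hlim : Tendsto G atTop (𝓝 0) := by
    have h1 : Tendsto (fun y => ‖(Complex.I * k)⁻¹‖ * (‖u y‖ * D)) atTop (𝓝 0) := by
      simpa using (hu0.norm.mul_const D).const_mul ‖(Complex.I * k)⁻¹‖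
    refine squeeze_zero_norm' ?_ h1
    filter_upwards [eventually_ge_atTop X] with y hy
    refine (Complex.abs_re_le_norm _).trans ?_
    rw [norm_mul, norm_mul, RCLike.norm_conj]
    gcongr
    exact hD y hy
  have nonneg : ∀ y, 0 ≤ G y := fun y =>
    le_of_tendsto hlim ((eventually_ge_atTop y).mono fun z hz => anti y z hz)
  obtain ⟨Y, hY⟩ := jost_ne_zero hu
  set y := max x Y with hy
  have h1 := dec y (y + 1) (by linarith)
  have h2 : 0 < ∫ x in y..(y+1), (k.im / cM ^ 2 * ‖u x‖ ^ 2) := by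
    refine intervalIntegral.intervalIntegral_pos_of_pos_on ?_ ?_ (by linarith)
    · apply Continuous.intervalIntegrable; fun_prop
    · intro z hz
      have := hY z (by have := le_max_right x Y; linarith [hz.1])
      positivity
  rw [intervalIntegral.integral_neg] at h1
  have h3 := nonneg (y + 1)
  have h4 := anti x y (le_max_left _ _)
  change 0 < G x
  linarith

lemma jost_real_ne {c : ℝ → ℝ} (hm : Measurable c) {c₀ : ℝ} (hc₀ : 0 < c₀)
    (hc : ∀ᵐ x : ℝ, c₀ < c x) {k : ℝ} (hk : k ≠ 0) {u : ℝ → ℂ}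
    (hu : IsJostPlus c k u) (x : ℝ) :
    ((Complex.I * k)⁻¹ * ((starRingEnd ℂ) (u x) * deriv u x)).re ≠ 0 := by
  have hk0 : (k : ℂ) ≠ 0 := by exact_mod_cast hk
  have hα : (Complex.I * k)⁻¹ = ((k⁻¹ : ℝ) : ℂ) * (-Complex.I) := by
    rw [mul_inv, Complex.inv_I]; push_cast; ring
  have form : ∀ z : ℂ, ((Complex.I * k)⁻¹ * z).re = k⁻¹ * z.im := by
    intro z; rw [hα, mul_assoc, Complex.re_ofReal_mul]; simp
  intro h0
  have all0 : ∀ y, ((starRingEnd ℂ) (u y) * deriv u y).im = 0 := by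
    intro y
    obtain ⟨g, hgi, hg, hgI⟩ := helm_energy hm hc₀ hc hu.1 (Complex.I * k)⁻¹ x y
    rw [h0, sub_zero, form] at hgI
    have : ∫ z in x..y, g z = 0 := by
      refine intervalIntegral.integral_zero_ae ?_
      filter_upwards [hg] with z hz hzm
      rw [hz (Set.uIoc_subset_uIcc hzm)]
      have e1 : ((Complex.I * k)⁻¹).re = 0 := by rw [hα, Complex.re_ofReal_mul]; simp
      have e2 : ((Complex.I * k)⁻¹ * (k : ℂ) ^ 2).re = 0 := by
        rw [form, ← Complex.ofReal_pow, Complex.ofReal_im, mul_zero]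
      rw [e1, e2]; ring
    rw [this] at hgI
    have := (mul_eq_zero.1 hgI.symm).resolve_left (inv_ne_zero hk)
    exact this
  obtain ⟨X, hX⟩ := jost_ne_zero hu
  have hd : ∀ x, HasDerivAt u (deriv u x) x := fun x =>
    (hu.1.1.differentiable one_ne_zero x).hasDerivAt
  have hd' : ∀ y ∈ Set.Ici X, HasDerivWithinAt (fun y => (starRingEnd ℂ) (u y) / u y) 0
      (Set.Ici X) y := by
    intro y hy
    have h3 : HasDerivAt (fun x => (starRingEnd ℂ) (u x)) ((starRingEnd ℂ) (deriv u y)) y :=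
      (hd y).star
    have h4 := h3.div (hd y) (hX y hy)
    have e : (starRingEnd ℂ) (deriv u y) * u y - (starRingEnd ℂ) (u y) * deriv u y = 0 := by
      have h5 := Complex.conj_eq_iff_im.2 (all0 y)
      rw [map_mul, Complex.conj_conj] at h5
      rw [← h5]; ring
    rw [e, zero_div] at h4
    exact h4.hasDerivWithinAt
  have const : ∀ y ≥ X, (starRingEnd ℂ) (u y) / u y = (starRingEnd ℂ) (u X) / u X := by
    intro y hy
    have := (convex_Ici X).norm_image_sub_le_of_norm_hasDerivWithin_le hd'
      (C := 0) (by simp) (x := X) (y := y) (by simp) hy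
    rw [zero_mul] at this
    exact sub_eq_zero.1 (norm_le_zero_iff.1 this)
  set l := (starRingEnd ℂ) (u X) / u X
  have lim : Tendsto (fun y : ℝ => Complex.exp (2 * Complex.I * k * y) * l) atTop (𝓝 1) := by
    have h1 : Tendsto (fun y : ℝ => (starRingEnd ℂ) (Complex.exp (-(Complex.I * k * (y : ℂ))) * u y)
        / (Complex.exp (-(Complex.I * k * (y : ℂ))) * u y)) atTop (𝓝 ((starRingEnd ℂ) 1 / 1)) :=
      ((Complex.continuous_conj.tendsto _).comp hu.2).div hu.2 one_ne_zero
    rw [map_one, div_one] at h1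
    refine h1.congr' ?_
    filter_upwards [eventually_ge_atTop X] with y hy
    rw [← const y hy, map_mul, ← Complex.exp_conj, mul_div_mul_comm, ← Complex.exp_sub]
    congr 2
    simp
    ring
  have hs : Tendsto (fun y : ℝ => y + Real.pi / (2 * k)) atTop atTop :=
    tendsto_atTop_add_const_right _ _ tendsto_id
  have lim2 := lim.comp hs
  have lim3 : Tendsto (fun y : ℝ => -(Complex.exp (2 * Complex.I * k * y) * l)) atTop (𝓝 1) := by
    refine lim2.congr fun y => ?_
    have : 2 * Complex.I * (k : ℂ) * ((y + Real.pi / (2 * k) : ℝ) : ℂ)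
        = 2 * Complex.I * k * y + Real.pi * Complex.I := by
      push_cast; field_simp
    simp only [Function.comp]
    rw [this, Complex.exp_add, Complex.exp_pi_mul_I]; ring
  have := tendsto_nhds_unique lim.neg lim3
  norm_num [Complex.ext_iff] at this

lemma jost_reflect {c : ℝ → ℝ} {k : ℂ} {u : ℝ → ℂ} (hu : IsJostMinus c k u) :
    IsJostPlus (fun x => c (-x)) k (fun x => u (-x)) := by
  refine ⟨⟨hu.1.1.comp contDiff_neg, fun a b => ?_⟩, ?_⟩
  · rw [deriv_comp_neg, deriv_comp_neg,
      intervalIntegral.integral_comp_neg (fun x => -(k ^ 2 / ((c x : ℂ) ^ 2)) * u x),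
      hu.1.2 (-b) (-a)]
    ring
  · have := hu.2.comp tendsto_neg_atTop_atBot
    refine this.congr fun x => ?_
    simp

lemma fam_pos {c : ℝ → ℝ} (hm : Measurable c) {c₀ cM : ℝ} (hc₀ : 0 < c₀) (hcM : 0 < cM)
    (hc : ∀ᵐ x : ℝ, c₀ < c x ∧ c x ≤ cM) {U : ℂ → ℝ → ℂ}
    (hU : ∀ k : ℂ, 0 ≤ k.im → IsJostPlus c k (U k)) (x : ℝ)
    (h1 : ContinuousOn (fun k => U k x) {k : ℂ | 0 ≤ k.im})
    (h2 : ContinuousOn (fun k => deriv (U k) x) {k : ℂ | 0 ≤ k.im})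
    {k : ℂ} (hk : 0 ≤ k.im) (hk0 : k ≠ 0) :
    U k x ≠ 0 ∧ 0 < (deriv (U k) x / (Complex.I * k * U k x)).re := by
  have pos : 0 < ((Complex.I * k)⁻¹ * ((starRingEnd ℂ) (U k x) * deriv (U k) x)).re := by
    rcases hk.lt_or_eq with hk' | hk'
    · exact jost_pos hm hc₀ hcM hc hk' (hU k hk) x
    · have ek : k = ((k.re : ℝ) : ℂ) := by
        apply Complex.ext <;> simp [← hk']
      have hne : ((Complex.I * k)⁻¹ * ((starRingEnd ℂ) (U k x) * deriv (U k) x)).re ≠ 0 := by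
        have hkr : k.re ≠ 0 := fun h => hk0 (by rw [ek, h]; simp)
        have hUk := hU k hk
        have := jost_real_ne hm hc₀ (hc.mono fun _ h => h.1) hkr (u := U k) (by
          rw [← ek]; exact hUk) x
        rwa [← ek] at this
      refine lt_of_le_of_ne ?_ hne.symm
      have t0 : Tendsto (fun s : ℝ => k + s * Complex.I) (𝓝[>] 0) (𝓝[{k : ℂ | 0 ≤ k.im}] k) := by
        refine tendsto_nhdsWithin_iff.2 ⟨?_, ?_⟩
        · have : Continuous (fun s : ℝ => k + s * Complex.I) := by fun_prop
          have := this.tendsto 0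
          simp only [Complex.ofReal_zero, zero_mul, add_zero] at this
          exact this.mono_left nhdsWithin_le_nhds
        · filter_upwards [self_mem_nhdsWithin] with s hs
          have : 0 < s := hs
          simp [← hk', this.le]
      have t1 : Tendsto (fun z => ((Complex.I * z)⁻¹ * ((starRingEnd ℂ) (U z x)
          * deriv (U z) x)).re) (𝓝[{k : ℂ | 0 ≤ k.im}] k)
          (𝓝 ((Complex.I * k)⁻¹ * ((starRingEnd ℂ) (U k x) * deriv (U k) x)).re) := by
        refine (Complex.continuous_re.tendsto _).comp (Tendsto.mul ?_ (Tendsto.mul ?_ ?_))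
        · refine Tendsto.inv₀ ?_ (mul_ne_zero Complex.I_ne_zero hk0)
          exact (continuous_const.mul continuous_id).continuousAt.mono_left nhdsWithin_le_nhds
        · exact (Complex.continuous_conj.tendsto _).comp (h1 k hk)
        · exact h2 k hk
      refine ge_of_tendsto (t1.comp t0) ?_
      filter_upwards [self_mem_nhdsWithin] with s hs
      have hs' : 0 < s := hs
      have him : 0 < (k + s * Complex.I).im := by simp [← hk', hs']
      exact (jost_pos hm hc₀ hcM hc him (hU _ him.le) x).le
  have hne : U k x ≠ 0 := by
    intro h; rw [h] at pos; simp at pos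
  refine ⟨hne, ?_⟩
  have e : deriv (U k) x / (Complex.I * k * U k x)
      = (((‖U k x‖ ^ 2)⁻¹ : ℝ) : ℂ) *
        ((Complex.I * k)⁻¹ * ((starRingEnd ℂ) (U k x) * deriv (U k) x)) := by
    have hcj : (starRingEnd ℂ) (U k x) ≠ 0 := by simpa using hne
    have : ((‖U k x‖ ^ 2 : ℝ) : ℂ) = U k x * (starRingEnd ℂ) (U k x) := by
      rw [Complex.mul_conj, Complex.normSq_eq_norm_sq]
    rw [Complex.ofReal_inv, this]
    field_simp [Complex.I_ne_zero]
  rw [e, Complex.re_ofReal_mul]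
  have : 0 < ‖U k x‖ := norm_pos_iff.2 hne
  positivity

def cay (z : ℂ) : ℂ := Complex.I * (1 - z) / (1 + z)

lemma one_add_ne {z : ℂ} (hz : ‖z‖ < 1) : 1 + z ≠ 0 := by
  intro h
  have : z = -1 := by linear_combination h
  rw [this] at hz; simp at hz

lemma cay_im {z : ℂ} (hz : ‖z‖ < 1) : 0 < (cay z).im := by
  have h0 : 0 < Complex.normSq (1 + z) := Complex.normSq_pos.2 (one_add_ne hz)
  have h1 : Complex.normSq z < 1 := by
    rw [Complex.normSq_eq_norm_sq]; nlinarith [norm_nonneg z]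
  have : (cay z).im = (1 - Complex.normSq z) / Complex.normSq (1 + z) := by
    unfold cay
    rw [Complex.div_im]
    simp only [Complex.normSq_apply] at h0 ⊢
    simp at h0 ⊢
    field_simp
    ring
  rw [this]
  apply div_pos _ h0
  linarith

lemma cay_circle (t : ℝ) :
    1 + circleMap 0 1 (2 * Real.arctan t) ≠ 0 ∧ cay (circleMap 0 1 (2 * Real.arctan t)) = t := by
  set a := Real.arctan t with ha
  have hc : Real.cos a ≠ 0 := (Real.cos_arctan_pos t).ne'
  have hcC : Complex.cos a ≠ 0 := by
    rw [← Complex.ofReal_cos]; exact_mod_cast hc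
  have hz : circleMap 0 1 (2 * a) = Complex.exp (a * Complex.I) * Complex.exp (a * Complex.I) := by
    rw [circleMap, ← Complex.exp_add]; push_cast; simp; ring_nf
  have hE : Complex.exp (a * Complex.I) ≠ 0 := Complex.exp_ne_zero _
  have e1 : 1 + circleMap 0 1 (2 * a) = Complex.exp (a * Complex.I) * (2 * Complex.cos a) := by
    rw [hz, Complex.two_cos, mul_add, ← Complex.exp_add (a * Complex.I) (-a * Complex.I)]
    simp; ring
  have e2 : 1 - circleMap 0 1 (2 * a)
      = Complex.exp (a * Complex.I) * (-Complex.I * (2 * Complex.sin a)) := by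
    rw [hz, Complex.two_sin]
    have : Complex.exp (a * Complex.I) * Complex.exp (-a * Complex.I) = 1 := by
      rw [← Complex.exp_add]; simp
    linear_combination -this + (Complex.exp (a * Complex.I) * Complex.exp (-a * Complex.I)
        - Complex.exp (a * Complex.I) ^ 2) * Complex.I_sq
  have ne : 1 + circleMap 0 1 (2 * a) ≠ 0 := by
    rw [e1]; exact mul_ne_zero hE (mul_ne_zero two_ne_zero hcC)
  refine ⟨ne, ?_⟩
  have ht : (t : ℂ) = Complex.sin a / Complex.cos a := by
    rw [← Complex.tan_eq_sin_div_cos, ← Complex.ofReal_tan, ha, Real.tan_arctan]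
  rw [cay, e1, e2, ht]
  field_simp
  rw [Complex.I_sq]; ring

lemma image_arctan : (fun t : ℝ => 2 * Real.arctan t) '' Set.univ = Set.Ioo (-Real.pi) Real.pi := by
  ext y
  simp only [Set.image_univ, Set.mem_range, Set.mem_Ioo]
  constructor
  · rintro ⟨t, rfl⟩
    constructor <;> linarith [Real.neg_pi_div_two_lt_arctan t, Real.arctan_lt_pi_div_two t]
  · rintro ⟨h1, h2⟩
    refine ⟨Real.tan (y / 2), ?_⟩
    rw [Real.arctan_tan] <;> linarith

lemma herglotz_mean {f : ℂ → ℂ} (hd : DifferentiableOn ℂ f {k : ℂ | 0 < k.im})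
    (hpos : ∀ k : ℂ, 0 < k.im → 0 ≤ (f k).re) {r : ℝ} (hr0 : 0 < r) (hr : r < 1) :
    ∫⁻ t : ℝ, ENNReal.ofReal |2 * (1 / (1 + t ^ 2))|
      * ENNReal.ofReal (f (cay (circleMap 0 r (2 * Real.arctan t)))).re
      = ENNReal.ofReal (2 * Real.pi * (f Complex.I).re) := by
  have hcay : DifferentiableOn ℂ cay (Metric.ball 0 1) := by
    intro z hz
    have := one_add_ne (z := z) (by simpa using hz)
    unfold cay
    apply DifferentiableAt.differentiableWithinAt
    fun_prop (disch := assumption)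
  have hg : DifferentiableOn ℂ (fun z => f (cay z)) (Metric.ball 0 1) :=
    hd.comp hcay fun z hz => cay_im (by simpa using hz)
  have hsub : Metric.closedBall (0:ℂ) |r| ⊆ Metric.ball 0 1 :=
    Metric.closedBall_subset_ball (by rwa [abs_of_pos hr0])
  have hmem : ∀ θ, circleMap 0 r θ ∈ Metric.ball (0:ℂ) 1 := fun θ => by
    simpa [abs_of_pos hr0] using hr
  have hdc : DiffContOnCl ℂ (fun z => f (cay z)) (Metric.ball 0 |r|) :=
    (hg.mono hsub).diffContOnCl_ball subset_rfl
  have avg := hdc.circleAverage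
  have hcont : Continuous fun θ => f (cay (circleMap 0 r θ)) :=
    hg.continuousOn.comp_continuous (continuous_circleMap 0 r) hmem
  have e0 : ∫ θ in 0..2 * Real.pi, f (cay (circleMap 0 r θ)) = 2 * Real.pi * f Complex.I := by
    rw [Real.circleAverage_def] at avg
    have hI : cay 0 = Complex.I := by simp [cay]
    rw [hI, inv_smul_eq_iff₀ (by positivity)] at avg
    rw [avg]; simp
  have hper : Function.Periodic (fun θ => f (cay (circleMap 0 r θ))) (2 * Real.pi) := fun θ => by
    simp only [periodic_circleMap 0 r θ]
  have e1 : ∫ θ in (-Real.pi)..Real.pi, f (cay (circleMap 0 r θ)) = 2 * Real.pi * f Complex.I := by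
    rw [← e0]
    have := hper.intervalIntegral_add_eq (-Real.pi) 0
    rw [zero_add] at this
    rw [← this]; congr 1; ring
  have e2 : ∫ θ in (-Real.pi)..Real.pi, (f (cay (circleMap 0 r θ))).re
      = 2 * Real.pi * (f Complex.I).re := by
    have := Complex.reCLM.intervalIntegral_comp_comm (hcont.intervalIntegrable (-Real.pi) Real.pi)
      (μ := volume)
    simp only [Complex.reCLM_apply] at this
    rw [this, e1]
    have : (2 * (Real.pi : ℂ)) = ((2 * Real.pi : ℝ) : ℂ) := by push_cast; rfl
    rw [this, Complex.re_ofReal_mul]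
  have hcre : Continuous fun θ => (f (cay (circleMap 0 r θ))).re :=
    Complex.continuous_re.comp hcont
  rw [intervalIntegral.integral_of_le (by linarith [Real.pi_pos])] at e2
  rw [← e2, ofReal_integral_eq_lintegral_ofReal, ← setLIntegral_congr Ioo_ae_eq_Ioc,
    ← image_arctan, lintegral_image_eq_lintegral_abs_deriv_mul MeasurableSet.univ
      (f' := fun t => 2 * (1 / (1 + t ^ 2)))]
  · simp
  · intro t _
    exact ((Real.hasDerivAt_arctan t).const_mul 2).hasDerivWithinAt
  · intro s _ t _ h
    exact Real.arctan_injective (by simpa using h)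
  · exact (hcre.integrableOn_Icc).mono_set Set.Ioc_subset_Icc_self
  · exact Eventually.of_forall fun θ => hpos _ (cay_im (by simpa using hmem θ))

lemma herglotz_integrable {f : ℂ → ℂ} (hd : DifferentiableOn ℂ f {k : ℂ | 0 < k.im})
    (hpos : ∀ k : ℂ, 0 < k.im → 0 ≤ (f k).re)
    (hcont : ContinuousOn f {k : ℂ | 0 ≤ k.im ∧ k ≠ 0}) :
    Integrable (fun t : ℝ => (1 / (1 + t ^ 2)) * (f t).re) := by
  set r : ℕ → ℝ := fun n => 1 - 1 / ((n : ℝ) + 2) with hr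
  have r0 : ∀ n, 0 < r n := fun n => by
    have : (1:ℝ) / ((n : ℝ) + 2) < 1 := by
      rw [div_lt_one (by positivity)]; linarith [(Nat.cast_nonneg n : (0:ℝ) ≤ n)]
    simp only [hr]; linarith
  have r1 : ∀ n, r n < 1 := fun n => by
    have : (0:ℝ) < 1 / ((n : ℝ) + 2) := by positivity
    simp only [hr]; linarith
  have rlim : Tendsto r atTop (𝓝 1) := by
    have h1 : Tendsto (fun n : ℕ => (1:ℝ) / ((n : ℝ) + 2)) atTop (𝓝 0) :=
      tendsto_const_nhds.div_atTop
        (tendsto_atTop_add_const_right _ _ tendsto_natCast_atTop_atTop)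
    simpa [hr] using (tendsto_const_nhds (x := (1:ℝ))).sub h1
  have himn : ∀ n (t : ℝ), 0 < (cay (circleMap 0 (r n) (2 * Real.arctan t))).im := fun n t =>
    cay_im (by simpa [abs_of_pos (r0 n)] using r1 n)
  have lim : ∀ t : ℝ, t ≠ 0 →
      Tendsto (fun n => (f (cay (circleMap 0 (r n) (2 * Real.arctan t)))).re) atTop
        (𝓝 (f t).re) := by
    intro t ht
    obtain ⟨h1, h2⟩ := cay_circle t
    have hz : Tendsto (fun n => circleMap 0 (r n) (2 * Real.arctan t)) atTop
        (𝓝 (circleMap 0 1 (2 * Real.arctan t))) := by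
      unfold circleMap
      refine Tendsto.const_add _ (Tendsto.mul_const _ ?_)
      exact (Complex.continuous_ofReal.tendsto _).comp rlim
    have hcz : Tendsto (fun n => cay (circleMap 0 (r n) (2 * Real.arctan t))) atTop (𝓝 (t : ℂ)) := by
      rw [← h2]
      refine Tendsto.comp (g := cay) ?_ hz
      change ContinuousAt cay _
      unfold cay
      fun_prop (disch := assumption)
    have hw := hcont (t : ℂ) ⟨by simp, by exact_mod_cast ht⟩
    refine (Complex.continuous_re.tendsto _).comp (hw.tendsto.comp
      (tendsto_nhdsWithin_iff.2 ⟨hcz, Eventually.of_forall fun n => ⟨(himn n t).le, ?_⟩⟩))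
    intro h; have := himn n t; rw [h] at this; simp at this
  have ae0 : ∀ᵐ t : ℝ, t ≠ 0 := by simp [ae_iff]
  have nn : ∀ t : ℝ, t ≠ 0 → 0 ≤ (f t).re := fun t ht =>
    ge_of_tendsto' (lim t ht) fun n => hpos _ (himn n t)
  refine ⟨?_, ?_⟩
  · have hc : ContinuousOn (fun t : ℝ => (1 / (1 + t ^ 2)) * (f t).re) {0}ᶜ := by
      refine ContinuousOn.mul ?_ ?_
      · apply Continuous.continuousOn
        refine continuous_const.div (by fun_prop) fun t => by positivity
      · refine Complex.continuous_re.comp_continuousOn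
          (hcont.comp Complex.continuous_ofReal.continuousOn fun t ht => ⟨by simp, ?_⟩)
        exact_mod_cast ht
    have := hc.aestronglyMeasurable (μ := volume) (measurableSet_singleton 0).compl
    rwa [Measure.restrict_eq_self_of_ae_mem (by simpa using ae0)] at this
  · rw [hasFiniteIntegral_iff_ofReal]
    · have hF := lintegral_liminf_le' (μ := volume) (u := atTop) (f := fun (n : ℕ) (t : ℝ) =>
        ENNReal.ofReal |2 * (1 / (1 + t ^ 2))|
          * ENNReal.ofReal (f (cay (circleMap 0 (r n) (2 * Real.arctan t)))).re) (by
            intro n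
            have hm0 : Measurable fun t : ℝ => ENNReal.ofReal |2 * (1 / (1 + t ^ 2))| := by
              refine ENNReal.measurable_ofReal.comp (Continuous.measurable ?_)
              refine (continuous_const.mul (continuous_const.div (by fun_prop) fun t => ?_)).abs
              positivity
            refine Measurable.aemeasurable (hm0.mul ?_)
            refine ENNReal.measurable_ofReal.comp (Continuous.measurable ?_)
            refine Complex.continuous_re.comp (hd.continuousOn.comp_continuous ?_ (himn n))
            have h1 : Continuous fun t => circleMap 0 (r n) (2 * Real.arctan t) :=
              (continuous_circleMap 0 (r n)).comp (by fun_prop)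
            unfold cay
            refine (continuous_const.mul (continuous_const.sub h1)).div
              (continuous_const.add h1) fun t => ?_
            exact one_add_ne (by simpa [abs_of_pos (r0 n)] using r1 n))
      simp only [herglotz_mean hd hpos (r0 _) (r1 _), liminf_const] at hF
      refine lt_of_le_of_lt (le_trans (lintegral_mono_ae ?_) hF) ENNReal.ofReal_lt_top
      filter_upwards [ae0] with t ht
      have hl : Tendsto (fun n => ENNReal.ofReal |2 * (1 / (1 + t ^ 2))|
          * ENNReal.ofReal (f (cay (circleMap 0 (r n) (2 * Real.arctan t)))).re) atTop
          (𝓝 (ENNReal.ofReal |2 * (1 / (1 + t ^ 2))| * ENNReal.ofReal (f t).re)) :=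
        ENNReal.Tendsto.const_mul ((ENNReal.continuous_ofReal.tendsto _).comp (lim t ht))
          (Or.inr ENNReal.ofReal_ne_top)
      rw [hl.liminf_eq, ENNReal.ofReal_mul (by positivity)]
      gcongr
      have : 0 < 1 / (1 + t ^ 2) := by positivity
      rw [abs_of_pos (by positivity)]
      linarith
    · filter_upwards [ae0] with t ht
      have := nn t ht
      positivity

/-- For fixed `x`, `k ↦ (1/(1+k²)) Re(1/(w(x,k) + w₋(x,k)))` is integrable on `ℝ`. -/
theorem re_inv_w_plus_wminus_integrable (c : ℝ → ℝ) (hmeas : Measurable c)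
    (h1 : HypH1 c) (h2 : HypH2 c) (x : ℝ)
    (U₁ U₂ : ℂ → ℝ → ℂ)
    (hU₁ : ∀ k : ℂ, 0 ≤ k.im → IsJostPlus c k (U₁ k))
    (hU₂ : ∀ k : ℂ, 0 ≤ k.im → IsJostMinus c k (U₂ k))
    (hreg₁ : JostFamilyRegular U₁) (hreg₂ : JostFamilyRegular U₂) :
    Integrable (fun k : ℝ =>
      (1 / (1 + k ^ 2)) *
        (1 / (deriv (U₁ (k : ℂ)) x / (Complex.I * (k : ℂ) * U₁ (k : ℂ) x) +
              -(deriv (U₂ (k : ℂ)) x) / (Complex.I * (k : ℂ) * U₂ (k : ℂ) x))).re) := by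
  obtain ⟨c₀, hc₀, cM, hcM, hc⟩ := h1
  have P₁ : ∀ k : ℂ, 0 ≤ k.im → k ≠ 0 →
      U₁ k x ≠ 0 ∧ 0 < (deriv (U₁ k) x / (Complex.I * k * U₁ k x)).re := fun k hk hk0 =>
    fam_pos hmeas hc₀ hcM hc hU₁ x (hreg₁ x).2.1 (hreg₁ x).2.2.2 hk hk0
  have P₂ : ∀ k : ℂ, 0 ≤ k.im → k ≠ 0 →
      U₂ k x ≠ 0 ∧ 0 < (-(deriv (U₂ k) x) / (Complex.I * k * U₂ k x)).re := by
    intro k hk hk0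
    have hc' : ∀ᵐ y : ℝ, c₀ < c (-y) ∧ c (-y) ≤ cM :=
      (Measure.measurePreserving_neg (volume : Measure ℝ)).quasiMeasurePreserving.ae hc
    have := fam_pos (c := fun y => c (-y)) (hmeas.comp measurable_neg) hc₀ hcM hc'
      (U := fun k y => U₂ k (-y)) (fun k hk => jost_reflect (hU₂ k hk)) (-x)
      (by simpa using (hreg₂ x).2.1)
      (by simpa only [deriv_comp_neg, neg_neg] using (hreg₂ x).2.2.2.fun_neg) hk hk0
    simpa only [deriv_comp_neg, neg_neg] using this
  have key := herglotz_integrable (f := fun k : ℂ =>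
    1 / (deriv (U₁ k) x / (Complex.I * k * U₁ k x) + -(deriv (U₂ k) x) / (Complex.I * k * U₂ k x)))
    ?_ ?_ ?_
  · exact key
  · have ne0 : ∀ k : ℂ, k ∈ {k : ℂ | 0 < k.im} → 0 ≤ k.im ∧ k ≠ 0 := fun k hk =>
      ⟨le_of_lt hk, by rintro rfl; simp at hk⟩
    refine (differentiableOn_const 1).div (DifferentiableOn.add
      ((hreg₁ x).2.2.1.div ((differentiableOn_id.const_mul _).mul (hreg₁ x).1) fun k hk => ?_)
      ((hreg₂ x).2.2.1.neg.div ((differentiableOn_id.const_mul _).mul (hreg₂ x).1) fun k hk => ?_))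
      fun k hk => ?_
    · exact mul_ne_zero (mul_ne_zero Complex.I_ne_zero (ne0 k hk).2)
        (P₁ k (ne0 k hk).1 (ne0 k hk).2).1
    · exact mul_ne_zero (mul_ne_zero Complex.I_ne_zero (ne0 k hk).2)
        (P₂ k (ne0 k hk).1 (ne0 k hk).2).1
    · intro h
      have h' := congrArg Complex.re h
      have a := (P₁ k (ne0 k hk).1 (ne0 k hk).2).2
      have b := (P₂ k (ne0 k hk).1 (ne0 k hk).2).2
      rw [Complex.add_re, Complex.zero_re] at h'
      linarith
  · intro k hk
    have hk0 : k ≠ 0 := by rintro rfl; simp at hk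
    have a := (P₁ k hk.le hk0).2
    have b := (P₂ k hk.le hk0).2
    rw [one_div, Complex.inv_re, Complex.add_re]
    exact div_nonneg (by linarith) (Complex.normSq_nonneg _)
  · have hs : {k : ℂ | 0 ≤ k.im ∧ k ≠ 0} ⊆ {k : ℂ | 0 ≤ k.im} := fun k hk => hk.1
    refine continuousOn_const.div (ContinuousOn.add
      (((hreg₁ x).2.2.2.mono hs).div ((continuousOn_const.mul continuousOn_id).mul
        ((hreg₁ x).2.1.mono hs)) fun k hk => ?_)
      (((hreg₂ x).2.2.2.mono hs).neg.div ((continuousOn_const.mul continuousOn_id).mul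
        ((hreg₂ x).2.1.mono hs)) fun k hk => ?_))
      fun k hk => ?_
    · exact mul_ne_zero (mul_ne_zero Complex.I_ne_zero hk.2) (P₁ k hk.1 hk.2).1
    · exact mul_ne_zero (mul_ne_zero Complex.I_ne_zero hk.2) (P₂ k hk.1 hk.2).1
    · intro h
      have h' := congrArg Complex.re h
      have a := (P₁ k hk.1 hk.2).2
      have b := (P₂ k hk.1 hk.2).2
      rw [Complex.add_re, Complex.zero_re] at h'
      linarith
end
end
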